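/- Let G be an internally 4-connected nonplanar graph that is {K5+, K33+, K5h, K33h}-free. Then G is isomorphic to M_n, C²_{2n+1}, DW_n, or AW_{2n} for some n ≥ 3. -/

import Mathlib

open SimpleGraph

/-- `H` is a minor of `G` (branch-set / model definition). -/
def IsMinor {W V : Type*} (H : SimpleGraph W) (G : SimpleGraph V) : Prop :=
  ∃ B : W → Set V,
    (∀ w, (B w).Nonempty) ∧
    (∀ w, (G.induce (B w)).Connected) ∧
    (Pairwise fun w₁ w₂ => Disjoint (B w₁) (B w₂)) ∧
    (∀ ⦃w₁ w₂ : W⦄, H.Adj w₁ w₂ → ∃ v₁ ∈ B w₁, ∃ v₂ ∈ B w₂, G.Adj v₁ v₂)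

def K5 : SimpleGraph (Fin 5) := ⊤

def K33 : SimpleGraph (Fin 3 ⊕ Fin 3) := completeBipartiteGraph (Fin 3) (Fin 3)

/-- A graph is planar iff it has neither a `K₅` nor a `K₃,₃` minor (Wagner's theorem). -/
def Planar {V : Type*} (G : SimpleGraph V) : Prop := ¬ IsMinor K5 G ∧ ¬ IsMinor K33 G

/-- `G / uw`: contract the edge `uw`, merging `w` into `u` (the vertex `w` becomes isolated). -/
def contractEdge {V : Type*} (G : SimpleGraph V) (u w : V) : SimpleGraph V :=
  SimpleGraph.fromRel fun a b =>
    a ≠ w ∧ b ≠ w ∧ (G.Adj a b ∨ (a = u ∧ G.Adj w b) ∨ (b = u ∧ G.Adj a w))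

/-- A nonplanar graph is almost-planar if for every edge, deletion or contraction is planar. -/
def AlmostPlanar {V : Type*} (G : SimpleGraph V) : Prop :=
  ¬ Planar G ∧ ∀ ⦃u v : V⦄, G.Adj u v →
    (Planar (G.deleteEdges {s(u, v)}) ∨ Planar (contractEdge G u v))

/-- `G` is `k`-connected: more than `k` vertices and deleting fewer than `k` vertices
leaves a connected graph. -/
def KConnected {V : Type*} (G : SimpleGraph V) (k : ℕ) : Prop :=
  k < Nat.card V ∧ ∀ s : Set V, s.ncard < k → (G.induce (sᶜ)).Connected

/-- `{G[A], G[B]}` is a `k`-separation of `G`. -/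
def IsSep {V : Type*} (G : SimpleGraph V) (k : ℕ) (A B : Set V) : Prop :=
  A ∪ B = Set.univ ∧ A ≠ Set.univ ∧ B ≠ Set.univ ∧ (A ∩ B).ncard = k ∧
  ∀ ⦃x y : V⦄, G.Adj x y → (x ∈ A ∧ y ∈ A) ∨ (x ∈ B ∧ y ∈ B)

/-- The star `K_{1,3}`, with centre `0`. -/
def K13 : SimpleGraph (Fin 4) := SimpleGraph.fromRel fun a _ => a = 0

def InternallyFourConnected {V : Type*} (G : SimpleGraph V) : Prop :=
  KConnected G 3 ∧ 5 ≤ Nat.card V ∧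
  ∀ A B : Set V, IsSep G 3 A B →
    Xor' (Nonempty (G.induce A ≃g K13)) (Nonempty (G.induce B ≃g K13))

/-- The wheel `W_n`: a cycle of length `n` plus a hub (`none`) joined to all of it. -/
def wheelGraph (n : ℕ) : SimpleGraph (Option (Fin n)) :=
  SimpleGraph.fromRel fun a b =>
    match a, b with
    | some i, some j => j.val = (i.val + 1) % n
    | none, some _ => True
    | _, _ => False

def IsWheel {V : Type*} (G : SimpleGraph V) : Prop :=
  ∃ n, 3 ≤ n ∧ Nonempty (G ≃g wheelGraph n)

/-- The double wheel `DW_n`: a cycle of length `n` plus two adjacent hubs joined to all of it. -/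
def doubleWheel (n : ℕ) : SimpleGraph (Fin n ⊕ Fin 2) :=
  SimpleGraph.fromRel fun a b =>
    match a, b with
    | .inl i, .inl j => j.val = (i.val + 1) % n
    | .inl _, .inr _ => True
    | .inr _, .inr _ => True
    | _, _ => False

/-- The Möbius ladder `M_n`: a cycle of length `2n` plus all "opposite" chords. -/
def mobiusLadder (n : ℕ) : SimpleGraph (Fin (2 * n)) :=
  SimpleGraph.fromRel fun i j =>
    j.val = (i.val + 1) % (2 * n) ∨ j.val = (i.val + n) % (2 * n)

/-- `C²_m`: a cycle of length `m` plus all chords between vertices at distance two. -/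
def squareCycle (m : ℕ) : SimpleGraph (Fin m) :=
  SimpleGraph.fromRel fun i j =>
    j.val = (i.val + 1) % m ∨ j.val = (i.val + 2) % m

/-- The alternating double wheel `AW_{2n}`: a cycle of length `2n` plus two adjacent hubs,
each joined to alternating cycle vertices. -/
def altDoubleWheel (n : ℕ) : SimpleGraph (Fin (2 * n) ⊕ Fin 2) :=
  SimpleGraph.fromRel fun a b =>
    match a, b with
    | .inl i, .inl j => j.val = (i.val + 1) % (2 * n)
    | .inl i, .inr k => i.val % 2 = k.val
    | .inr _, .inr _ => True
    | _, _ => False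

/-- The class `𝒲`: three wheels glued along a common triangle `V₀`, with no other edges. -/
def InClassW {V : Type*} (G : SimpleGraph V) : Prop :=
  ∃ P : V → Fin 4,
    (P ⁻¹' {0}).ncard = 3 ∧
    (∀ x y : V, P x = 0 → P y = 0 → x ≠ y → G.Adj x y) ∧
    (∀ i : Fin 4, i ≠ 0 → IsWheel (G.induce {v | P v = 0 ∨ P v = i})) ∧
    (∀ ⦃x y : V⦄, G.Adj x y → ∃ i : Fin 4, i ≠ 0 ∧ (P x = 0 ∨ P x = i) ∧ (P y = 0 ∨ P y = i))

/-- `EX₁`: `K₃,₃` plus a vertex joined to all of one colour class. -/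
def EX1 : SimpleGraph (Option (Fin 3 ⊕ Fin 3)) :=
  SimpleGraph.fromRel fun a b =>
    match a, b with
    | some (.inl _), some (.inr _) => True
    | none, some (.inl _) => True
    | _, _ => False

/-- `EX₂`: `K₅` plus a vertex joined to three of its vertices. -/
def EX2 : SimpleGraph (Option (Fin 5)) :=
  SimpleGraph.fromRel fun a b =>
    match a, b with
    | some i, some j => i ≠ j
    | none, some j => j.val < 3
    | _, _ => False

/-- `EX₈`: `K₃,₃` plus a vertex joined to two vertices of one class and one of the other. -/
def EX8 : SimpleGraph (Option (Fin 3 ⊕ Fin 3)) :=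
  SimpleGraph.fromRel fun a b =>
    match a, b with
    | some (.inl _), some (.inr _) => True
    | none, some x => x = Sum.inl 0 ∨ x = Sum.inl 1 ∨ x = Sum.inr 0
    | _, _ => False

/-- `K₅ʰ`: subdivide the edges `01` and `02` of `K₅` and join the two subdivision vertices. -/
def K5h : SimpleGraph (Fin 5 ⊕ Fin 2) :=
  SimpleGraph.fromRel fun a b =>
    match a, b with
    | .inl i, .inl j =>
        i ≠ j ∧ ¬(i = 0 ∧ j = 1) ∧ ¬(i = 1 ∧ j = 0) ∧ ¬(i = 0 ∧ j = 2) ∧ ¬(i = 2 ∧ j = 0)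
    | .inl i, .inr k => (k = 0 ∧ (i = 0 ∨ i = 1)) ∨ (k = 1 ∧ (i = 0 ∨ i = 2))
    | .inr _, .inr _ => True
    | _, _ => False

/-- `K₃,₃ʰ`: subdivide two edges of `K₃,₃` at a common endpoint and join
the two subdivision vertices. -/
def K33h : SimpleGraph ((Fin 3 ⊕ Fin 3) ⊕ Fin 2) :=
  SimpleGraph.fromRel fun a b =>
    match a, b with
    | .inl (.inl i), .inl (.inr j) => ¬(i = 0 ∧ (j = 0 ∨ j = 1))
    | .inl (.inr j), .inl (.inl i) => ¬(i = 0 ∧ (j = 0 ∨ j = 1))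
    | .inl x, .inr k =>
        (k = 0 ∧ (x = Sum.inl 0 ∨ x = Sum.inr 0)) ∨ (k = 1 ∧ (x = Sum.inl 0 ∨ x = Sum.inr 1))
    | .inr _, .inr _ => True
    | _, _ => False

/-- `K₅⁺`: `K₅` plus a pendant vertex. -/
def K5plus : SimpleGraph (Option (Fin 5)) :=
  SimpleGraph.fromRel fun a b =>
    match a, b with
    | some i, some j => i ≠ j
    | none, some j => j = 0
    | _, _ => False

/-- `K₃,₃⁺`: `K₃,₃` plus a pendant vertex. -/
def K33plus : SimpleGraph (Option (Fin 3 ⊕ Fin 3)) :=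
  SimpleGraph.fromRel fun a b =>
    match a, b with
    | some (.inl _), some (.inr _) => True
    | none, some x => x = Sum.inl 0
    | _, _ => False

/-- `K₅ ⊕ e`: disjoint union of `K₅` and one edge. -/
def K5oplus : SimpleGraph (Fin 5 ⊕ Fin 2) :=
  SimpleGraph.fromRel fun a b =>
    match a, b with
    | .inl i, .inl j => i ≠ j
    | .inr _, .inr _ => True
    | _, _ => False

/-- `K₃,₃ ⊕ e`: disjoint union of `K₃,₃` and one edge. -/
def K33oplus : SimpleGraph ((Fin 3 ⊕ Fin 3) ⊕ Fin 2) :=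
  SimpleGraph.fromRel fun a b =>
    match a, b with
    | .inl (.inl _), .inl (.inr _) => True
    | .inr _, .inr _ => True
    | _, _ => False

/-- The triad addition of `H` at `x y z`: add a new vertex joined to `x`, `y`, `z`. -/
def triadAddition {U : Type*} (H : SimpleGraph U) (x y z : U) : SimpleGraph (Option U) :=
  SimpleGraph.fromRel fun a b =>
    match a, b with
    | some u, some v => H.Adj u v
    | none, some u => u = x ∨ u = y ∨ u = z
    | _, _ => False

def IsTriadAdditionOf {V U : Type*} (G : SimpleGraph V) (H : SimpleGraph U) : Prop :=
  ∃ x y z : U, x ≠ y ∧ y ≠ z ∧ x ≠ z ∧ Nonempty (G ≃g triadAddition H x y z)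

/-- `G` is obtained from `H` by subdividing (possibly repeatedly) edges of `H`,
all of which lie in `S`. -/
def IsSubdivisionWithin {V W : Type*} (G : SimpleGraph V) (H : SimpleGraph W)
    (S : Set (Sym2 W)) : Prop :=
  ∃ (f : W ↪ V) (p : ∀ ⦃u v : W⦄, H.Adj u v → G.Walk (f u) (f v)),
    (∀ ⦃u v : W⦄ (h : H.Adj u v), (p h).IsPath) ∧
    (∀ ⦃u v : W⦄ (h : H.Adj u v), p h.symm = (p h).reverse) ∧
    (∀ ⦃u v : W⦄ (h : H.Adj u v), s(u, v) ∉ S → (p h).length = 1) ∧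
    (∀ ⦃u v : W⦄ (h : H.Adj u v) (w : W), f w ∈ (p h).support → w = u ∨ w = v) ∧
    (∀ ⦃u v u' v' : W⦄ (h : H.Adj u v) (h' : H.Adj u' v'), s(u, v) ≠ s(u', v') →
      ∀ x : V, x ∈ (p h).support → x ∈ (p h').support → x ∈ Set.range f) ∧
    (∀ x : V, x ∈ Set.range f ∨ ∃ (u v : W) (h : H.Adj u v), x ∈ (p h).support) ∧
    (∀ e ∈ G.edgeSet, ∃ (u v : W) (h : H.Adj u v), e ∈ (p h).edges)

/-- `G` is a subdivision of `H`. -/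
def IsSubdivision {V W : Type*} (G : SimpleGraph V) (H : SimpleGraph W) : Prop :=
  IsSubdivisionWithin G H Set.univ

/-- `D(H)`: the set of edges of `H` whose deletion leaves a planar graph. -/
def Dset {U : Type*} (H : SimpleGraph U) : Set (Sym2 U) :=
  {e | e ∈ H.edgeSet ∧ Planar (H.deleteEdges {e})}

/-- `G[A]` together with all edges between vertices of `T` (`T ⊆ A` intended). -/
def deltaGraph {V : Type*} (G : SimpleGraph V) (A T : Set V) : SimpleGraph A :=
  SimpleGraph.fromRel fun a b => G.Adj a.1 b.1 ∨ (a.1 ∈ T ∧ b.1 ∈ T)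

/-- `G[A]^Y` for the separation `{G[A], G[B]}`: add a new vertex joined to `A ∩ B`. -/
def sepY {V : Type*} (G : SimpleGraph V) (A B : Set V) : SimpleGraph (Option A) :=
  SimpleGraph.fromRel fun x y =>
    match x, y with
    | some a, some b => G.Adj a.1 b.1
    | none, some a => a.1 ∈ A ∩ B
    | _, _ => False

/-- `G₂` is obtained from `G` by adding isolated vertices. -/
def AddIsolated {V₂ V : Type*} (G₂ : SimpleGraph V₂) (G : SimpleGraph V) : Prop :=
  ∃ f : V ↪ V₂, (∀ a b : V, G₂.Adj (f a) (f b) ↔ G.Adj a b) ∧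
    ∀ x : V₂, x ∉ Set.range f → ∀ y : V₂, ¬ G₂.Adj x y

/-- The set of non-isolated vertices of `G` (so `G* = G.induce (core G)`). -/
def core {V : Type*} (G : SimpleGraph V) : Set V := {v | ∃ w, G.Adj v w}

/-- `G` is obtained from `G'` by 3-summing wheels onto distinct triangles of `G'`. -/
def SumWheelsOnto {V U : Type*} (G : SimpleGraph V) (G' : SimpleGraph U) : Prop :=
  ∃ (g : U ↪ V) (k : ℕ) (Wp : Fin k → Set V) (T : Fin k → Set U),
    (∀ i, (T i).ncard = 3) ∧
    (∀ i, ∀ x ∈ T i, ∀ y ∈ T i, x ≠ y → G'.Adj x y) ∧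
    Function.Injective T ∧
    (∀ i, Disjoint (Wp i) (Set.range ⇑g)) ∧
    (Pairwise fun i j => Disjoint (Wp i) (Wp j)) ∧
    (Set.range ⇑g ∪ ⋃ i, Wp i) = Set.univ ∧
    (∀ i, IsWheel (deltaGraph G (Wp i ∪ ⇑g '' T i) (⇑g '' T i))) ∧
    (∀ a b : U, G.Adj (g a) (g b) → G'.Adj a b) ∧
    (∀ a b : U, G'.Adj a b → (G.Adj (g a) (g b) ∨ ∃ i, a ∈ T i ∧ b ∈ T i)) ∧
    (∀ ⦃x y : V⦄, G.Adj x y → (x ∈ Set.range ⇑g ∧ y ∈ Set.range ⇑g) ∨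
      ∃ i, x ∈ Wp i ∪ ⇑g '' T i ∧ y ∈ Wp i ∪ ⇑g '' T i) ∧
    (∀ i, ∀ x ∈ Wp i, ∀ ⦃y : V⦄, G.Adj x y → y ∈ Wp i ∪ ⇑g '' T i)

/-- `H` has an edge whose deletion and contraction are both nonplanar. -/
def HasBadEdge {V : Type*} (H : SimpleGraph V) : Prop :=
  ∃ u v : V, H.Adj u v ∧ ¬ Planar (H.deleteEdges {s(u, v)}) ∧ ¬ Planar (contractEdge H u v)

/-!
Being nonplanar, `G` has a `K₅` or a `K₃,₃` minor. If it has no `K₃,₃` minor, a `K₅` model covers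
`G`, as a vertex outside it would give `K₅⁺`, and its branch sets are single vertices, as splitting a
larger one would give `K₃,₃`, `K₅⁺` or a vertex of degree at most two; so `G` is `K₅`, which is `DW₃`.
Otherwise `G` contains a subdivision of `K₃,₃`. Excluding `K₃,₃⁺` forces every such subdivision to
span `G`, because a vertex outside it would provide the pendant edge. This is the lever of the whole
argument: any rerouting of a subdivision along further edges of `G` must again use all vertices.

Suppose first that in some subdivision two disjoint subdivided edges are joined by an edge of `G`
between their interiors. Then `G` has a Hamiltonian cycle with four pairwise crossing chords. Since
`K₅ʰ` is excluded, any two of its chords cross or share an end, and the chords can be followed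
around the cycle to see that they join each vertex to its opposite (`M_n`) or to its two almost
opposite vertices (`C²_{2n+1}`).

If there is no such edge, choose a subdivision with a subdivided edge that is as long as possible.
Rerouting then shows that no other edge is subdivided. Up to permuting the sides, deleting from each
side a branch vertex that is not an end of the subdivided edge leaves an induced cycle, so that `G`
is an induced cycle together with two adjacent hubs; the degree conditions make the adjacencies to
the hubs either full (`DW_n`) or alternating (`AW_{2n}`, or `M_3` for a rim of four vertices). The
only exception is a graph on seven vertices, `C²_7`.
-/

/-- The properties of a graph that the argument uses: it is connected, has minimum degree at least
three and no vertex of degree three on a triangle, and it is `{K₅⁺, K₃,₃⁺, K₅ʰ, K₃,₃ʰ}`-free. The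
two degree conditions are phrased as the existence of a neighbour outside a given list. -/
structure Admissible {V : Type*} (G : SimpleGraph V) : Prop where
  connected : G.Connected
  exists_adj_ne_ne : ∀ v x y, ∃ z, G.Adj v z ∧ z ≠ x ∧ z ≠ y
  exists_adj_of_triangle : ∀ v x y z, G.Adj v x → G.Adj v y → G.Adj x y →
    ∃ w, G.Adj v w ∧ w ≠ x ∧ w ≠ y ∧ w ≠ z
  not_K5plus : ¬ IsMinor K5plus G
  not_K33plus : ¬ IsMinor K33plus G
  not_K5h : ¬ IsMinor K5h G
  not_K33h : ¬ IsMinor K33h G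

section InternallyFourConnected
variable {V : Type*} {G : SimpleGraph V}

theorem eq_zero_of_K13_adj {a b : Fin 4} (h : K13.Adj a b) : a = 0 ∨ b = 0 := by
  simp only [K13, fromRel_adj] at h
  exact h.2

theorem exists_center_of_iso_K13 {A : Set V} (h : Nonempty (G.induce A ≃g K13)) :
    ∃ c, ∀ x ∈ A, ∀ y ∈ A, G.Adj x y → x = c ∨ y = c := by
  obtain ⟨f⟩ := h
  have hcenter : ∀ x : A, f x = 0 → x.1 = (f.symm 0).1 := fun x h0 =>
    congrArg Subtype.val ((RelIso.eq_symm_apply f).2 h0)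
  exact ⟨f.symm 0, fun x hx y hy hxy =>
    (eq_zero_of_K13_adj (f.map_adj_iff.2 (show (G.induce A).Adj ⟨x, hx⟩ ⟨y, hy⟩ from hxy))).imp
      (hcenter _) (hcenter _)⟩

theorem exists_notMem_of_ncard_lt {s : Set V} (h : s.ncard < Nat.card V) : ∃ w, w ∉ s := by
  rw [← Set.ne_univ_iff_exists_notMem]
  rintro rfl
  exact (Set.ncard_univ V ▸ h).false

theorem InternallyFourConnected.exists_adj_ne_ne (h4 : InternallyFourConnected G) (v x y : V) :
    ∃ z, G.Adj v z ∧ z ≠ x ∧ z ≠ y := by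
  obtain ⟨⟨hcard, hconn⟩, -⟩ := h4
  have hpair : ({x, y} : Set V).ncard ≤ 2 :=
    (Set.ncard_insert_le x {y}).trans (by rw [Set.ncard_singleton])
  have hdel := hconn ({x, y} \ {v})
    ((Set.ncard_le_ncard Set.sdiff_subset (Set.toFinite _)).trans_lt (by omega))
  obtain ⟨w, hw⟩ : ∃ w, w ∉ ({v, x, y} : Set V) :=
    exists_notMem_of_ncard_lt ((Set.ncard_insert_le _ _).trans_lt (by omega))
  simp only [Set.mem_insert_iff, Set.mem_singleton_iff, not_or] at hw
  have : Nontrivial ↑(({x, y} \ {v} : Set V)ᶜ) :=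
    ⟨⟨v, by simp⟩, ⟨w, by simp [hw]⟩, by simpa using Ne.symm hw.1⟩
  obtain ⟨⟨z, hz⟩, hvz⟩ := hdel.preconnected.exists_adj_of_nontrivial ⟨v, by simp⟩
  have hvz : G.Adj v z := hvz
  have := hvz.ne'
  exact ⟨z, hvz, by grind, by grind⟩

theorem isSep_of_neighborSet_subset {v x y z w : V} (hxv : x ≠ v) (hyv : y ≠ v) (hzv : z ≠ v)
    (hxy : x ≠ y) (hxz : x ≠ z) (hyz : y ≠ z) (hw : w ∉ ({v, x, y, z} : Set V))
    (hN : ∀ t, G.Adj v t → t = x ∨ t = y ∨ t = z) : IsSep G 3 {v, x, y, z} {v}ᶜ := by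
  refine ⟨?_, fun h => hw (h ▸ Set.mem_univ w), fun h => ?_, ?_, fun a b hab => ?_⟩
  · rw [Set.eq_univ_iff_forall]; grind
  · exact (h ▸ Set.mem_univ v : v ∈ ({v}ᶜ : Set V)) rfl
  · rw [Set.ncard_eq_three]
    exact ⟨x, y, z, hxy, hxz, hyz, by grind⟩
  · have := hN a
    have := hN b
    have := hab.symm
    grind

theorem InternallyFourConnected.exists_adj_of_triangle (h4 : InternallyFourConnected G)
    (v x y z : V) (hvx : G.Adj v x) (hvy : G.Adj v y) (hxy : G.Adj x y) :
    ∃ w, G.Adj v w ∧ w ≠ x ∧ w ≠ y ∧ w ≠ z := by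
  by_contra! hN
  obtain ⟨t, hvt, htx, hty⟩ := h4.exists_adj_ne_ne v x y
  obtain rfl := hN t hvt htx hty
  have hfour : ({v, x, y, t} : Set V).ncard ≤ 4 := by
    have := Set.ncard_insert_le v {x, y, t}
    have := Set.ncard_insert_le x {y, t}
    have := Set.ncard_insert_le y {t}
    rw [Set.ncard_singleton] at this
    omega
  obtain ⟨w, hw⟩ := exists_notMem_of_ncard_lt (hfour.trans_lt h4.2.1)
  have hsep := isSep_of_neighborSet_subset hvx.ne' hvy.ne' hvt.ne' hxy.ne htx.symm hty.symm hw
    fun s hs => by have := hN s hs; tauto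
  rcases h4.2.2 _ _ hsep with ⟨hA, -⟩ | ⟨hB, -⟩
  · obtain ⟨c, hc⟩ := exists_center_of_iso_K13 hA
    have h1 := hc v (by simp) x (by simp) hvx
    have h2 := hc v (by simp) y (by simp) hvy
    have h3 := hc x (by simp) y (by simp) hxy
    have := hvx.ne
    have := hvy.ne
    have := hxy.ne
    grind
  -- The edge `xy` forces the centre to be `x` or `y`, an edge at `w` avoiding it is impossible.
  · obtain ⟨c, hc⟩ := exists_center_of_iso_K13 hB
    simp only [Set.mem_insert_iff, Set.mem_singleton_iff, not_or] at hw
    obtain ⟨u, hwu, huc, -⟩ := h4.exists_adj_ne_ne w c c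
    have huv : u ≠ v := by
      rintro rfl
      exact hw.2.2.2 (hN w hwu.symm hw.2.1 hw.2.2.1)
    have h1 := hc x hvx.ne' y hvy.ne' hxy
    have h2 := hc w hw.1 u huv hwu
    grind

theorem InternallyFourConnected.admissible (h4 : InternallyFourConnected G)
    (hfree : ¬ IsMinor K5plus G ∧ ¬ IsMinor K33plus G ∧ ¬ IsMinor K5h G ∧ ¬ IsMinor K33h G) :
    Admissible G := by
  have hconn := h4.1.2 ∅ (by simp)
  rw [Set.compl_empty] at hconn
  exact ⟨(induceUnivIso G).connected_iff.1 hconn, h4.exists_adj_ne_ne, h4.exists_adj_of_triangle,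
    hfree.1, hfree.2.1, hfree.2.2.1, hfree.2.2.2⟩

end InternallyFourConnected

section Links
variable {V : Type*} {G : SimpleGraph V}

/-- `Link G x l y`: the vertices `x, l, y` in this order form a walk of `G`, so that `l` lists the
interior of a walk with at least one edge. -/
def Link (G : SimpleGraph V) : V → List V → V → Prop
  | x, [], y => G.Adj x y
  | x, m :: r, y => G.Adj x m ∧ Link G m r y

/-- `Reach G x l y`: the vertices `x, l` in this order form a walk of `G` ending at `y`, so that `l`
lists all vertices of the walk but the first. -/
def Reach (G : SimpleGraph V) : V → List V → V → Prop
  | x, [], y => x = y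
  | x, m :: r, y => G.Adj x m ∧ Reach G m r y

@[simp] theorem link_nil {x y : V} : Link G x [] y ↔ G.Adj x y := Iff.rfl

@[simp] theorem link_cons {x y m : V} {r : List V} :
    Link G x (m :: r) y ↔ G.Adj x m ∧ Link G m r y := Iff.rfl

@[simp] theorem reach_nil {x y : V} : Reach G x [] y ↔ x = y := Iff.rfl

@[simp] theorem reach_cons {x y m : V} {r : List V} :
    Reach G x (m :: r) y ↔ G.Adj x m ∧ Reach G m r y := Iff.rfl

@[simp] theorem link_append {x y m : V} {l r : List V} :
    Link G x (l ++ m :: r) y ↔ Link G x l m ∧ Link G m r y := by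
  induction l generalizing x with
  | nil => simp
  | cons a l ih => simp [ih, and_assoc]

@[simp] theorem link_reverse {x y : V} {l : List V} : Link G x l.reverse y ↔ Link G y l x := by
  induction l generalizing x y with
  | nil => simp [G.adj_comm]
  | cons a l ih =>
    rw [List.reverse_cons, link_append, ih, link_cons, link_nil, G.adj_comm, and_comm]

theorem Reach.link_append {x y z : V} {l r : List V} (h : Reach G x l y) (h' : Link G y r z) :
    Link G x (l ++ r) z := by
  induction l generalizing x with
  | nil => obtain rfl := reach_nil.1 h; exact h'
  | cons a l ih => exact ⟨h.1, ih h.2⟩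

theorem Reach.link {x y z : V} {l : List V} (h : Reach G x l y) (hyz : G.Adj y z) :
    Link G x l z := by
  simpa using h.link_append (r := []) hyz

theorem Reach.link_append_reverse {x y z w : V} {l r : List V} (h : Reach G x l y)
    (hyz : G.Adj y z) (h' : Reach G w r z) : Link G x (l ++ r.reverse) w :=
  h.link_append (link_reverse.2 (h'.link hyz.symm))

theorem reach_append_cons {x y m : V} {l r : List V} :
    Reach G x (l ++ m :: r) y ↔ Link G x l m ∧ Reach G m r y := by
  induction l generalizing x with
  | nil => simp
  | cons a l ih => simp [ih, and_assoc]

theorem reach_append_singleton {x m : V} {l : List V} : Reach G x (l ++ [m]) m ↔ Link G x l m := by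
  simp [reach_append_cons]

theorem Reach.exists_split {x y c : V} {l : List V} (h : Reach G x l y) (hc : c ∈ x :: l) :
    ∃ p q, x :: l = p ++ c :: q ∧ Reach G c p.reverse x ∧ Reach G c q y := by
  obtain ⟨p, q, hpq⟩ := List.append_of_mem hc
  refine ⟨p, q, hpq, ?_⟩
  cases p with
  | nil =>
    obtain ⟨rfl, rfl⟩ := List.cons.inj hpq
    exact ⟨rfl, h⟩
  | cons a p =>
    rw [List.cons_append] at hpq
    obtain ⟨rfl, rfl⟩ := List.cons.inj hpq
    rw [reach_append_cons] at h
    rw [List.reverse_cons, reach_append_singleton, link_reverse]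
    exact h

theorem Reach.exists_last {M : V → Prop} {x z : V} {l : List V} (h : Reach G z l x)
    (hM : ∃ m ∈ z :: l, M m) :
    ∃ c r, M c ∧ Reach G c r x ∧ c :: r <:+ z :: l ∧ ∀ v ∈ r, ¬ M v := by
  induction l generalizing z with
  | nil =>
    obtain ⟨m, hm, hMm⟩ := hM
    obtain rfl := List.mem_singleton.1 hm
    exact ⟨m, [], hMm, h, List.suffix_rfl, by simp⟩
  | cons a l ih =>
    by_cases hl : ∃ m ∈ a :: l, M m
    · obtain ⟨c, r, hc, hr, hsuf, hnot⟩ := ih h.2 hl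
      exact ⟨c, r, hc, hr, hsuf.trans (List.suffix_cons _ _), hnot⟩
    · refine ⟨z, a :: l, ?_, h, List.suffix_rfl, fun v hv hMv => hl ⟨v, hv, hMv⟩⟩
      obtain ⟨m, hm, hMm⟩ := hM
      rcases List.mem_cons.1 hm with rfl | hm
      · exact hMm
      · exact absurd ⟨m, hm, hMm⟩ hl

theorem reach_of_walk {x y : V} (p : G.Walk x y) : Reach G x p.support.tail y := by
  induction p with
  | nil => simp
  | cons h p ih =>
    rw [Walk.support_cons, List.tail_cons, ← Walk.cons_tail_support]
    exact ⟨h, ih⟩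

theorem exists_reach_of_connected {B : Set V} (hB : (G.induce B).Connected) {x y : V} (hx : x ∈ B)
    (hy : y ∈ B) : ∃ l, Reach G x l y ∧ (x :: l).Nodup ∧ ∀ v ∈ x :: l, v ∈ B := by
  classical
  obtain ⟨p, hp⟩ := hB.exists_isPath ⟨x, hx⟩ ⟨y, hy⟩
  let q := p.map (Embedding.induce (G := G) B).toHom
  have hq : q.IsPath := hp.map (Embedding.induce (G := G) B).injective
  have hsupp : x :: q.support.tail = q.support := Walk.cons_tail_support q
  refine ⟨q.support.tail, reach_of_walk q, hsupp ▸ hq.support_nodup, fun v hv => ?_⟩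
  rw [hsupp, Walk.support_map, List.mem_map] at hv
  obtain ⟨u, -, rfl⟩ := hv
  exact u.2

end Links

section ConnectedLists
variable {V : Type*} {G : SimpleGraph V}

/-- The vertices of the list `l` induce a connected subgraph of `G`: branch sets of minors are
given by such lists. -/
def ListConnected (G : SimpleGraph V) (l : List V) : Prop := (G.induce {v | v ∈ l}).Connected

/-- Some vertex of `l` is adjacent to some vertex of `m`. -/
def Touch (G : SimpleGraph V) (l m : List V) : Prop := ∃ v ∈ l, ∃ w ∈ m, G.Adj v w

theorem Touch.symm {l m : List V} (h : Touch G l m) : Touch G m l := by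
  obtain ⟨v, hv, w, hw, hvw⟩ := h
  exact ⟨w, hw, v, hv, hvw.symm⟩

theorem Touch.mono {l m l' m' : List V} (h : Touch G l m) (hl : l ⊆ l') (hm : m ⊆ m') :
    Touch G l' m' := by
  obtain ⟨v, hv, w, hw, hvw⟩ := h
  exact ⟨v, hl hv, w, hm hw, hvw⟩

theorem touch_singleton {x y : V} : Touch G [x] [y] ↔ G.Adj x y := by simp [Touch]

theorem ListConnected.congr {l m : List V} (h : ListConnected G l) (hlm : ∀ v, v ∈ l ↔ v ∈ m) :
    ListConnected G m := by
  have hset : {v | v ∈ l} = {v | v ∈ m} := Set.ext hlm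
  unfold ListConnected at h
  rwa [hset] at h

theorem listConnected_singleton (x : V) : ListConnected G [x] := by
  have hset : {v | v ∈ [x]} = ({x} : Set V) := by ext; simp
  unfold ListConnected
  rw [hset]
  exact SimpleGraph.Connected.mk (fun a b => by rw [Subsingleton.elim a b])

theorem ListConnected.append {l m : List V} (hl : ListConnected G l) (hm : ListConnected G m)
    (h : Touch G l m) : ListConnected G (l ++ m) := by
  obtain ⟨v, hv, w, hw, hvw⟩ := h
  have hset : {v | v ∈ l ++ m} = {v | v ∈ l} ∪ {v | v ∈ m} := by ext; simp
  unfold ListConnected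
  rw [hset]
  exact connected_induce_union hl.preconnected hm.preconnected hv hw hvw

theorem ListConnected.append_of_mem {l m : List V} (hl : ListConnected G l)
    (hm : ListConnected G m) {x : V} (hxl : x ∈ l) (hxm : x ∈ m) : ListConnected G (l ++ m) := by
  have hset : {v | v ∈ l ++ m} = {v | v ∈ l} ∪ {v | v ∈ m} := by ext; simp
  unfold ListConnected
  rw [hset]
  exact induce_union_connected hl.preconnected hm.preconnected ⟨x, hxl, hxm⟩

theorem Link.listConnected_cons {x y : V} {l : List V} (h : Link G x l y) :
    ListConnected G (x :: l) := by
  induction l generalizing x with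
  | nil => exact listConnected_singleton x
  | cons a l ih =>
    exact (listConnected_singleton x).append (ih h.2) ⟨x, by simp, a, by simp, h.1⟩

theorem Link.touch {x y : V} {l : List V} (h : Link G x l y) : Touch G (x :: l) [y] := by
  induction l generalizing x with
  | nil => exact touch_singleton.2 h
  | cons a l ih => exact (ih h.2).mono (List.subset_cons_self _ _) (List.Subset.refl _)

end ConnectedLists

theorem eq_of_sum_le_one {ι : Type*} [Fintype ι] {f : ι → ℕ} (h : ∑ i, f i ≤ 1) {i j : ι}
    (hi : 0 < f i) (hj : 0 < f j) : i = j := by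
  classical
  by_contra hij
  have hsum : f i + f j ≤ ∑ i, f i := by
    rw [← Finset.sum_pair hij]
    exact Finset.sum_le_sum_of_subset (Finset.subset_univ _)
  omega

theorem sum_le_one_of_pairwise_disjoint {V ι : Type*} [Fintype ι] {B : ι → Set V}
    (hB : ∀ ⦃i j⦄, i ≠ j → Disjoint (B i) (B j)) {f : ι → ℕ} {v : V} (hf : ∀ i, f i ≤ 1)
    (h0 : ∀ i, v ∉ B i → f i = 0) : ∑ i, f i ≤ 1 := by
  by_cases hv : ∃ i, v ∈ B i
  · obtain ⟨i, hi⟩ := hv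
    rw [Finset.sum_eq_single i
      (fun j _ hji => h0 j fun hj => Set.disjoint_left.1 (hB hji) hj hi) (by simp)]
    exact hf i
  · push Not at hv
    simp [h0 _ (hv _)]

section Occurrences
variable {V : Type*} [DecidableEq V] {G : SimpleGraph V}

/-- The number of occurrences of `v` in the one-element list `[x]`. Disjointness of a family of
vertices and lists is expressed by bounding the total number of occurrences of each vertex by one,
which makes it a statement of linear arithmetic. -/
def hit (v x : V) : ℕ := if x = v then 1 else 0

theorem hit_self (v : V) : hit v v = 1 := if_pos rfl

theorem hit_of_ne {v x : V} (h : x ≠ v) : hit v x = 0 := if_neg h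

theorem count_cons_hit (v x : V) (l : List V) : (x :: l).count v = l.count v + hit v x := by
  simp [List.count_cons, hit]

theorem isMinor_of_lists {W : Type*} [Fintype W] {H : SimpleGraph W} (L : W → List V)
    (hcon : ∀ w, ListConnected G (L w)) (hcount : ∀ v, ∑ w, (L w).count v ≤ 1)
    (hadj : ∀ w w', H.Adj w w' → Touch G (L w) (L w')) : IsMinor H G := by
  refine ⟨fun w => {v | v ∈ L w}, fun w => ?_, hcon, fun w w' hne => ?_, fun w w' h => hadj w w' h⟩
  · obtain ⟨x⟩ := (hcon w).nonempty
    exact ⟨x.1, x.2⟩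
  · exact Set.disjoint_left.2 fun v hv hv' =>
      hne (eq_of_sum_le_one (hcount v) (List.count_pos_iff.2 hv) (List.count_pos_iff.2 hv'))

theorem isMinor_fromRel {W : Type*} [Fintype W] {r : W → W → Prop} (L : W → List V)
    (hcon : ∀ w, ListConnected G (L w)) (hcount : ∀ v, ∑ w, (L w).count v ≤ 1)
    (hadj : ∀ w w', w ≠ w' → r w w' → Touch G (L w) (L w')) :
    IsMinor (SimpleGraph.fromRel r) G := by
  refine isMinor_of_lists L hcon hcount fun w w' h => ?_
  obtain ⟨hne, hr | hr⟩ := (SimpleGraph.fromRel_adj _ _ _).1 h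
  · exact hadj _ _ hne hr
  · exact (hadj _ _ hne.symm hr).symm

end Occurrences

section Tripod
variable {V : Type*} [DecidableEq V] {G : SimpleGraph V}

theorem exists_tripod {B : Set V} (hB : (G.induce B).Connected) {x : Fin 3 → V}
    (hx : ∀ j, x j ∈ B) : ∃ (c : V) (T : Fin 3 → List V), (∀ j, Reach G c (T j) (x j)) ∧
      (∀ v, hit v c + ∑ j, (T j).count v ≤ 1) ∧
      ∀ v ∉ B, hit v c + ∑ j, (T j).count v = 0 := by
  obtain ⟨T, hT, hTnodup, hTB⟩ := exists_reach_of_connected hB (hx 0) (hx 1)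
  obtain ⟨U, hU, hUnodup, hUB⟩ := exists_reach_of_connected hB (hx 0) (hx 2)
  obtain ⟨c, r, hc, hr, hsuf, hrT⟩ := hU.exists_last (M := (· ∈ x 0 :: T)) ⟨x 0, by simp, by simp⟩
  obtain ⟨p, q, hpq, hp, hq⟩ := hT.exists_split hc
  rw [hpq] at hTnodup hTB hrT
  refine ⟨c, ![p.reverse, q, r], fun j => ?_, fun v => ?_, fun v hv => ?_⟩
  · fin_cases j
    exacts [hp, hq, hr]
  · have hTcount := List.nodup_iff_count_le_one.1 hTnodup v
    have hrcount := List.nodup_iff_count_le_one.1 (hUnodup.sublist hsuf.sublist) v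
    have hdisj : r.count v = 0 ∨ (p ++ c :: q).count v = 0 := by
      simp only [List.count_eq_zero]
      exact or_iff_not_imp_left.2 fun h => hrT v (not_not.1 h)
    simp only [Fin.sum_univ_three, Matrix.cons_val, List.count_reverse, count_cons_hit,
      List.count_append] at *
    omega
  · have hTcount := List.count_eq_zero.2 (fun h => hv (hTB v h))
    have hrcount := List.count_eq_zero.2 (fun h => hv (hUB v (hsuf.subset h)))
    simp only [Fin.sum_univ_three, Matrix.cons_val, List.count_reverse, count_cons_hit,
      List.count_append] at *
    omega

end Tripod

section Subdivision
variable {V : Type*} [DecidableEq V] {G : SimpleGraph V}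

/-- A subdivision of `K₃,₃` in `G`: branch vertices `a i` and `b j`, and for each pair `i, j` the
list `path i j` of interior vertices of a path from `a i` to `b j`. That all these are disjoint and
free of repetitions is the statement that no vertex of `G` occurs twice. -/
structure K33Subdiv (G : SimpleGraph V) where
  a : Fin 3 → V
  b : Fin 3 → V
  path : Fin 3 → Fin 3 → List V
  link : ∀ i j, Link G (a i) (path i j) (b j)
  sum_le_one : ∀ v, ∑ i, hit v (a i) + ∑ j, hit v (b j) + ∑ i, ∑ j, (path i j).count v ≤ 1

theorem exists_k33Subdiv (h : IsMinor K33 G) : Nonempty (K33Subdiv G) := by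
  obtain ⟨B, -, hcon, hdis, hadj⟩ := h
  have hedge : ∀ i j : Fin 3, ∃ v ∈ B (.inl i), ∃ w ∈ B (.inr j), G.Adj v w := fun i j =>
    hadj (w₁ := .inl i) (w₂ := .inr j) (by simp [K33])
  choose p hp q hq hpq using hedge
  choose a T hT hT1 hT0 using fun i => exists_tripod (hcon (.inl i)) (hp i)
  choose b U hU hU1 hU0 using fun j => exists_tripod (hcon (.inr j)) (fun i => hq i j)
  refine ⟨⟨a, b, fun i j => T i j ++ (U j i).reverse,
    fun i j => (hT i j).link_append_reverse (hpq i j) (hU j i), fun v => ?_⟩⟩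
  have hsum := sum_le_one_of_pairwise_disjoint hdis (v := v)
    (f := Sum.elim (fun i => hit v (a i) + ∑ j, (T i j).count v)
      (fun j => hit v (b j) + ∑ i, (U j i).count v))
    (by rintro (i | j); exacts [hT1 i v, hU1 j v]) (by rintro (i | j); exacts [hT0 i v, hU0 j v])
  simp only [Fintype.sum_sum_type, Sum.elim_inl, Sum.elim_inr, Fin.sum_univ_three,
    List.count_append, List.count_reverse] at *
  omega

namespace K33Subdiv

/-- The number of times the vertex `v` occurs in the subdivision: one if `v` lies on it, and zero
otherwise. -/
def occ (S : K33Subdiv G) (v : V) : ℕ :=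
  hit v (S.a 0) + hit v (S.a 1) + hit v (S.a 2) +
  (hit v (S.b 0) + hit v (S.b 1) + hit v (S.b 2)) +
  ((S.path 0 0).count v + (S.path 0 1).count v + (S.path 0 2).count v +
   ((S.path 1 0).count v + (S.path 1 1).count v + (S.path 1 2).count v) +
   ((S.path 2 0).count v + (S.path 2 1).count v + (S.path 2 2).count v))

theorem occ_eq_sum (S : K33Subdiv G) (v : V) : S.occ v =
    ∑ i, hit v (S.a i) + ∑ j, hit v (S.b j) + ∑ i, ∑ j, (S.path i j).count v := by
  simp only [occ, Fin.sum_univ_three]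

theorem occ_le_one (S : K33Subdiv G) (v : V) : S.occ v ≤ 1 := by
  rw [occ_eq_sum]
  exact S.sum_le_one v

theorem sum_permute (S : K33Subdiv G) (σ τ : Equiv.Perm (Fin 3)) (v : V) :
    ∑ i, hit v (S.a (σ i)) + ∑ j, hit v (S.b (τ j)) + ∑ i, ∑ j, (S.path (σ i) (τ j)).count v =
      ∑ i, hit v (S.a i) + ∑ j, hit v (S.b j) + ∑ i, ∑ j, (S.path i j).count v := by
  rw [Equiv.sum_comp σ (fun i => hit v (S.a i)), Equiv.sum_comp τ (fun i => hit v (S.b i)),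
    Equiv.sum_comp σ (fun i => ∑ j, (S.path i (τ j)).count v)]
  exact congrArg _ (Finset.sum_congr rfl fun i _ =>
    Equiv.sum_comp τ (fun j => (S.path i j).count v))

/-- The subdivision with its branch vertices renumbered. -/
def permute (S : K33Subdiv G) (σ τ : Equiv.Perm (Fin 3)) : K33Subdiv G where
  a i := S.a (σ i)
  b j := S.b (τ j)
  path i j := S.path (σ i) (τ j)
  link i j := S.link _ _
  sum_le_one v := by
    rw [S.sum_permute]
    exact S.sum_le_one v

theorem permute_occ (S : K33Subdiv G) (σ τ : Equiv.Perm (Fin 3)) (v : V) :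
    (S.permute σ τ).occ v = S.occ v := by
  simp only [occ_eq_sum, permute, S.sum_permute]

/-- The subdivision with the two classes of branch vertices exchanged. -/
def transpose (S : K33Subdiv G) : K33Subdiv G where
  a := S.b
  b := S.a
  path i j := (S.path j i).reverse
  link i j := link_reverse.2 (S.link _ _)
  sum_le_one v := by
    simp only [List.count_reverse]
    rw [Finset.sum_comm, add_comm (∑ i, hit v (S.b i))]
    exact S.sum_le_one v

theorem transpose_occ (S : K33Subdiv G) (v : V) : S.transpose.occ v = S.occ v := by
  simp only [occ, transpose, List.count_reverse]
  omega

end K33Subdiv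

theorem exists_ne_ne (i j : Fin 3) : ∃ k, i ≠ k ∧ j ≠ k := by
  revert i j
  decide

theorem exists_perm {i j k : Fin 3} (hij : i ≠ j) (hik : i ≠ k) (hjk : j ≠ k) :
    ∃ σ : Equiv.Perm (Fin 3), σ 0 = i ∧ σ 1 = j ∧ σ 2 = k := by
  revert i j k
  decide

theorem exists_perm_of_ne {i j : Fin 3} (h : i ≠ j) :
    ∃ σ : Equiv.Perm (Fin 3), σ 0 = i ∧ σ 1 = j := by
  obtain ⟨k, hik, hjk⟩ := exists_ne_ne i j
  obtain ⟨σ, hi, hj, -⟩ := exists_perm h hik hjk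
  exact ⟨σ, hi, hj⟩

end Subdivision

section Spanning
variable {V : Type*} {G : SimpleGraph V}

/-- A vertex `x` with the interiors of three paths leaving it: the branch set of `x` in a minor
obtained by contracting these paths. -/
def spider (x : V) (p : Fin 3 → List V) : List V := x :: (p 0 ++ p 1 ++ p 2)

theorem mem_spider {x v : V} {p : Fin 3 → List V} : v ∈ spider x p ↔ v = x ∨ ∃ j, v ∈ p j := by
  simp [spider, Fin.exists_fin_succ]

theorem count_spider [DecidableEq V] (x v : V) (p : Fin 3 → List V) :
    (spider x p).count v = hit v x + ∑ j, (p j).count v := by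
  simp only [spider, count_cons_hit, List.count_append, Fin.sum_univ_three]
  omega

theorem listConnected_spider {x : V} {p : Fin 3 → List V} {y : Fin 3 → V}
    (h : ∀ j, Link G x (p j) (y j)) : ListConnected G (spider x p) := by
  have hx : ∀ l : List V, x ∈ x :: l := fun l => by simp
  refine ((((h 0).listConnected_cons.append_of_mem (h 1).listConnected_cons (hx _) (hx _))
    ).append_of_mem (h 2).listConnected_cons (by simp) (hx _)).congr fun v => ?_
  simp only [spider, List.mem_append, List.mem_cons]
  tauto

theorem touch_spider {x y : V} {p : Fin 3 → List V} {j : Fin 3} (h : Link G x (p j) y) :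
    Touch G (spider x p) [y] := by
  refine h.touch.mono (fun v hv => ?_) (List.Subset.refl _)
  rw [List.mem_cons] at hv
  exact mem_spider.2 (hv.imp_right fun hv => ⟨j, hv⟩)

variable [DecidableEq V]

theorem isMinor_K33plus_of_lists {R C : Fin 3 → List V} {l : List V}
    (hR : ∀ i, ListConnected G (R i)) (hC : ∀ j, ListConnected G (C j)) (hl : ListConnected G l)
    (hcount : ∀ v, ∑ i, (R i).count v + ∑ j, (C j).count v + l.count v ≤ 1)
    (hRC : ∀ i j, Touch G (R i) (C j)) (hlR : Touch G l (R 0)) : IsMinor K33plus G := by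
  let L : Option (Fin 3 ⊕ Fin 3) → List V := fun w => w.elim l (Sum.elim R C)
  refine isMinor_fromRel L ?_ (fun v => ?_) ?_
  · rintro (_ | i | j)
    exacts [hl, hR i, hC j]
  · have := hcount v
    simp only [L, Fintype.sum_option, Fintype.sum_sum_type, Option.elim, Sum.elim_inl,
      Sum.elim_inr]
    omega
  · rintro (_ | i | j) (_ | i' | j') - h
    all_goals first
      | exact h.elim
      | exact hRC _ _
      | (obtain rfl | h := Sum.inl.inj h; exact hlR)
      | exact (Sum.inr_ne_inl h).elim

theorem isMinor_K33h_of_lists {R C : Fin 3 → List V} {l m : List V}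
    (hR : ∀ i, ListConnected G (R i)) (hC : ∀ j, ListConnected G (C j)) (hl : ListConnected G l)
    (hm : ListConnected G m)
    (hcount : ∀ v, ∑ i, (R i).count v + ∑ j, (C j).count v + (l.count v + m.count v) ≤ 1)
    (hRC : ∀ i j, ¬(i = 0 ∧ (j = 0 ∨ j = 1)) → Touch G (R i) (C j))
    (hRl : Touch G (R 0) l) (hCl : Touch G (C 0) l) (hRm : Touch G (R 0) m) (hCm : Touch G (C 1) m)
    (hlm : Touch G l m) : IsMinor K33h G := by
  let L : (Fin 3 ⊕ Fin 3) ⊕ Fin 2 → List V := Sum.elim (Sum.elim R C) ![l, m]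
  refine isMinor_fromRel L ?_ (fun v => ?_) ?_
  · rintro ((i | j) | k)
    · exact hR i
    · exact hC j
    · fin_cases k
      exacts [hl, hm]
  · have := hcount v
    simpa only [L, Fintype.sum_sum_type, Fin.sum_univ_two, Sum.elim_inl, Sum.elim_inr,
      Matrix.cons_val] using this
  · rintro ((i | j) | k) ((i' | j') | k') hne h <;> dsimp only at h
    · exact hRC _ _ h
    · rcases h with ⟨rfl, h | h⟩ | ⟨rfl, h | h⟩
      · exact (Sum.inl.inj h).symm ▸ hRl
      · exact (Sum.inl_ne_inr h).elim
      · exact (Sum.inl.inj h).symm ▸ hRm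
      · exact (Sum.inl_ne_inr h).elim
    · exact (hRC _ _ h).symm
    · rcases h with ⟨rfl, h | h⟩ | ⟨rfl, h | h⟩
      · exact (Sum.inr_ne_inl h).elim
      · exact (Sum.inr.inj h).symm ▸ hCl
      · exact (Sum.inr_ne_inl h).elim
      · exact (Sum.inr.inj h).symm ▸ hCm
    · fin_cases k <;> fin_cases k'
      exacts [(hne rfl).elim, hlm, hlm.symm, (hne rfl).elim]

namespace K33Subdiv

theorem not_adj_of_mem_spider (S : K33Subdiv G) (hG : Admissible G) {x y : V} (hy : S.occ y = 0)
    (i : Fin 3) (hx : x ∈ spider (S.a i) (S.path i)) : ¬ G.Adj x y := by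
  intro hxy
  wlog hi : i = 0 generalizing S i
  · exact this (S.permute (Equiv.swap 0 i) 1) (by rwa [permute_occ]) 0 (by simpa [permute]) rfl
  subst hi
  refine hG.not_K33plus (isMinor_K33plus_of_lists (R := fun i => spider (S.a i) (S.path i))
    (C := fun j => [S.b j]) (l := [y]) (fun i => listConnected_spider (S.link i))
    (fun _ => listConnected_singleton _) (listConnected_singleton _) (fun v => ?_)
    (fun i j => touch_spider (S.link i j)) ⟨y, by simp, x, hx, hxy.symm⟩)
  have hv := S.occ_le_one v
  have hne : hit v y = 0 ∨ hit v y = 1 ∧ S.occ v = 0 := by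
    by_cases h : y = v
    · exact .inr (h ▸ ⟨hit_self y, hy⟩)
    · exact .inl (hit_of_ne h)
  simp only [occ_eq_sum, count_spider, count_cons_hit, List.count_nil, Finset.sum_add_distrib,
    zero_add] at *
  omega

/-- Since `G` is connected, a vertex off the subdivision would give a pendant edge at it. -/
theorem occ_eq_one (S : K33Subdiv G) (hG : Admissible G) (v : V) : S.occ v = 1 := by
  by_contra hv
  have hv0 : S.occ v = 0 := by have := S.occ_le_one v; omega
  obtain ⟨w⟩ := hG.connected.preconnected (S.a 0) v
  obtain ⟨d, -, hx, hy⟩ := w.exists_boundary_dart {v | S.occ v ≠ 0}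
    (by simp only [occ, hit_self, Set.mem_ofPred_eq]; omega) (fun h => h hv0)
  have hy0 : S.occ d.snd = 0 := not_not.1 hy
  have hrow : ∀ i, d.fst ∉ spider (S.a i) (S.path i) := fun i hi =>
    S.not_adj_of_mem_spider hG hy0 i hi d.adj
  have hcol : ∀ j, d.fst ∉ spider (S.b j) fun i => (S.path i j).reverse := fun j hj =>
    S.transpose.not_adj_of_mem_spider hG (by rwa [transpose_occ]) j hj d.adj
  simp only [mem_spider, not_or, not_exists] at hrow hcol
  have ha : ∀ i, hit d.fst (S.a i) = 0 := fun i => hit_of_ne (Ne.symm (hrow i).1)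
  have hb : ∀ j, hit d.fst (S.b j) = 0 := fun j => hit_of_ne (Ne.symm (hcol j).1)
  have hpath : ∀ i j, (S.path i j).count d.fst = 0 := fun i j =>
    List.count_eq_zero.2 ((hrow i).2 j)
  exact hx (by simp [occ, ha, hb, hpath])

end K33Subdiv

end Spanning

section Chords
variable {V : Type*} [DecidableEq V] {G : SimpleGraph V}

theorem eq_nil_of_forall_count_eq_zero {l : List V} (h : ∀ v, l.count v = 0) : l = [] :=
  List.eq_nil_iff_forall_not_mem.2 fun v => List.count_eq_zero.1 (h v)

namespace K33Subdiv

/-- The subdivision with the given branch vertices and the given nine paths. -/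
def ofEntries {a₀ a₁ a₂ b₀ b₁ b₂ : V} {p₀₀ p₀₁ p₀₂ p₁₀ p₁₁ p₁₂ p₂₀ p₂₁ p₂₂ : List V}
    (h₀₀ : Link G a₀ p₀₀ b₀) (h₀₁ : Link G a₀ p₀₁ b₁) (h₀₂ : Link G a₀ p₀₂ b₂)
    (h₁₀ : Link G a₁ p₁₀ b₀) (h₁₁ : Link G a₁ p₁₁ b₁) (h₁₂ : Link G a₁ p₁₂ b₂)
    (h₂₀ : Link G a₂ p₂₀ b₀) (h₂₁ : Link G a₂ p₂₁ b₁) (h₂₂ : Link G a₂ p₂₂ b₂)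
    (h : ∀ v, hit v a₀ + hit v a₁ + hit v a₂ + (hit v b₀ + hit v b₁ + hit v b₂) +
      (p₀₀.count v + p₀₁.count v + p₀₂.count v + (p₁₀.count v + p₁₁.count v + p₁₂.count v) +
       (p₂₀.count v + p₂₁.count v + p₂₂.count v)) ≤ 1) : K33Subdiv G where
  a := ![a₀, a₁, a₂]
  b := ![b₀, b₁, b₂]
  path := ![![p₀₀, p₀₁, p₀₂], ![p₁₀, p₁₁, p₁₂], ![p₂₀, p₂₁, p₂₂]]
  link i j := by fin_cases i <;> fin_cases j <;> assumption
  sum_le_one v := by simpa only [Fin.sum_univ_three, Matrix.cons_val] using h v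

theorem ofEntries_occ_eq_one (hG : Admissible G)
    {a₀ a₁ a₂ b₀ b₁ b₂ : V} {p₀₀ p₀₁ p₀₂ p₁₀ p₁₁ p₁₂ p₂₀ p₂₁ p₂₂ : List V}
    (h₀₀ : Link G a₀ p₀₀ b₀) (h₀₁ : Link G a₀ p₀₁ b₁) (h₀₂ : Link G a₀ p₀₂ b₂)
    (h₁₀ : Link G a₁ p₁₀ b₀) (h₁₁ : Link G a₁ p₁₁ b₁) (h₁₂ : Link G a₁ p₁₂ b₂)
    (h₂₀ : Link G a₂ p₂₀ b₀) (h₂₁ : Link G a₂ p₂₁ b₁) (h₂₂ : Link G a₂ p₂₂ b₂)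
    (h : ∀ v, hit v a₀ + hit v a₁ + hit v a₂ + (hit v b₀ + hit v b₁ + hit v b₂) +
      (p₀₀.count v + p₀₁.count v + p₀₂.count v + (p₁₀.count v + p₁₁.count v + p₁₂.count v) +
       (p₂₀.count v + p₂₁.count v + p₂₂.count v)) ≤ 1) (v : V) :
    hit v a₀ + hit v a₁ + hit v a₂ + (hit v b₀ + hit v b₁ + hit v b₂) +
      (p₀₀.count v + p₀₁.count v + p₀₂.count v + (p₁₀.count v + p₁₁.count v + p₁₂.count v) +
       (p₂₀.count v + p₂₁.count v + p₂₂.count v)) = 1 :=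
  (ofEntries h₀₀ h₀₁ h₀₂ h₁₀ h₁₁ h₁₂ h₂₀ h₂₁ h₂₂ h).occ_eq_one hG v

theorem count_eq_of_link (S : K33Subdiv G) (hG : Admissible G) {i j : Fin 3} {l : List V}
    (hl : Link G (S.a i) l (S.b j)) (hcount : ∀ v, l.count v ≤ (S.path i j).count v) (v : V) :
    l.count v = (S.path i j).count v := by
  let T := S.permute (Equiv.swap 0 i) (Equiv.swap 0 j)
  have hl' : Link G (T.a 0) l (T.b 0) := by simpa [T, permute] using hl
  have hcount' : ∀ v, l.count v ≤ (T.path 0 0).count v := by simpa [T, permute] using hcount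
  have hv := ofEntries_occ_eq_one hG hl' (T.link 0 1) (T.link 0 2) (T.link 1 0) (T.link 1 1)
    (T.link 1 2) (T.link 2 0) (T.link 2 1) (T.link 2 2)
    (fun v => by have := T.occ_le_one v; have := hcount' v; simp only [occ] at *; omega) v
  have hTv : l.count v = (T.path 0 0).count v := by
    have := T.occ_eq_one hG v
    simp only [occ] at this
    omega
  simpa [T, permute] using hTv

theorem path_eq_nil_of_adj (S : K33Subdiv G) (hG : Admissible G) {i j : Fin 3}
    (h : G.Adj (S.a i) (S.b j)) : S.path i j = [] :=
  eq_nil_of_forall_count_eq_zero fun v =>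
    (S.count_eq_of_link hG (l := []) h (by simp) v).symm.trans (by simp)

theorem eq_nil_of_adj_left (S : K33Subdiv G) (hG : Admissible G) {i j : Fin 3} {A B : List V}
    {p : V} (hP : S.path i j = A ++ p :: B) (h : G.Adj (S.a i) p) : A = [] := by
  have hlink := S.link i j
  rw [hP, link_append] at hlink
  refine eq_nil_of_forall_count_eq_zero fun v => ?_
  have hv := S.count_eq_of_link hG (l := p :: B) ⟨h, hlink.2⟩ (by simp [hP]) v
  rw [hP, List.count_append] at hv
  omega

theorem eq_nil_of_adj_right (S : K33Subdiv G) (hG : Admissible G) {i j : Fin 3} {A B : List V}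
    {p : V} (hP : S.path i j = A ++ p :: B) (h : G.Adj p (S.b j)) : B = [] :=
  List.reverse_eq_nil_iff.1 <| S.transpose.eq_nil_of_adj_left hG (i := j) (j := i)
    (B := A.reverse) (p := p) (by simp [transpose, hP]) h.symm

theorem eq_nil_of_adj_mid (S : K33Subdiv G) (hG : Admissible G) {i j : Fin 3} {A M B : List V}
    {p q : V} (hP : S.path i j = A ++ p :: (M ++ q :: B)) (h : G.Adj p q) : M = [] := by
  have hlink := S.link i j
  rw [hP, link_append, link_append] at hlink
  refine eq_nil_of_forall_count_eq_zero fun v => ?_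
  have hv := S.count_eq_of_link hG (i := i) (j := j) (l := A ++ p :: q :: B)
    (by simp [hlink.1, h, hlink.2.2])
    (fun v => by simp only [hP, List.count_append, count_cons_hit]; omega) v
  simp only [hP, List.count_append, count_cons_hit] at hv
  omega

theorem not_adj_of_mem_path_zero (S : K33Subdiv G) (hG : Admissible G) {p q : V}
    (hp : p ∈ S.path 0 0) (hq : q ∈ S.path 0 1) : ¬ G.Adj p q := by
  intro h
  obtain ⟨A, B, hP⟩ := List.append_of_mem hp
  obtain ⟨C, D, hQ⟩ := List.append_of_mem hq
  have hlinkP := S.link 0 0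
  have hlinkQ := S.link 0 1
  rw [hP, link_append] at hlinkP
  rw [hQ, link_append] at hlinkQ
  let P : Fin 3 → List V := ![A, C, S.path 0 2]
  have hR₀ : ∀ j, Link G (S.a 0) (P j) (![p, q, S.b 2] j) := fun j => by
    fin_cases j
    exacts [hlinkP.1, hlinkQ.1, S.link 0 2]
  let R : Fin 3 → List V :=
    ![spider (S.a 0) P, spider (S.a 1) (S.path 1), spider (S.a 2) (S.path 2)]
  refine hG.not_K33h (isMinor_K33h_of_lists (R := R) (C := fun j => [S.b j]) (l := p :: B)
    (m := q :: D) (fun i => ?_) (fun _ => listConnected_singleton _) hlinkP.2.listConnected_cons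
    hlinkQ.2.listConnected_cons (fun v => ?_) (fun i j hij => ?_)
    ((touch_spider (hR₀ 0)).mono (List.Subset.refl _) (by simp)) hlinkP.2.touch.symm
    ((touch_spider (hR₀ 1)).mono (List.Subset.refl _) (by simp)) hlinkQ.2.touch.symm
    ⟨p, by simp, q, by simp, h⟩)
  · fin_cases i
    exacts [listConnected_spider hR₀, listConnected_spider (S.link 1),
      listConnected_spider (S.link 2)]
  · have hv := S.occ_le_one v
    simp only [occ, hP, hQ, R, P, count_spider, Fin.sum_univ_three, Matrix.cons_val,
      List.count_append, count_cons_hit, List.count_nil] at hv ⊢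
    omega
  · fin_cases i
    · obtain rfl : j = 2 := by fin_cases j <;> simp_all
      exact touch_spider (hR₀ 2)
    · exact touch_spider (S.link 1 j)
    · exact touch_spider (S.link 2 j)

theorem not_adj_of_same_row (S : K33Subdiv G) (hG : Admissible G) {i j j' : Fin 3} (hj : j ≠ j')
    {p q : V} (hp : p ∈ S.path i j) (hq : q ∈ S.path i j') : ¬ G.Adj p q := by
  obtain ⟨τ, h0, h1⟩ := exists_perm_of_ne hj
  exact (S.permute (Equiv.swap 0 i) τ).not_adj_of_mem_path_zero hG
    (by simpa [permute, h0] using hp) (by simpa [permute, h1] using hq)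

theorem not_adj_of_same_col (S : K33Subdiv G) (hG : Admissible G) {i i' j : Fin 3} (hi : i ≠ i')
    {p q : V} (hp : p ∈ S.path i j) (hq : q ∈ S.path i' j) : ¬ G.Adj p q :=
  S.transpose.not_adj_of_same_row hG hi (by simpa [transpose] using hp)
    (by simpa [transpose] using hq)

/-- If `p` is an interior vertex of the path from `a 0` to `b 0` adjacent to `a 1`, then `p` can
take the place of `b 0`: the edge from `a 1` to `p` replaces the path from `a 1` to `b 0`, and the
path from `a 2` is prolonged beyond `b 0` up to `p`. -/
def shift (S : K33Subdiv G) {A B : List V} {p : V} (hP : S.path 0 0 = A ++ p :: B)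
    (h : G.Adj p (S.a 1)) : K33Subdiv G :=
  have hlink : Link G (S.a 0) A p ∧ Link G p B (S.b 0) := by
    rw [← link_append, ← hP]
    exact S.link 0 0
  ofEntries (p₁₀ := []) (p₂₀ := S.path 2 0 ++ S.b 0 :: B.reverse) hlink.1 (S.link 0 1) (S.link 0 2)
    h.symm (S.link 1 1) (S.link 1 2) (by simp [hlink.2, S.link 2 0]) (S.link 2 1) (S.link 2 2)
    fun v => by
      have hv := S.occ_le_one v
      simp only [occ, hP, List.count_append, List.count_reverse, count_cons_hit,
        List.count_nil] at hv ⊢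
      omega

theorem path_eq_nil_of_adj_a (S : K33Subdiv G) (hG : Admissible G) {i i' j : Fin 3} (hi : i ≠ i')
    {p : V} (hp : p ∈ S.path i j) (h : G.Adj p (S.a i')) : S.path i' j = [] := by
  obtain ⟨σ, h0, h1⟩ := exists_perm_of_ne hi
  let T := S.permute σ (Equiv.swap 0 j)
  have hpT : p ∈ T.path 0 0 := by simpa [T, permute, h0] using hp
  have hT : G.Adj p (T.a 1) := by simpa [T, permute, h1] using h
  obtain ⟨A, B, hP⟩ := List.append_of_mem hpT
  have hnil : T.path 1 0 = [] := eq_nil_of_forall_count_eq_zero fun v => by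
    have hshift := (T.shift hP hT).occ_eq_one hG v
    have hv := T.occ_eq_one hG v
    simp only [occ, hP, shift, ofEntries, Matrix.cons_val, List.count_append, List.count_reverse,
      count_cons_hit, List.count_nil] at hshift hv
    omega
  simpa [T, permute, h1] using hnil

theorem path_eq_nil_of_adj_b (S : K33Subdiv G) (hG : Admissible G) {i j j' : Fin 3} (hj : j ≠ j')
    {p : V} (hp : p ∈ S.path i j) (h : G.Adj p (S.b j')) : S.path i j' = [] :=
  List.reverse_eq_nil_iff.1 <| S.transpose.path_eq_nil_of_adj_a hG hj (i' := j') (j := i) (p := p)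
    (by simpa [transpose] using hp) h

theorem path_col_eq_nil_of_adj (S : K33Subdiv G) (hG : Admissible G) {i i' j j' : Fin 3}
    (hi : i ≠ i') (hj : j ≠ j') {p q : V} (hp : p ∈ S.path i j) (hq : q ∈ S.path i' j')
    (h : G.Adj p q) : S.path i' j = [] := by
  obtain ⟨σ, hσ0, hσ1⟩ := exists_perm_of_ne hi
  obtain ⟨τ, hτ0, hτ1⟩ := exists_perm_of_ne hj
  let T := S.permute σ τ
  obtain ⟨A, B, hP⟩ : ∃ A B, T.path 0 0 = A ++ p :: B :=
    List.append_of_mem (by simpa [T, permute, hσ0, hτ0] using hp)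
  obtain ⟨C, D, hQ⟩ : ∃ C D, T.path 1 1 = C ++ q :: D :=
    List.append_of_mem (by simpa [T, permute, hσ1, hτ1] using hq)
  have hlinkP := T.link 0 0
  have hlinkQ := T.link 1 1
  rw [hP, link_append] at hlinkP
  rw [hQ, link_append] at hlinkQ
  have hrev : ∀ i j, Link G (T.b j) (T.path i j).reverse (T.a i) := fun i j =>
    link_reverse.2 (T.link i j)
  have hnil : T.path 1 0 = [] := eq_nil_of_forall_count_eq_zero fun v => by
    have hre := ofEntries_occ_eq_one hG (a₀ := p) (b₀ := T.a 2) (b₁ := q) (b₂ := T.a 0)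
      (p₀₀ := B ++ T.b 0 :: (T.path 2 0).reverse) (p₀₁ := []) (p₀₂ := A.reverse)
      (p₁₁ := D.reverse) (p₂₁ := (T.path 1 2).reverse ++ T.a 1 :: C)
      (by simp [hlinkP, T.link]) (by simp [h]) (by simp [hlinkP])
      (hrev 2 1) (by simp [hlinkQ]) (hrev 0 1) (hrev 2 2) (by simp [hlinkQ, T.link]) (hrev 0 2)
      (fun v => by
        have hv := T.occ_le_one v
        simp only [occ, hP, hQ, List.count_append, List.count_reverse, count_cons_hit,
          List.count_nil] at hv ⊢
        omega) v
    have hv := T.occ_eq_one hG v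
    simp only [occ, hP, hQ, List.count_append, List.count_reverse, count_cons_hit,
      List.count_nil] at hre hv
    omega
  simpa [T, permute, hσ1, hτ0] using hnil

theorem path_eq_nil_of_adj_of_ne (S : K33Subdiv G) (hG : Admissible G) {i i' j j' k l : Fin 3}
    (hi : i ≠ i') (hj : j ≠ j') (hik : i ≠ k) (hik' : i' ≠ k) (hjl : j ≠ l) (hjl' : j' ≠ l)
    {p q : V} (hp : p ∈ S.path i j) (hq : q ∈ S.path i' j') (h : G.Adj p q) :
    S.path k l = [] := by
  obtain ⟨σ, hσ0, hσ1, hσ2⟩ := exists_perm hi hik hik'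
  obtain ⟨τ, hτ0, hτ1, hτ2⟩ := exists_perm hj hjl hjl'
  let T := S.permute σ τ
  obtain ⟨A, B, hP⟩ : ∃ A B, T.path 0 0 = A ++ p :: B :=
    List.append_of_mem (by simpa [T, permute, hσ0, hτ0] using hp)
  obtain ⟨C, D, hQ⟩ : ∃ C D, T.path 1 1 = C ++ q :: D :=
    List.append_of_mem (by simpa [T, permute, hσ1, hτ1] using hq)
  have hlinkP := T.link 0 0
  have hlinkQ := T.link 1 1
  rw [hP, link_append] at hlinkP
  rw [hQ, link_append] at hlinkQ
  have hnil : T.path 2 2 = [] := eq_nil_of_forall_count_eq_zero fun v => by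
    have hre := ofEntries_occ_eq_one hG (a₀ := p) (a₂ := T.b 1) (b₀ := q) (b₁ := T.a 0)
      (b₂ := T.b 0) (p₀₀ := []) (p₀₁ := A.reverse)
      (p₁₁ := T.path 1 2 ++ T.b 2 :: (T.path 0 2).reverse)
      (p₂₀ := D.reverse) (p₂₁ := (T.path 0 1).reverse)
      (p₂₂ := (T.path 2 1).reverse ++ T.a 2 :: T.path 2 0) (by simp [h]) (by simp [hlinkP])
      hlinkP.2 hlinkQ.1 (by simp [T.link]) (T.link 1 0) (by simp [hlinkQ]) (by simp [T.link])
      (by simp [T.link])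
      (fun v => by
        have hv := T.occ_le_one v
        simp only [occ, hP, hQ, List.count_append, List.count_reverse, count_cons_hit,
          List.count_nil] at hv ⊢
        omega) v
    have hv := T.occ_eq_one hG v
    simp only [occ, hP, hQ, List.count_append, List.count_reverse, count_cons_hit,
      List.count_nil] at hre hv
    omega
  simpa [T, permute, hσ2, hτ2] using hnil

theorem not_adj_two_a (S : K33Subdiv G) (hG : Admissible G) {i i' i'' j : Fin 3} (h12 : i ≠ i')
    (h13 : i ≠ i'') (h23 : i' ≠ i'') {p p' : V} (hp : p ∈ S.path i j) (hp' : p' ∈ S.path i j)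
    (h : G.Adj p (S.a i')) : ¬ G.Adj p' (S.a i'') := by
  intro h'
  obtain ⟨σ, hσ0, hσ1, hσ2⟩ := exists_perm h12 h13 h23
  let T := S.permute σ (Equiv.swap 0 j)
  obtain ⟨A, B, hP⟩ : ∃ A B, T.path 0 0 = A ++ p :: B :=
    List.append_of_mem (by simpa [T, permute, hσ0] using hp)
  have hp'T : p' ∈ A ++ p :: B := hP ▸ (by simpa [T, permute, hσ0] using hp')
  let T' := T.shift hP (by simpa [T, permute, hσ1] using h)
  have hadj : G.Adj p' (T'.a 2) := by simpa [T', shift, ofEntries, T, permute, hσ2] using h'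
  have hpath : T'.path 2 0 = T.path 2 0 ++ T.b 0 :: B.reverse := rfl
  have hnil : T'.path 2 0 ≠ [] := by simp [hpath]
  rcases List.mem_append.1 hp'T with hA | hpB
  · exact hnil (T'.path_eq_nil_of_adj_a hG (i := 0) (by decide) (p := p') hA hadj)
  · rcases List.mem_cons.1 hpB with rfl | hB
    · exact hnil (T'.path_eq_nil_of_adj hG hadj.symm)
    · obtain ⟨C, D, hC⟩ := List.append_of_mem (List.mem_reverse.2 hB)
      have := T'.eq_nil_of_adj_left hG (i := 2) (j := 0) (A := T.path 2 0 ++ T.b 0 :: C) (p := p')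
        (B := D) (by simp [hpath, hC]) hadj.symm
      simp at this

theorem not_adj_two_b (S : K33Subdiv G) (hG : Admissible G) {i j j' j'' : Fin 3} (h12 : j ≠ j')
    (h13 : j ≠ j'') (h23 : j' ≠ j'') {p p' : V} (hp : p ∈ S.path i j) (hp' : p' ∈ S.path i j)
    (h : G.Adj p (S.b j')) : ¬ G.Adj p' (S.b j'') :=
  S.transpose.not_adj_two_a hG h12 h13 h23 (by simpa [transpose] using hp)
    (by simpa [transpose] using hp') h

end K33Subdiv

end Chords

section Model
variable {V W W' : Type*} {G : SimpleGraph V} {H : SimpleGraph W} {H' : SimpleGraph W'}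

/-- Some vertex of `A` is adjacent to some vertex of `B`. -/
def SetTouch (G : SimpleGraph V) (A B : Set V) : Prop := ∃ v ∈ A, ∃ w ∈ B, G.Adj v w

theorem SetTouch.symm {A B : Set V} (h : SetTouch G A B) : SetTouch G B A := by
  obtain ⟨v, hv, w, hw, hvw⟩ := h
  exact ⟨w, hw, v, hv, hvw.symm⟩

theorem SetTouch.mono {A B A' B' : Set V} (h : SetTouch G A B) (hA : A ⊆ A') (hB : B ⊆ B') :
    SetTouch G A' B' := by
  obtain ⟨v, hv, w, hw, hvw⟩ := h
  exact ⟨v, hA hv, w, hB hw, hvw⟩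

theorem setTouch_union_left {A A' B : Set V} :
    SetTouch G (A ∪ A') B ↔ SetTouch G A B ∨ SetTouch G A' B := by
  simp only [SetTouch, Set.mem_union, or_and_right, exists_or]

/-- The branch sets `B` form a model of `H` in `G`, i.e. witness that `H` is a minor of `G`. -/
structure IsModel (H : SimpleGraph W) (G : SimpleGraph V) (B : W → Set V) : Prop where
  connected : ∀ w, (G.induce (B w)).Connected
  disjoint : Pairwise fun w w' => Disjoint (B w) (B w')
  touch : ∀ ⦃w w'⦄, H.Adj w w' → SetTouch G (B w) (B w')

theorem isMinor_iff_exists_isModel : IsMinor H G ↔ ∃ B, IsModel H G B :=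
  ⟨fun ⟨B, _, hc, hd, ht⟩ => ⟨B, hc, hd, ht⟩, fun ⟨B, hB⟩ =>
    ⟨B, fun w => Set.nonempty_coe_sort.1 (hB.connected w).nonempty, hB.connected, hB.disjoint,
      hB.touch⟩⟩

theorem IsModel.comap {B : W → Set V} (hB : IsModel H G B) {f : W' → W}
    (hf : Function.Injective f)
    (ht : ∀ ⦃a b⦄, H'.Adj a b → SetTouch G (B (f a)) (B (f b))) : IsModel H' G (B ∘ f) :=
  ⟨fun w => hB.connected (f w), fun _ _ hne => hB.disjoint (hf.ne hne), ht⟩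

theorem IsModel.split [DecidableEq W] {B : W → Set V} (hB : IsModel H G B) {i : W} {P Q : Set V}
    (hP : (G.induce P).Connected) (hQ : (G.induce Q).Connected) (hPQ : Disjoint P Q)
    (hPi : P ⊆ B i) (hQi : Q ⊆ B i) :
    IsModel ⊥ G fun o : Option W => o.elim Q (Function.update B i P) := by
  have hdisj : ∀ R ⊆ B i, ∀ j ≠ i, Disjoint R (B j) := fun R hR j hj =>
    (hB.disjoint hj.symm).mono_left hR
  refine ⟨?_, ?_, fun _ _ h => h.elim⟩
  · rintro (_ | j)
    · exact hQ
    · obtain rfl | hj := eq_or_ne j i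
      · change (G.induce (Function.update B j P j)).Connected
        rwa [Function.update_self]
      · change (G.induce (Function.update B i P j)).Connected
        rw [Function.update_of_ne hj]
        exact hB.connected j
  · rintro (_ | j) (_ | k) hjk
    · exact absurd rfl hjk
    · obtain rfl | hk := eq_or_ne k i
      · simpa using hPQ.symm
      · simpa [hk] using hdisj Q hQi k hk
    · obtain rfl | hj := eq_or_ne j i
      · simpa using hPQ
      · simpa [hj] using (hdisj Q hQi j hj).symm
    · have hne : j ≠ k := fun h => hjk (h ▸ rfl)
      obtain rfl | hj := eq_or_ne j i
      · simpa [hne.symm] using hdisj P hPi k hne.symm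
      · obtain rfl | hk := eq_or_ne k i
        · simpa [hj] using (hdisj P hPi j hj).symm
        · simpa [hj, hk] using hB.disjoint hne

theorem connected_induce_singleton (v : V) : (G.induce {v}).Connected :=
  .mk fun a b => by rw [Subsingleton.elim a b]

theorem connected_induce_union_of_setTouch {A B : Set V} (hA : (G.induce A).Connected)
    (hB : (G.induce B).Connected) (h : SetTouch G A B) : (G.induce (A ∪ B)).Connected := by
  obtain ⟨v, hv, w, hw, hvw⟩ := h
  exact connected_induce_union hA.preconnected hB.preconnected hv hw hvw

theorem connected_induce_diff {B Y : Set V} (hB : (G.induce B).Connected) {u : V} (hu : u ∈ B)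
    (huY : u ∉ Y) (hY : ∀ w ∈ B, w ≠ u → ∀ w' ∈ Y, G.Adj w w' → w ∈ Y) :
    (G.induce (B \ Y)).Connected := by
  have reachable_of_walk : ∀ (x y : B), (G.induce B).Walk x y → y.1 = u → ∀ hx : x.1 ∉ Y,
      (G.induce (B \ Y)).Reachable ⟨u, hu, huY⟩ ⟨x.1, x.2, hx⟩ := by
    intro x y p hy
    induction p with
    | nil =>
      subst hy
      exact fun _ => .rfl
    | @cons x x' y h _ ih =>
      intro hx
      by_cases hxu : x.1 = u
      · subst hxu
        exact .rfl
      · have hx' : x'.1 ∉ Y := fun hx' => hx (hY x.1 x.2 hxu x'.1 hx' h)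
        exact (ih hy hx').trans (Adj.reachable (show G.Adj x'.1 x.1 from h.symm))
  rw [connected_iff_exists_forall_reachable]
  refine ⟨⟨u, hu, huY⟩, fun ⟨x, hx, hxY⟩ => ?_⟩
  obtain ⟨p⟩ := hB.preconnected ⟨x, hx⟩ ⟨u, hu⟩
  exact reachable_of_walk _ _ p rfl hxY

-- `Y` is the component of `v` in `B \ {u}`.
theorem exists_connected_split {B : Set V} (hB : (G.induce B).Connected) {u v : V} (hu : u ∈ B)
    (hv : v ∈ B) (huv : u ≠ v) : ∃ Y ⊆ B, u ∉ Y ∧ v ∈ Y ∧ (G.induce Y).Connected ∧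
      (G.induce (B \ Y)).Connected ∧ ∃ y ∈ Y, G.Adj u y := by
  let F : Set (Set V) := {C | v ∈ C ∧ C ⊆ B \ {u} ∧ (G.induce C).Connected}
  have hvF : {v} ∈ F := ⟨rfl, by simp [hv, huv.symm], connected_induce_singleton v⟩
  have hYB : ⋃₀ F ⊆ B \ {u} := Set.sUnion_subset fun C hC => hC.2.1
  have huY : u ∉ ⋃₀ F := fun h => (hYB h).2 rfl
  have hvY : v ∈ ⋃₀ F := ⟨{v}, hvF, rfl⟩
  have hclosed : ∀ w ∈ B, w ≠ u → ∀ w' ∈ ⋃₀ F, G.Adj w w' → w ∈ ⋃₀ F := by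
    rintro w hw hwu w' ⟨C, hC, hw'⟩ hadj
    refine ⟨C ∪ {w}, ⟨Or.inl hC.1, Set.union_subset hC.2.1 (by simp [hw, hwu]), ?_⟩, Or.inr rfl⟩
    exact connected_induce_union_of_setTouch hC.2.2 (connected_induce_singleton w)
      ⟨w', hw', w, rfl, hadj.symm⟩
  refine ⟨⋃₀ F, hYB.trans Set.sdiff_subset, huY, hvY, ?_,
    connected_induce_diff hB hu huY hclosed, ?_⟩
  · exact induce_sUnion_connected_of_pairwise_not_disjoint ⟨_, hvF⟩
      (fun hC hD => ⟨v, hC.1, hD.1⟩) (fun hC => hC.2.2)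
  · obtain ⟨p⟩ := hB.preconnected ⟨u, hu⟩ ⟨v, hv⟩
    obtain ⟨⟨⟨a, b⟩, hab⟩, -, ha, hb⟩ :=
      p.exists_boundary_dart {x | x.1 ∉ ⋃₀ F} huY fun h => h hvY
    have hau : a.1 = u := by
      by_contra hau
      exact ha (hclosed a.1 a.2 hau b.1 (not_not.1 hb) hab)
    exact ⟨b.1, not_not.1 hb, hau ▸ hab⟩

theorem IsModel.isMinor_K33 {B : W → Set V} (hB : IsModel H G B) {s t : Fin 3 → W}
    (hs : Function.Injective s) (ht : Function.Injective t) (hst : ∀ i j, s i ≠ t j)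
    (h : ∀ i j, SetTouch G (B (s i)) (B (t j))) : IsMinor K33 G := by
  refine isMinor_iff_exists_isModel.2 ⟨_, hB.comap (hs.sumElim ht hst) ?_⟩
  rintro (i | i) (j | j) hij
  · simp [K33] at hij
  · exact h i j
  · exact (h j i).symm
  · simp [K33] at hij

end Model

section K5Model
variable {V : Type*} {G : SimpleGraph V} {B : Fin 5 → Set V}

theorem IsModel.setTouch_of_ne (hB : IsModel K5 G B) {i j : Fin 5} (hij : i ≠ j) :
    SetTouch G (B i) (B j) :=
  hB.touch (show K5.Adj i j from hij)

theorem isMinor_K5plus_of_isModel {C : Option (Fin 5) → Set V} (hC : IsModel ⊥ G C)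
    (i : Fin 5) (hcore : ∀ j k, j ≠ k → SetTouch G (C (some j)) (C (some k)))
    (hpendant : SetTouch G (C none) (C (some i))) : IsMinor K5plus G := by
  refine isMinor_iff_exists_isModel.2
    ⟨_, hC.comap (f := Option.map (Equiv.swap 0 i)) (Option.map_injective (Equiv.injective _)) ?_⟩
  rintro (_ | j) (_ | k) hjk <;>
    simp only [K5plus, fromRel_adj, ne_eq, Option.some.injEq, or_false, false_or, and_false]
      at hjk
  · simpa [hjk.2] using hpendant
  · simpa [hjk.2] using hpendant.symm
  · exact hcore _ _ (by simpa using hjk.1)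

theorem IsModel.exists_mem (hG : Admissible G) (hB : IsModel K5 G B) (t : V) : ∃ i, t ∈ B i := by
  by_contra! ht
  obtain ⟨⟨x, hx⟩⟩ := (hB.connected 0).nonempty
  obtain ⟨p⟩ := hG.connected.preconnected x t
  obtain ⟨⟨⟨v, y⟩, hvy⟩, -, ⟨i, hi⟩, hy⟩ :=
    p.exists_boundary_dart {v | ∃ i, v ∈ B i} ⟨0, hx⟩ fun ⟨i, hi⟩ => ht i hi
  have hy : ∀ i, y ∉ B i := not_exists.1 hy
  have hC : IsModel ⊥ G fun o : Option (Fin 5) => o.elim {y} B := by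
    refine ⟨?_, ?_, fun _ _ h => h.elim⟩
    · rintro (_ | j)
      exacts [connected_induce_singleton y, hB.connected j]
    · rintro (_ | j) (_ | k) hjk
      · exact absurd rfl hjk
      · exact Set.disjoint_singleton_left.2 (hy k)
      · exact Set.disjoint_singleton_right.2 (hy j)
      · exact hB.disjoint fun h => hjk (h ▸ rfl)
  exact hG.not_K5plus (isMinor_K5plus_of_isModel hC i (fun j k => hB.setTouch_of_ne)
    ⟨y, rfl, v, hi, hvy.symm⟩)

theorem IsModel.split_not_forall (hG : Admissible G) (hB : IsModel K5 G B) {i : Fin 5}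
    {P Q : Set V} (hP : (G.induce P).Connected) (hQ : (G.induce Q).Connected)
    (hPQ : Disjoint P Q) (hPi : P ⊆ B i) (hQi : Q ⊆ B i) (htouch : SetTouch G P Q) :
    ∃ j ≠ i, ¬ SetTouch G P (B j) := by
  by_contra! hall
  refine hG.not_K5plus (isMinor_K5plus_of_isModel (hB.split hP hQ hPQ hPi hQi) i ?_
    (by simpa using htouch.symm))
  intro j k hjk
  obtain rfl | hj := eq_or_ne j i
  · simpa [hjk.symm] using hall k hjk.symm
  · obtain rfl | hk := eq_or_ne k i
    · simpa [hj] using (hall j hj).symm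
    · simpa [hj, hk] using hB.setTouch_of_ne hjk

theorem IsModel.split_not_two_two (hK : ¬ IsMinor K33 G) (hB : IsModel K5 G B) {i : Fin 5}
    {P Q : Set V} (hP : (G.induce P).Connected) (hQ : (G.induce Q).Connected)
    (hPQ : Disjoint P Q) (hPi : P ⊆ B i) (hQi : Q ⊆ B i) (htouch : SetTouch G P Q)
    {k l m n : Fin 5} (hnd : [i, k, l, m, n].Nodup) (hk : SetTouch G P (B k))
    (hl : SetTouch G P (B l)) (hm : SetTouch G Q (B m)) (hn : SetTouch G Q (B n)) : False := by
  simp only [List.nodup_cons, List.mem_cons, List.not_mem_nil, or_false, not_or,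
    not_false_eq_true, List.nodup_nil, and_true, ← ne_eq] at hnd
  obtain ⟨⟨hik, hil, him, hin⟩, ⟨hkl, hkm, hkn⟩, ⟨hlm, hln⟩, hmn⟩ := hnd
  refine hK ((hB.split hP hQ hPQ hPi hQi).isMinor_K33
    (s := ![some i, some m, some n]) (t := ![none, some k, some l]) ?_ ?_ ?_ ?_)
  · intro a b
    fin_cases a <;> fin_cases b <;> simp [him, hin, hmn, him.symm, hin.symm, hmn.symm]
  · intro a b
    fin_cases a <;> fin_cases b <;> simp [hkl, hkl.symm]
  · intro a b
    fin_cases a <;> fin_cases b <;>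
      simp [hik, hil, hkm.symm, hkn.symm, hlm.symm, hln.symm]
  · intro a b
    fin_cases a <;> fin_cases b <;>
      simp [htouch, hk, hl, hm.symm, hn.symm, hik.symm, hil.symm, him.symm, hin.symm,
        hB.setTouch_of_ne, hkm.symm, hkn.symm, hlm.symm, hln.symm]

theorem exists_nodup_five : ∀ {i p q : Fin 5}, i ≠ p → i ≠ q → p ≠ q → ∃ m n,
    [i, p, m, q, n].Nodup ∧ [i, p, n, q, m].Nodup ∧
      ∀ j, j = i ∨ j = p ∨ j = q ∨ j = m ∨ j = n := by
  decide

theorem IsModel.split_touch (hG : Admissible G) (hK : ¬ IsMinor K33 G) (hB : IsModel K5 G B)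
    {i : Fin 5} {P Q : Set V} (hP : (G.induce P).Connected) (hQ : (G.induce Q).Connected)
    (hPQ : Disjoint P Q) (hi : P ∪ Q = B i) (htouch : SetTouch G P Q) :
    (∃ k ≠ i, ∀ j ≠ i, (SetTouch G P (B j) ↔ j = k) ∧ (SetTouch G Q (B j) ↔ j ≠ k)) ∨
      ∃ k ≠ i, ∀ j ≠ i, (SetTouch G Q (B j) ↔ j = k) ∧ (SetTouch G P (B j) ↔ j ≠ k) := by
  classical
  have hPi : P ⊆ B i := hi ▸ Set.subset_union_left
  have hQi : Q ⊆ B i := hi ▸ Set.subset_union_right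
  have hor : ∀ j ≠ i, SetTouch G P (B j) ∨ SetTouch G Q (B j) := fun j hj =>
    setTouch_union_left.1 (hi ▸ hB.setTouch_of_ne hj.symm)
  obtain ⟨p, hpi, hp⟩ := hB.split_not_forall hG hQ hP hPQ.symm hQi hPi htouch.symm
  obtain ⟨q, hqi, hq⟩ := hB.split_not_forall hG hP hQ hPQ hPi hQi htouch
  have hpP := (hor p hpi).resolve_right hp
  have hqQ := (hor q hqi).resolve_left hq
  have hpq : p ≠ q := fun h => hq (h ▸ hpP)
  obtain ⟨m, n, hnd, hnd', hcover⟩ := exists_nodup_five hpi.symm hqi.symm hpq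
  have hmn : ¬ (SetTouch G P (B m) ∧ SetTouch G Q (B n)) := fun h =>
    hB.split_not_two_two hK hP hQ hPQ hPi hQi htouch hnd hpP h.1 hqQ h.2
  have hnm : ¬ (SetTouch G P (B n) ∧ SetTouch G Q (B m)) := fun h =>
    hB.split_not_two_two hK hP hQ hPQ hPi hQi htouch hnd' hpP h.1 hqQ h.2
  simp only [List.nodup_cons, List.mem_cons, List.not_mem_nil, or_false, not_or,
    not_false_eq_true, List.nodup_nil, and_true, ← ne_eq] at hnd
  obtain ⟨⟨-, him, -, hin⟩, ⟨hpm, -, hpn⟩, ⟨hmq, -⟩, hqn⟩ := hnd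
  by_cases hPm : SetTouch G P (B m)
  · have hQn := fun h => hmn ⟨hPm, h⟩
    have hPn := (hor n hin.symm).resolve_right hQn
    have hQm := fun h => hnm ⟨hPn, h⟩
    refine Or.inr ⟨q, hqi, fun j hj => ?_⟩
    rcases hcover j with rfl | rfl | rfl | rfl | rfl
    · exact absurd rfl hj
    all_goals simp_all [hqn.symm]
  · have hQm := (hor m him.symm).resolve_left hPm
    have hPn := fun h => hnm ⟨h, hQm⟩
    have hQn := (hor n hin.symm).resolve_left hPn
    refine Or.inl ⟨p, hpi, fun j hj => ?_⟩
    rcases hcover j with rfl | rfl | rfl | rfl | rfl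
    · exact absurd rfl hj
    all_goals simp_all [hpq.symm, hpm.symm, hpn.symm]

theorem IsModel.eq_of_adj (hG : Admissible G) (hK : ¬ IsMinor K33 G) (hB : IsModel K5 G B)
    {i j : Fin 5} (hij : i ≠ j) {u v w : V} (hu : u ∈ B i) (hv : v ∈ B i) (hw : w ∈ B j)
    (huw : G.Adj u w) (hvw : G.Adj v w) : u = v := by
  by_contra huv
  obtain ⟨Y, hYB, huY, hvY, hY, hBY, y, hyY, huy⟩ :=
    exists_connected_split (hB.connected i) hu hv huv
  have hPj : SetTouch G Y (B j) := ⟨v, hvY, w, hw, hvw⟩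
  have hQj : SetTouch G (B i \ Y) (B j) := ⟨u, ⟨hu, huY⟩, w, hw, huw⟩
  obtain ⟨k, -, h⟩ | ⟨k, -, h⟩ := hB.split_touch hG hK hY hBY Set.disjoint_sdiff_right
    (Set.union_sdiff_cancel hYB) ⟨y, hyY, u, ⟨hu, huY⟩, huy.symm⟩
  · exact (h j hij.symm).2.1 hQj ((h j hij.symm).1.1 hPj)
  · exact (h j hij.symm).2.1 hPj ((h j hij.symm).1.1 hQj)

theorem IsModel.update_update (hB : IsModel K5 G B) {i k : Fin 5} (hik : i ≠ k) {X Z : Set V}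
    (hX : (G.induce X).Connected) (hZ : (G.induce Z).Connected) (hXZ : Disjoint X Z)
    (hXB : X ⊆ B i ∪ B k) (hZB : Z ⊆ B i ∪ B k) (htouch : SetTouch G X Z)
    (hXj : ∀ j, j ≠ i → j ≠ k → SetTouch G X (B j))
    (hZj : ∀ j, j ≠ i → j ≠ k → SetTouch G Z (B j)) :
    IsModel K5 G (Function.update (Function.update B i X) k Z) := by
  set C := Function.update (Function.update B i X) k Z with hC
  have hCi : C i = X := by simp [hC, hik]
  have hCk : C k = Z := by simp [hC]
  have hCj : ∀ j, j ≠ i → j ≠ k → C j = B j := fun j hji hjk => by simp [hC, hji, hjk]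
  have hdisj : ∀ Y ⊆ B i ∪ B k, ∀ j, j ≠ i → j ≠ k → Disjoint Y (B j) := fun Y hY j hji hjk =>
    ((hB.disjoint hji.symm).union_left (hB.disjoint hjk.symm)).mono_left hY
  have hsymm : ∀ {a b}, Disjoint (C a) (C b) ∧ SetTouch G (C a) (C b) →
      Disjoint (C b) (C a) ∧ SetTouch G (C b) (C a) := fun h => ⟨h.1.symm, h.2.symm⟩
  have key : Pairwise fun a b => Disjoint (C a) (C b) ∧ SetTouch G (C a) (C b) := by
    have hi : ∀ j, j ≠ i → Disjoint (C i) (C j) ∧ SetTouch G (C i) (C j) := by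
      intro j hji
      obtain rfl | hjk := eq_or_ne j k
      · rw [hCi, hCk]
        exact ⟨hXZ, htouch⟩
      · rw [hCi, hCj j hji hjk]
        exact ⟨hdisj X hXB j hji hjk, hXj j hji hjk⟩
    have hk : ∀ j, j ≠ i → j ≠ k → Disjoint (C k) (C j) ∧ SetTouch G (C k) (C j) := by
      intro j hji hjk
      rw [hCk, hCj j hji hjk]
      exact ⟨hdisj Z hZB j hji hjk, hZj j hji hjk⟩
    intro a b hab
    by_cases ha : a = i
    · exact ha ▸ hi b (ha ▸ hab.symm)
    by_cases hb : b = i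
    · exact hsymm (hb ▸ hi a ha)
    by_cases hak : a = k
    · exact hak ▸ hk b hb (hak ▸ hab.symm)
    by_cases hbk : b = k
    · exact hsymm (hbk ▸ hk a ha hak)
    rw [hCj a ha hak, hCj b hb hbk]
    exact ⟨hB.disjoint hab, hB.setTouch_of_ne hab⟩
  refine ⟨?_, fun a b hab => (key hab).1, fun a b hab => (key hab.ne).2⟩
  refine (Function.forall_update_iff _ fun _ Y => (G.induce Y).Connected).2 ⟨hZ, fun j _ => ?_⟩
  exact (Function.forall_update_iff _ fun _ Y => (G.induce Y).Connected).2
    ⟨hX, fun j _ => hB.connected j⟩ j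

theorem exists_connected_union_diff {P D : Set V} (hP : (G.induce P).Connected)
    (hD : (G.induce D).Connected) (hPD : Disjoint P D) (htouch : SetTouch G P D) {y : V}
    (hy : y ∈ P) :
    ∃ Z, D ⊆ Z ∧ Z ⊆ P ∪ D ∧ y ∉ Z ∧ (G.induce Z).Connected ∧ ∃ z ∈ Z, G.Adj y z := by
  obtain ⟨w, hw, d, hd, hwd⟩ := htouch
  obtain rfl | hyw := eq_or_ne y w
  · exact ⟨D, subset_rfl, Set.subset_union_right, Set.disjoint_left.1 hPD hy, hD, d, hd, hwd⟩
  · obtain ⟨Y, hYP, hyY, hwY, hY, -, z, hz, hyz⟩ := exists_connected_split hP hy hw hyw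
    refine ⟨Y ∪ D, Set.subset_union_right, Set.union_subset_union_left D hYP, ?_,
      connected_induce_union_of_setTouch hY hD ⟨w, hwY, d, hd, hwd⟩, z, Or.inl hz, hyz⟩
    exact not_or.2 ⟨hyY, Set.disjoint_left.1 hPD hy⟩

theorem IsModel.false_of_split (hG : Admissible G) (hK : ¬ IsMinor K33 G) (hB : IsModel K5 G B)
    {i k : Fin 5} (hki : k ≠ i) {P Q : Set V} (hP : (G.induce P).Connected)
    (hQ : (G.induce Q).Connected) (hPQ : Disjoint P Q) (hi : P ∪ Q = B i)
    (htouch : SetTouch G P Q)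
    (hPj : ∀ j ≠ i, (SetTouch G P (B j) ↔ j = k)) (hQj : ∀ j ≠ i, j ≠ k → SetTouch G Q (B j)) :
    False := by
  have hPi : P ⊆ B i := hi ▸ Set.subset_union_left
  have hQi : Q ⊆ B i := hi ▸ Set.subset_union_right
  have hik : Disjoint (B i) (B k) := hB.disjoint hki.symm
  obtain ⟨y, hyP, a, haQ, hya⟩ := htouch
  have hyQ : y ∉ Q := Set.disjoint_left.1 hPQ hyP
  obtain ⟨Z, hkZ, hZP, hyZ, hZ, b, hbZ, hyb⟩ := exists_connected_union_diff hP (hB.connected k)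
    (hik.mono_left hPi) ((hPj k hki).2 rfl) hyP
  have hQZ : Disjoint Q Z :=
    (hPQ.symm.union_right (hik.mono_left hQi)).mono_right hZP
  have hZB : Z ⊆ B i ∪ B k := hZP.trans (Set.union_subset_union_left _ hPi)
  have hQB : Q ⊆ B i ∪ B k := hQi.trans Set.subset_union_left
  have hyB : {y} ⊆ B i ∪ B k := Set.singleton_subset_iff.2 (Or.inl (hPi hyP))
  have hZj : ∀ j, j ≠ i → j ≠ k → SetTouch G Z (B j) := fun j _ hjk =>
    (hB.setTouch_of_ne hjk.symm).mono hkZ subset_rfl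
  -- `y` can be moved to either side, so both ways of rearranging `B i` and `B k` give models.
  have hM₁ := hB.update_update hki.symm (X := Q ∪ {y})
    (connected_induce_union_of_setTouch hQ (connected_induce_singleton y)
      ⟨a, haQ, y, rfl, hya.symm⟩)
    hZ (hQZ.union_left (Set.disjoint_singleton_left.2 hyZ)) (Set.union_subset hQB hyB) hZB
    ⟨y, Or.inr rfl, b, hbZ, hyb⟩
    (fun j hji hjk => (hQj j hji hjk).mono Set.subset_union_left subset_rfl) hZj
  have hM₂ := hB.update_update hki.symm (Z := Z ∪ {y}) hQ
    (connected_induce_union_of_setTouch hZ (connected_induce_singleton y)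
      ⟨b, hbZ, y, rfl, hyb.symm⟩)
    (hQZ.union_right (Set.disjoint_singleton_right.2 hyQ)) hQB (Set.union_subset hZB hyB)
    ⟨a, haQ, y, Or.inr rfl, hya.symm⟩ hQj
    (fun j hji hjk => (hZj j hji hjk).mono Set.subset_union_left subset_rfl)
  obtain ⟨t, hyt, hta, htb⟩ := hG.exists_adj_ne_ne y a b
  obtain ⟨l, hl⟩ := hM₁.exists_mem hG t
  by_cases hlk : l = k
  · have htZ : t ∈ Z := by simpa [hlk] using hl
    exact htb (hM₁.eq_of_adj hG hK hki (by simpa using htZ) (by simpa using hbZ)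
      (by simp [hki.symm]) hyt.symm hyb.symm)
  by_cases hli : l = i
  · have htQ : t ∈ Q := by simpa [hli, hki.symm, hyt.ne'] using hl
    exact hta (hM₂.eq_of_adj hG hK hki.symm (by simpa [hki.symm] using htQ)
      (by simpa [hki.symm] using haQ) (by simp) hyt.symm hya.symm)
  · exact hlk ((hPj l hli).1 ⟨y, hyP, t, by simpa [hli, hlk] using hl, hyt⟩)

theorem IsModel.subsingleton (hG : Admissible G) (hK : ¬ IsMinor K33 G) (hB : IsModel K5 G B)
    (i : Fin 5) : (B i).Subsingleton := by
  intro u hu v hv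
  by_contra huv
  obtain ⟨Y, hYB, huY, -, hY, hBY, y, hyY, huy⟩ :=
    exists_connected_split (hB.connected i) hu hv huv
  have hYY : Disjoint Y (B i \ Y) := Set.disjoint_sdiff_right
  have hunion : Y ∪ B i \ Y = B i := Set.union_sdiff_cancel hYB
  have htouch : SetTouch G Y (B i \ Y) := ⟨y, hyY, u, ⟨hu, huY⟩, huy.symm⟩
  obtain ⟨k, hki, h⟩ | ⟨k, hki, h⟩ := hB.split_touch hG hK hY hBY hYY hunion htouch
  · exact hB.false_of_split hG hK hki hY hBY hYY hunion htouch (fun j hj => (h j hj).1)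
      fun j hj => (h j hj).2.2
  · exact hB.false_of_split hG hK hki hBY hY hYY.symm (Set.union_comm _ _ ▸ hunion) htouch.symm
      (fun j hj => (h j hj).1) fun j hj => (h j hj).2.2

theorem nonempty_iso_K5_of_isMinor_K5 (hG : Admissible G) (hK : ¬ IsMinor K33 G)
    (h5 : IsMinor K5 G) : Nonempty (G ≃g K5) := by
  obtain ⟨B, hB⟩ := isMinor_iff_exists_isModel.1 h5
  choose f hf using fun i => Set.nonempty_coe_sort.1 (hB.connected i).nonempty
  have hmem : ∀ {i v}, v ∈ B i → v = f i := fun hv => hB.subsingleton hG hK _ hv (hf _)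
  have hinj : Function.Injective f := fun i j hij => by
    by_contra hne
    exact Set.disjoint_left.1 (hB.disjoint hne) (hf i) (hij ▸ hf j)
  have hsurj : Function.Surjective f := fun v =>
    (hB.exists_mem hG v).imp fun _ hv => (hmem hv).symm
  have hadj : ∀ i j, i ≠ j → G.Adj (f i) (f j) := fun i j hij => by
    obtain ⟨v, hv, w, hw, hvw⟩ := hB.setTouch_of_ne hij
    rwa [← hmem hv, ← hmem hw]
  refine ⟨RelIso.symm ⟨Equiv.ofBijective f ⟨hinj, hsurj⟩, ?_⟩⟩
  exact fun {i j} => ⟨fun h hij => h.ne (congrArg f hij), hadj i j⟩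

theorem nonempty_iso_doubleWheel_three : Nonempty (K5 ≃g doubleWheel 3) := by
  have hadj : ∀ u v, (doubleWheel 3).Adj u v ↔ u ≠ v := by
    simp only [doubleWheel, fromRel_adj]
    rintro (u | u) (v | v) <;> fin_cases u <;> fin_cases v <;> simp
  exact ⟨⟨(finSumFinEquiv (m := 3) (n := 2)).symm, by simp [hadj, K5]⟩⟩

end K5Model

section HamiltonianCycle
variable {V : Type*} {G : SimpleGraph V} {N : ℕ} {H : ℤ → V}

/-- A cycle of length `N`, unrolled to an `N`-periodic map from the integers, so that arcs are
indexed by intervals of integers and no cyclic order is needed. -/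
structure CycleSeq (G : SimpleGraph V) (N : ℕ) (H : ℤ → V) : Prop where
  pos : 0 < N
  inj : ∀ i j, H i = H j ↔ (N : ℤ) ∣ i - j
  adj : ∀ i, G.Adj (H i) (H (i + 1))

/-- A Hamiltonian cycle, unrolled as in `CycleSeq`. -/
structure HamCycle (G : SimpleGraph V) (N : ℕ) (H : ℤ → V) : Prop extends CycleSeq G N H where
  surj : ∀ v, ∃ i, H i = v

/-- The list of vertices `H k` with `i < k < j`. -/
def arc (H : ℤ → V) (i j : ℤ) : List V :=
  (List.range (j - i - 1).toNat).map fun k : ℕ => H (i + 1 + (k : ℤ))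

theorem mem_arc {i j : ℤ} {v : V} : v ∈ arc H i j ↔ ∃ k, i < k ∧ k < j ∧ H k = v := by
  simp only [arc, List.mem_map, List.mem_range]
  constructor
  · rintro ⟨k, hk, rfl⟩
    exact ⟨i + 1 + k, by omega, by omega, rfl⟩
  · rintro ⟨k, hik, hkj, rfl⟩
    exact ⟨(k - i - 1).toNat, by omega, by congr 1; omega⟩

theorem arc_eq_append {i k j : ℤ} (hik : i < k) (hkj : k < j) :
    arc H i j = arc H i k ++ H k :: arc H k j := by
  have hlen : (j - i - 1).toNat = (k - i - 1).toNat + ((j - k - 1).toNat + 1) := by omega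
  unfold arc
  rw [hlen, List.range_add, List.map_append, List.range_succ_eq_map]
  simp only [List.map_cons, List.map_map]
  congr 2
  · congr 1
    push_cast
    omega
  · refine List.map_congr_left fun a _ => ?_
    simp only [Function.comp]
    congr 1
    push_cast
    omega

theorem arc_add_one {i : ℤ} : arc H i (i + 1) = [] := by simp [arc]

theorem eq_add_one_of_arc_eq_nil {i j : ℤ} (hij : i < j) (h : arc H i j = []) : j = i + 1 := by
  simp only [arc, List.map_eq_nil_iff, List.range_eq_nil] at h
  omega

namespace CycleSeq

theorem apply_add (h : CycleSeq G N H) (i : ℤ) : H (i + N) = H i := (h.inj _ _).2 (by simp)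

theorem apply_sub (h : CycleSeq G N H) (i : ℤ) : H (i - N) = H i := (h.inj _ _).2 (by simp)

theorem ne (h : CycleSeq G N H) {i j : ℤ} (hij : i < j) (hj : j < i + N) : H i ≠ H j := by
  rw [Ne, h.inj, dvd_sub_comm]
  exact fun hd => absurd (Int.le_of_dvd (by omega) hd) (by omega)

theorem link_arc (h : CycleSeq G N H) {i j : ℤ} (hij : i < j) :
    Link G (H i) (arc H i j) (H j) := by
  induction j, (show i + 1 ≤ j from hij) using Int.leInduction with
  | base => simpa [arc_add_one] using h.adj i
  | succ j hj ih =>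
    rw [arc_eq_append (k := j) (by omega) (by omega), arc_add_one, link_append]
    exact ⟨ih hj, h.adj j⟩

theorem count_arc_le_one [DecidableEq V] (h : CycleSeq G N H) (i : ℤ) (v : V) :
    (arc H i (i + N)).count v + hit v (H i) ≤ 1 := by
  rw [← count_cons_hit]
  refine List.nodup_iff_count_le_one.1 (List.nodup_cons.2 ⟨?_, ?_⟩) v
  · rw [mem_arc]
    rintro ⟨k, hik, hk, hki⟩
    exact h.ne hik hk hki.symm
  · refine List.Nodup.map_on (fun x hx y hy hxy => ?_) List.nodup_range
    simp only [List.mem_range] at hx hy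
    by_contra hne
    rcases Nat.lt_or_gt_of_ne hne with hlt | hlt
    · exact h.ne (by omega) (by omega) hxy
    · exact h.ne (by omega) (by omega) hxy.symm

theorem reverse (h : CycleSeq G N H) : CycleSeq G N (fun i => H (-i)) where
  pos := h.pos
  inj i j := by rw [h.inj, neg_sub_neg, dvd_sub_comm]
  adj i := by simpa using (h.adj (-(i + 1))).symm

theorem touch_cons_arc (h : CycleSeq G N H) {i j : ℤ} (hij : i < j) (k : ℤ) :
    Touch G (H i :: arc H i j) (H j :: arc H j k) :=
  (h.link_arc hij).touch.mono (List.Subset.refl _) (by simp)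

theorem touch_cons_arc_add (h : CycleSeq G N H) {i j : ℤ} (hj : j < i + N) (k : ℤ) :
    Touch G (H j :: arc H j (i + N)) (H i :: arc H i k) :=
  (h.link_arc hj).touch.mono (List.Subset.refl _) (by simp [h.apply_add])

theorem exists_apply_eq (h : CycleSeq G N H) (u i : ℤ) :
    ∃ t, u ≤ t ∧ t < u + N ∧ H t = H i := by
  have hN : (0 : ℤ) < N := by exact_mod_cast h.pos
  have hlt := Int.emod_lt_of_pos (i - u) hN
  refine ⟨u + (i - u) % N, by have := Int.emod_nonneg (i - u) hN.ne'; omega, by omega, ?_⟩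
  rw [h.inj, Int.emod_def]
  exact ⟨-((i - u) / N), by ring⟩

theorem injective_mul (h : CycleSeq G N H) {a : ℤ} (ha : IsCoprime (N : ℤ) a) :
    Function.Injective fun k : Fin N => H (k * a) := by
  intro i j e
  have hdvd := (h.inj _ _).1 e
  rw [← sub_mul] at hdvd
  exact Fin.ext (Nat.ModEq.eq_of_lt_of_lt ((Nat.modEq_iff_dvd).2 (dvd_sub_comm.1
    (ha.dvd_of_dvd_mul_right hdvd))) i.2 j.2)

theorem injective (h : CycleSeq G N H) : Function.Injective fun k : Fin N => H k := by
  simpa using h.injective_mul isCoprime_one_right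

theorem exists_fin_apply_eq (h : CycleSeq G N H) (i : ℤ) : ∃ k : Fin N, H k = H i := by
  obtain ⟨t, ht, htN, hti⟩ := h.exists_apply_eq 0 i
  exact ⟨⟨t.toNat, by omega⟩, by rw [← hti, Int.toNat_of_nonneg ht]⟩

end CycleSeq

namespace HamCycle

theorem reverse (h : HamCycle G N H) : HamCycle G N (fun i => H (-i)) where
  toCycleSeq := h.toCycleSeq.reverse
  surj v := by
    obtain ⟨i, rfl⟩ := h.surj v
    exact ⟨-i, by simp⟩

theorem exists_apply_eq (h : HamCycle G N H) (u : ℤ) (v : V) :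
    ∃ t, u ≤ t ∧ t < u + N ∧ H t = v := by
  obtain ⟨i, rfl⟩ := h.surj v
  exact h.toCycleSeq.exists_apply_eq u i

end HamCycle

/-- Three pairwise crossing chords `r₀r₃`, `r₁r₄`, `r₂r₅` of the cycle. -/
structure CrossingTriple (G : SimpleGraph V) (N : ℕ) (H : ℤ → V) (r₀ r₁ r₂ r₃ r₄ r₅ : ℤ) :
    Prop where
  lt : r₀ < r₁ ∧ r₁ < r₂ ∧ r₂ < r₃ ∧ r₃ < r₄ ∧ r₄ < r₅ ∧ r₅ < r₀ + N
  adj₀ : G.Adj (H r₀) (H r₃)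
  adj₁ : G.Adj (H r₁) (H r₄)
  adj₂ : G.Adj (H r₂) (H r₅)

namespace CrossingTriple
variable {r₀ r₁ r₂ r₃ r₄ r₅ : ℤ}

/-- The subdivision of `K₃,₃` formed by the cycle and the three chords. -/
def k33Subdiv [DecidableEq V] (T : CrossingTriple G N H r₀ r₁ r₂ r₃ r₄ r₅)
    (h : HamCycle G N H) : K33Subdiv G :=
  have lt := T.lt
  K33Subdiv.ofEntries (p₀₀ := arc H r₀ r₁) (p₀₁ := []) (p₀₂ := (arc H r₅ (r₀ + N)).reverse)
    (p₁₀ := (arc H r₁ r₂).reverse) (p₁₁ := arc H r₂ r₃) (p₁₂ := [])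
    (p₂₀ := []) (p₂₁ := (arc H r₃ r₄).reverse) (p₂₂ := arc H r₄ r₅)
    (h.link_arc lt.1) T.adj₀ (link_reverse.2 (h.apply_add r₀ ▸ h.link_arc (by omega)))
    (link_reverse.2 (h.link_arc (by omega))) (h.link_arc (by omega)) T.adj₂
    T.adj₁.symm (link_reverse.2 (h.link_arc (by omega))) (h.link_arc (by omega)) (by
      intro v
      have := h.count_arc_le_one r₀ v
      rw [arc_eq_append (k := r₁) (by omega) (by omega),
        arc_eq_append (i := r₁) (k := r₂) (by omega) (by omega),
        arc_eq_append (i := r₂) (k := r₃) (by omega) (by omega),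
        arc_eq_append (i := r₃) (k := r₄) (by omega) (by omega),
        arc_eq_append (i := r₄) (k := r₅) (by omega) (by omega)] at this
      simp only [List.count_append, List.count_reverse, count_cons_hit, List.count_nil] at this ⊢
      omega)

variable (T : CrossingTriple G N H r₀ r₁ r₂ r₃ r₄ r₅) (h : HamCycle G N H) (hG : Admissible G)
  {s t : ℤ}
include T h hG

theorem add_eq_add_one_of_adj (hs₀ : r₀ < s) (hs₁ : s < r₁) (hst : G.Adj (H s) (H r₅)) :
    r₀ + N = r₅ + 1 := by
  classical
  exact eq_add_one_of_arc_eq_nil (H := H) T.lt.2.2.2.2.2 <| List.reverse_eq_nil_iff.1 <|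
    (T.k33Subdiv h).path_eq_nil_of_adj_b hG (i := 0) (j := 0) (j' := 2) (by decide)
      (mem_arc.2 ⟨s, hs₀, hs₁, rfl⟩) hst

variable (hst : G.Adj (H s) (H t))
include hst

theorem eq_add_one_of_adj (hs : r₀ ≤ s) (hlt : s < t) (ht : t ≤ r₁) : t = s + 1 := by
  classical
  let S := T.k33Subdiv h
  have hpath : S.path 0 0 = arc H r₀ r₁ := rfl
  refine eq_add_one_of_arc_eq_nil (H := H) hlt ?_
  rcases hs.eq_or_lt with rfl | hs <;> rcases ht.eq_or_lt with rfl | ht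
  · exact S.path_eq_nil_of_adj hG (i := 0) (j := 0) hst
  · exact S.eq_nil_of_adj_left hG (hpath.trans (arc_eq_append hlt ht)) hst
  · exact S.eq_nil_of_adj_right hG (hpath.trans (arc_eq_append hs hlt)) hst
  · refine S.eq_nil_of_adj_mid hG (i := 0) (j := 0) (A := arc H r₀ s) (B := arc H t r₁) ?_ hst
    rw [hpath, arc_eq_append hs (hlt.trans ht), arc_eq_append hlt ht]

theorem false_of_adj_of_mem_arc₁ (hs₀ : r₀ < s) (hs₁ : s < r₁) (ht₁ : r₁ < t) (ht₂ : t < r₂) :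
    False := by
  classical
  exact (T.k33Subdiv h).not_adj_of_same_col hG (i := 0) (i' := 1) (j := 0) (by decide)
    (mem_arc.2 ⟨s, hs₀, hs₁, rfl⟩) (List.mem_reverse.2 (mem_arc.2 ⟨t, ht₁, ht₂, rfl⟩)) hst

theorem eq_add_one_of_adj_of_mem_arc₂ (hs₀ : r₀ < s) (hs₁ : s < r₁) (ht₂ : r₂ ≤ t) (ht₃ : t < r₃) :
    r₂ = r₁ + 1 := by
  classical
  refine eq_add_one_of_arc_eq_nil (H := H) T.lt.2.1 (List.reverse_eq_nil_iff.1 ?_)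
  rcases ht₂.eq_or_lt with rfl | ht₂
  · exact (T.k33Subdiv h).path_eq_nil_of_adj_a hG (i := 0) (i' := 1) (j := 0) (by decide)
      (mem_arc.2 ⟨s, hs₀, hs₁, rfl⟩) hst
  · exact (T.k33Subdiv h).path_col_eq_nil_of_adj hG (i := 0) (i' := 1) (j := 0) (j' := 1)
      (by decide) (by decide) (mem_arc.2 ⟨s, hs₀, hs₁, rfl⟩) (mem_arc.2 ⟨t, ht₂, ht₃, rfl⟩) hst

end CrossingTriple

/-- A chord of the cycle: an edge joining two vertices that are not consecutive. -/
def Chord (G : SimpleGraph V) (N : ℕ) (H : ℤ → V) (u v : ℤ) : Prop :=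
  u + 1 < v ∧ v + 1 < u + N ∧ G.Adj (H u) (H v)

namespace Chord
variable {u v : ℤ}

theorem adj (c : Chord G N H u v) : G.Adj (H u) (H v) := c.2.2

theorem symm (h : HamCycle G N H) (c : Chord G N H u v) : Chord G N H v (u + N) :=
  ⟨by linarith [c.2.1], by linarith [c.1], (h.apply_add u).symm ▸ c.adj.symm⟩

theorem of_symm (h : HamCycle G N H) (c : Chord G N H v (u + N)) : Chord G N H u v :=
  ⟨by linarith [c.2.1], by linarith [c.1], h.apply_add u ▸ c.adj.symm⟩

theorem reverse (c : Chord G N H u v) : Chord G N (fun i => H (-i)) (-v) (-u) :=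
  ⟨by linarith [c.1], by linarith [c.2.1], by simpa using c.adj.symm⟩

end Chord

/-- Four pairwise crossing chords `x₁y₁`, `x₂y₂`, `x₃y₃`, `x₄y₄` of the cycle. -/
structure CrossingQuad (G : SimpleGraph V) (N : ℕ) (H : ℤ → V) (x₁ x₂ x₃ x₄ y₁ y₂ y₃ y₄ : ℤ) :
    Prop where
  lt : x₁ < x₂ ∧ x₂ < x₃ ∧ x₃ < x₄ ∧ x₄ < y₁ ∧ y₁ < y₂ ∧ y₂ < y₃ ∧ y₃ < y₄ ∧ y₄ < x₁ + N
  adj₁ : G.Adj (H x₁) (H y₁)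
  adj₂ : G.Adj (H x₂) (H y₂)
  adj₃ : G.Adj (H x₃) (H y₃)
  adj₄ : G.Adj (H x₄) (H y₄)

theorem isMinor_K5h_of_lists [DecidableEq V] {L : Fin 5 → List V} {l m : List V}
    (hL : ∀ i, ListConnected G (L i)) (hl : ListConnected G l) (hm : ListConnected G m)
    (hcount : ∀ v, ∑ i, (L i).count v + (l.count v + m.count v) ≤ 1)
    (hLL : ∀ i j, i < j → ¬(i = 0 ∧ (j = 1 ∨ j = 2)) → Touch G (L i) (L j))
    (h0l : Touch G (L 0) l) (h1l : Touch G (L 1) l) (h0m : Touch G (L 0) m)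
    (h2m : Touch G (L 2) m) (hlm : Touch G l m) : IsMinor K5h G := by
  refine isMinor_fromRel (Sum.elim L ![l, m]) ?_ (fun v => ?_) ?_
  · rintro (i | k)
    · exact hL i
    · fin_cases k
      exacts [hl, hm]
  · simpa only [Fintype.sum_sum_type, Fin.sum_univ_two, Sum.elim_inl, Sum.elim_inr,
      Matrix.cons_val] using hcount v
  · rintro (i | k) (j | k') hne h <;> dsimp only at h
    · rcases lt_or_gt_of_ne h.1 with hij | hij
      · exact hLL i j hij (by tauto)
      · exact (hLL j i hij (by tauto)).symm
    · rcases h with ⟨rfl, rfl | rfl⟩ | ⟨rfl, rfl | rfl⟩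
      exacts [h0l, h1l, h0m, h2m]
    · fin_cases k <;> fin_cases k'
      exacts [(hne rfl).elim, hlm, hlm.symm, (hne rfl).elim]

namespace CrossingQuad
variable {x₁ x₂ x₃ x₄ y₁ y₂ y₃ y₄ u v u' v' : ℤ}

theorem shift (X : CrossingQuad G N H x₁ x₂ x₃ x₄ y₁ y₂ y₃ y₄) (h : HamCycle G N H) :
    CrossingQuad G N H x₂ x₃ x₄ y₁ y₂ y₃ y₄ (x₁ + N) :=
  ⟨by have := X.lt; omega, X.adj₂, X.adj₃, X.adj₄, (h.apply_add x₁).symm ▸ X.adj₁.symm⟩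

theorem shift_back (X : CrossingQuad G N H x₁ x₂ x₃ x₄ y₁ y₂ y₃ y₄) (h : HamCycle G N H) :
    CrossingQuad G N H (y₄ - N) x₁ x₂ x₃ x₄ y₁ y₂ y₃ :=
  ⟨by have := X.lt; omega, (h.apply_sub y₄).symm ▸ X.adj₄.symm, X.adj₁, X.adj₂, X.adj₃⟩

theorem reverse (X : CrossingQuad G N H x₁ x₂ x₃ x₄ y₁ y₂ y₃ y₄) :
    CrossingQuad G N (fun i => H (-i)) (-y₄) (-y₃) (-y₂) (-y₁) (-x₄) (-x₃) (-x₂) (-x₁) where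
  lt := by have := X.lt; omega
  adj₁ := by simpa using X.adj₄.symm
  adj₂ := by simpa using X.adj₃.symm
  adj₃ := by simpa using X.adj₂.symm
  adj₄ := by simpa using X.adj₁.symm

theorem exists_le (X : CrossingQuad G N H x₁ x₂ x₃ x₄ y₁ y₂ y₃ y₄) (h : HamCycle G N H) (u : ℤ) :
    ∃ x₁ x₂ x₃ x₄ y₁ y₂ y₃ y₄, CrossingQuad G N H x₁ x₂ x₃ x₄ y₁ y₂ y₃ y₄ ∧
      u ≤ x₁ ∧ y₄ < u + N := by
  induction u using Int.inductionOn' (b := x₁) with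
  | zero => exact ⟨_, _, _, _, _, _, _, _, X, le_rfl, X.lt.2.2.2.2.2.2.2⟩
  | succ u _ ih =>
    obtain ⟨x₁, x₂, x₃, x₄, y₁, y₂, y₃, y₄, X, hu, hy⟩ := ih
    have := X.lt
    rcases hu.eq_or_lt with rfl | hu
    · exact ⟨_, _, _, _, _, _, _, _, X.shift h, by omega, by omega⟩
    · exact ⟨_, _, _, _, _, _, _, _, X, by omega, by omega⟩
  | pred u _ ih =>
    obtain ⟨x₁, x₂, x₃, x₄, y₁, y₂, y₃, y₄, X, hu, hy⟩ := ih
    have := X.lt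
    by_cases hy' : y₄ < u - 1 + N
    · exact ⟨_, _, _, _, _, _, _, _, X, by omega, by omega⟩
    · exact ⟨_, _, _, _, _, _, _, _, X.shift_back h, by omega, by omega⟩

theorem dropSecond (X : CrossingQuad G N H x₁ x₂ x₃ x₄ y₁ y₂ y₃ y₄) :
    CrossingTriple G N H x₁ x₃ x₄ y₁ y₃ y₄ :=
  ⟨by have := X.lt; omega, X.adj₁, X.adj₃, X.adj₄⟩

theorem dropThird (X : CrossingQuad G N H x₁ x₂ x₃ x₄ y₁ y₂ y₃ y₄) :
    CrossingTriple G N H x₁ x₂ x₄ y₁ y₂ y₄ :=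
  ⟨by have := X.lt; omega, X.adj₁, X.adj₂, X.adj₄⟩

theorem le_of_chord (X : CrossingQuad G N H x₁ x₂ x₃ x₄ y₁ y₂ y₃ y₄) (h : HamCycle G N H)
    (hG : Admissible G) (hu : u ≤ x₁) (hy : y₄ < u + N) (c : Chord G N H u v) : x₄ ≤ v := by
  have lt := X.lt
  have huv := c.1
  by_contra! hlt
  rcases hu.lt_or_eq with hu | rfl
  · by_cases hx₂ : v ≤ x₂
    · have := (X.shift_back h).dropSecond.eq_add_one_of_adj h hG c.adj (by omega) (by omega) hx₂
      omega
    rcases lt_or_ge v x₃ with hx₃ | hx₃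
    · exact (X.shift_back h).dropThird.false_of_adj_of_mem_arc₁ h hG c.adj
        (by omega) hu (by omega) hx₃
    · have := (X.shift_back h).dropThird.eq_add_one_of_adj_of_mem_arc₂ h hG c.adj
        (by omega) hu hx₃ hlt
      omega
  · by_cases hx₃ : v ≤ x₃
    · have := X.dropSecond.eq_add_one_of_adj h hG c.adj le_rfl (by omega) hx₃
      omega
    · have T : CrossingTriple G N H x₃ x₄ y₁ y₃ y₄ (u + N) :=
        ⟨by omega, X.adj₃, X.adj₄, (h.apply_add u).symm ▸ X.adj₁.symm⟩
      have := T.add_eq_add_one_of_adj h hG (s := v) (by omega) hlt (c.symm h).adj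
      omega

theorem chord_le_of_lt (X : CrossingQuad G N H x₁ x₂ x₃ x₄ y₁ y₂ y₃ y₄) (h : HamCycle G N H)
    (hG : Admissible G) (hu : u < x₁) (hy : y₄ < u + N) (c : Chord G N H u v) : v ≤ y₁ := by
  have := X.reverse.le_of_chord h.reverse hG (by omega) (by omega) (c.symm h).reverse
  omega

theorem chord_le (X : CrossingQuad G N H x₁ x₂ x₃ x₄ y₁ y₂ y₃ y₄) (h : HamCycle G N H)
    (hG : Admissible G) (c : Chord G N H x₁ v) : v ≤ y₂ := by
  have := (X.shift h).reverse.le_of_chord h.reverse hG le_rfl (by have := X.lt; omega)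
    (c.symm h).reverse
  omega

theorem le_of_chord_of_lt (X : CrossingQuad G N H x₁ x₂ x₃ x₄ y₁ y₂ y₃ y₄) (h : HamCycle G N H)
    (hG : Admissible G) (hu : x₁ < u) (c : Chord G N H u v) : y₁ ≤ v := by
  have lt := X.lt
  have X₂ := X.shift h
  have X₃ := X₂.shift h
  have X₄ := X₃.shift h
  by_cases hx₂ : u ≤ x₂
  · exact X₂.le_of_chord h hG hx₂ (by omega) c
  by_cases hx₃ : u ≤ x₃
  · have := X₃.le_of_chord h hG hx₃ (by omega) c
    omega
  by_cases hx₄ : u ≤ x₄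
  · have := X₄.le_of_chord h hG hx₄ (by omega) c
    omega
  by_cases hy₁ : u ≤ y₁
  · have := (X₄.shift h).le_of_chord h hG hy₁ (by omega) c
    omega
  · have := c.1
    omega

theorem isMinor_K5h (X : CrossingQuad G N H x₁ x₂ x₃ x₄ y₁ y₂ y₃ y₄) (h : HamCycle G N H)
    (h₁₂ : G.Adj (H x₁) (H y₂)) (h₂₁ : G.Adj (H x₂) (H y₁)) : IsMinor K5h G := by
  classical
  have lt := X.lt
  let seg (i j : ℤ) : List V := H i :: arc H i j
  have hconn {i j : ℤ} (hij : i < j) : ListConnected G (seg i j) :=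
    (h.link_arc hij).listConnected_cons
  have hnext {i j k : ℤ} (hij : i < j) : Touch G (seg i j) (seg j k) := h.touch_cons_arc hij k
  have hchord {i j k l : ℤ} (hadj : G.Adj (H i) (H k)) : Touch G (seg i j) (seg k l) :=
    ⟨_, List.mem_cons_self, _, List.mem_cons_self, hadj⟩
  have hwrap : Touch G (seg y₃ (x₁ + N)) (seg x₁ x₂) := h.touch_cons_arc_add (by omega) x₂
  have hy₄ : H y₄ ∈ seg y₃ (x₁ + N) :=
    List.mem_cons_of_mem _ (mem_arc.2 ⟨y₄, by omega, by omega, rfl⟩)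
  refine isMinor_K5h_of_lists (L := ![seg y₃ (x₁ + N), seg x₂ x₃, seg y₁ y₂, seg y₂ y₃, seg x₁ x₂])
    (l := seg x₃ x₄) (m := seg x₄ y₁) (fun i => ?_) (hconn lt.2.2.1) (hconn lt.2.2.2.1)
    (fun v => ?_) (fun i j hij hne => ?_) (hchord X.adj₃.symm) (hnext lt.2.1)
    ⟨_, hy₄, _, List.mem_cons_self, X.adj₄.symm⟩ (hnext lt.2.2.2.1).symm (hnext lt.2.2.1)
  · fin_cases i <;> exact hconn (by omega)
  · have := h.count_arc_le_one x₁ v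
    rw [arc_eq_append (k := x₂) (by omega) (by omega),
      arc_eq_append (i := x₂) (k := x₃) (by omega) (by omega),
      arc_eq_append (i := x₃) (k := x₄) (by omega) (by omega),
      arc_eq_append (i := x₄) (k := y₁) (by omega) (by omega),
      arc_eq_append (i := y₁) (k := y₂) (by omega) (by omega),
      arc_eq_append (i := y₂) (k := y₃) (by omega) (by omega)] at this
    simp only [seg, Fin.sum_univ_five, List.count_append, count_cons_hit, Matrix.cons_val]
      at this ⊢
    omega
  · have h₀₃ := hnext (i := y₂) (j := y₃) (k := x₁ + N) (by omega)
    have h₁₄ := hnext (i := x₁) (j := x₂) (k := x₃) (by omega)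
    fin_cases i <;> fin_cases j <;> try contradiction
    all_goals first
      | exact absurd ⟨rfl, Or.inl rfl⟩ hne
      | exact absurd ⟨rfl, Or.inr rfl⟩ hne
      | exact h₀₃.symm
      | exact hwrap
      | exact h₁₄.symm
      | exact hchord h₂₁
      | exact hchord X.adj₂
      | exact hnext lt.2.2.2.2.1
      | exact hchord X.adj₁.symm
      | exact hchord h₁₂.symm

theorem not_chord_of_parallel_of_lt (X : CrossingQuad G N H x₁ x₂ x₃ x₄ y₁ y₂ y₃ y₄)
    (h : HamCycle G N H) (hG : Admissible G) (hu : u < x₁) (hy : y₄ < u + N)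
    (c : Chord G N H u v) (huu' : u < u') (hv'v : v' < v) : ¬ Chord G N H u' v' := by
  intro c'
  have lt := X.lt
  have hv := X.le_of_chord h hG hu.le hy c
  have hv₁ := X.chord_le_of_lt h hG hu hy c
  have hu' : u' ≤ x₁ := by
    by_contra! hlt
    have := X.le_of_chord_of_lt h hG hlt c'
    omega
  have hv' := X.le_of_chord h hG hu' (by omega) c'
  have T : CrossingTriple G N H u x₂ x₄ v y₂ y₄ := ⟨by omega, c.adj, X.adj₂, X.adj₄⟩
  have := T.eq_add_one_of_adj_of_mem_arc₂ h hG c'.adj huu' (by omega) hv' hv'v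
  omega

theorem not_chord_of_parallel_of_eq (X : CrossingQuad G N H x₁ x₂ x₃ x₄ y₁ y₂ y₃ y₄)
    (h : HamCycle G N H) (hG : Admissible G) (c : Chord G N H x₁ v) (huu' : x₁ < u')
    (hv'v : v' < v) : ¬ Chord G N H u' v' := by
  intro c'
  have lt := X.lt
  have hv := X.chord_le h hG c
  have hv' := X.le_of_chord_of_lt h hG huu' c'
  have hu' : u' ≤ x₂ := by
    by_contra! hlt
    have := (X.shift h).le_of_chord_of_lt h hG hlt c'
    omega
  rcases hv.lt_or_eq with hv | rfl <;> rcases hu'.lt_or_eq with hu' | rfl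
  · have T : CrossingTriple G N H x₁ x₂ x₄ v y₂ y₄ := ⟨by omega, c.adj, X.adj₂, X.adj₄⟩
    have := T.eq_add_one_of_adj_of_mem_arc₂ h hG c'.adj huu' hu' (by omega) hv'v
    omega
  · have T : CrossingTriple G N H x₄ v y₂ y₄ (x₁ + N) (u' + N) :=
      ⟨by omega, X.adj₄, (c.symm h).adj, (h.apply_add u').symm ▸ X.adj₂.symm⟩
    have := T.add_eq_add_one_of_adj h hG (s := v') (by omega) hv'v (c'.symm h).adj
    omega
  · have T : CrossingTriple G N H (y₄ - N) u' x₂ x₄ v' v :=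
      ⟨by omega, (h.apply_sub y₄).symm ▸ X.adj₄.symm, c'.adj, X.adj₂⟩
    have := T.add_eq_add_one_of_adj h hG (by omega) huu' c.adj
    omega
  · rcases hv'.lt_or_eq with hv' | rfl
    · have T : CrossingTriple G N H v' y₃ (x₁ + N) (u' + N) (x₃ + N) (y₁ + N) :=
        ⟨by omega, (c'.symm h).adj, (h.apply_add x₃).symm ▸ X.adj₃.symm,
          by rw [h.apply_add, h.apply_add]; exact X.adj₁⟩
      have := T.eq_add_one_of_adj_of_mem_arc₂ h hG (c.symm h).adj hv'v (by omega) le_rfl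
        (by omega)
      omega
    · exact hG.not_K5h (X.isMinor_K5h h c.adj c'.adj)

end CrossingQuad

/-- No two chords of the cycle are parallel, that is, nested without a common end. -/
def NoParallelChords (G : SimpleGraph V) (N : ℕ) (H : ℤ → V) : Prop :=
  ∀ ⦃u v u' v'⦄, Chord G N H u v → Chord G N H u' v' → u < u' → ¬ v' < v

theorem CrossingQuad.noParallelChords {x₁ x₂ x₃ x₄ y₁ y₂ y₃ y₄ : ℤ}
    (X : CrossingQuad G N H x₁ x₂ x₃ x₄ y₁ y₂ y₃ y₄) (h : HamCycle G N H) (hG : Admissible G) :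
    NoParallelChords G N H := by
  intro u v u' v' c c' huu' hv'v
  obtain ⟨x₁, x₂, x₃, x₄, y₁, y₂, y₃, y₄, X, hu, hy⟩ := X.exists_le h u
  rcases hu.lt_or_eq with hu | rfl
  · exact X.not_chord_of_parallel_of_lt h hG hu hy c huu' hv'v c'
  · exact X.not_chord_of_parallel_of_eq h hG c huu' hv'v c'

end HamiltonianCycle

section ChordShape
variable {V : Type*} {G : SimpleGraph V} {N : ℕ} {H : ℤ → V}

theorem forall_of_periodic {Q : ℤ → Prop} (hN : 0 < N) {u : ℤ} (hu : Q u)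
    (hsucc : ∀ w, Q w → Q (w + 1)) (hsub : ∀ w, Q (w + N) → Q w) (w : ℤ) : Q w := by
  have hadd (w : ℤ) (n : ℕ) (hw : Q w) : Q (w + n) := by
    induction n with
    | zero => simpa using hw
    | succ n ih =>
      rw [Nat.cast_add_one, ← add_assoc]
      exact hsucc _ ih
  induction w using Int.inductionOn' (b := u) with
  | zero => exact hu
  | succ w _ hw => exact hsucc w hw
  | pred w _ hw =>
    have := hadd w (N - 1) hw
    refine hsub _ ?_
    convert this using 1
    omega

theorem Chord.of_add {u v : ℤ} (h : HamCycle G N H) (c : Chord G N H (u + N) (v + N)) :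
    Chord G N H u v :=
  (c.of_symm h).of_symm h

namespace HamCycle
variable {u v : ℤ}

theorem exists_chord_of_adj (h : HamCycle G N H) {w : V} (hw : G.Adj (H u) w)
    (hsucc : w ≠ H (u + 1)) (hpred : w ≠ H (u - 1)) : ∃ t, Chord G N H u t ∧ H t = w := by
  obtain ⟨t, hut, ht, rfl⟩ := h.exists_apply_eq u w
  refine ⟨t, ⟨?_, ?_, hw⟩, rfl⟩
  · by_contra hc
    obtain rfl | rfl : t = u ∨ t = u + 1 := by omega
    · exact hw.ne rfl
    · exact hsucc rfl
  · by_contra hc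
    obtain rfl : t = u - 1 + N := by omega
    exact hpred (h.apply_add _)

theorem exists_chord (h : HamCycle G N H) (hG : Admissible G) (u : ℤ) : ∃ v, Chord G N H u v := by
  obtain ⟨w, hw, hsucc, hpred⟩ := hG.exists_adj_ne_ne (H u) (H (u + 1)) (H (u - 1))
  obtain ⟨t, ht, -⟩ := h.exists_chord_of_adj hw hsucc hpred
  exact ⟨t, ht⟩

theorem exists_chord_ne_of_adj_succ (h : HamCycle G N H) (hG : Admissible G)
    (c : Chord G N H u v) (hadj : G.Adj (H v) (H (u + 1))) : ∃ t, Chord G N H u t ∧ t ≠ v := by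
  obtain ⟨w, hw, hwv, hsucc, hpred⟩ :=
    hG.exists_adj_of_triangle (H u) (H v) (H (u + 1)) (H (u - 1)) c.adj (h.adj u) hadj
  obtain ⟨t, ht, rfl⟩ := h.exists_chord_of_adj hw hsucc hpred
  exact ⟨t, ht, fun htv => hwv (congrArg H htv)⟩

theorem exists_chord_ne_of_adj_pred (h : HamCycle G N H) (hG : Admissible G)
    (c : Chord G N H u v) (hadj : G.Adj (H v) (H (u - 1))) : ∃ t, Chord G N H u t ∧ t ≠ v := by
  obtain ⟨w, hw, hwv, hpred, hsucc⟩ :=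
    hG.exists_adj_of_triangle (H u) (H v) (H (u - 1)) (H (u + 1)) c.adj
      (by simpa using (h.adj (u - 1)).symm) hadj
  obtain ⟨t, ht, rfl⟩ := h.exists_chord_of_adj hw hsucc hpred
  exact ⟨t, ht, fun htv => hwv (congrArg H htv)⟩

theorem adj_iff_of_chord_iff (h : HamCycle G N H) {c : ℤ}
    (hc : ∀ w t, Chord G N H w t ↔ t = w + c ∨ t = w + (N - c)) (i j : ℤ) :
    G.Adj (H i) (H j) ↔ (N : ℤ) ∣ j - i - 1 ∨ (N : ℤ) ∣ i - j - 1 ∨ (N : ℤ) ∣ j - i - c ∨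
      (N : ℤ) ∣ i - j - c := by
  have hchord (w : ℤ) : G.Adj (H w) (H (w + c)) := ((hc w _).2 (Or.inl rfl)).adj
  simp only [sub_sub, ← h.inj]
  constructor
  · intro hij
    by_cases hsucc : H j = H (i + 1)
    · exact Or.inl hsucc
    by_cases hpred : H j = H (i - 1)
    · refine Or.inr (Or.inl ?_)
      rw [h.inj] at hpred ⊢
      obtain ⟨k, hk⟩ := hpred
      exact ⟨-k, by linear_combination -hk⟩
    obtain ⟨t, ht, htj⟩ := h.exists_chord_of_adj hij hsucc hpred
    rcases (hc i t).1 ht with rfl | rfl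
    · exact Or.inr (Or.inr (Or.inl htj.symm))
    · refine Or.inr (Or.inr (Or.inr ?_))
      rw [h.inj] at htj ⊢
      obtain ⟨k, hk⟩ := htj
      exact ⟨k - 1, by linear_combination hk⟩
  · rintro (e | e | e | e) <;> rw [e]
    exacts [h.adj i, (h.adj j).symm, hchord i, (hchord j).symm]

end HamCycle

namespace NoParallelChords
variable (np : NoParallelChords G N H) (h : HamCycle G N H) (hG : Admissible G) {u v v' : ℤ}
include np h hG

theorem le_add_one (c : Chord G N H u v) (c' : Chord G N H u v') : v' ≤ v + 1 := by
  by_contra! hlt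
  have eq_of_chord (t : ℤ) (ht : Chord G N H (v' - 1) t) : t = u + N := by
    have := np (c.symm h) ht (by omega)
    have := np c' (Chord.of_symm h (u := t - N) (by rwa [sub_add_cancel]))
    omega
  obtain ⟨s, hs⟩ := h.exists_chord hG (v' - 1)
  obtain rfl := eq_of_chord s hs
  obtain ⟨t, ht, hne⟩ := h.exists_chord_ne_of_adj_succ hG hs
    (by rw [h.apply_add, sub_add_cancel]; exact c'.adj)
  exact hne (eq_of_chord t ht)

theorem chord_of_fan_left (c : Chord G N H u v) (c' : Chord G N H u (v + 1)) :
    Chord G N H v (u + N - 1) := by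
  obtain ⟨t, ht, hne⟩ := h.exists_chord_ne_of_adj_succ hG (c.symm h)
    (by rw [h.apply_add]; exact c'.adj)
  have hle := np.le_add_one h hG (c.symm h) ht
  have hge := np.le_add_one h hG ht (c.symm h)
  by_cases htu : t = u + 1 + N
  · subst htu
    have := c'.2.1
    have := ht.2.1
    exact absurd (lt_add_one v) (np c' (ht.of_symm h) (lt_add_one u))
  · obtain rfl : t = u + N - 1 := by omega
    exact ht

theorem chord_of_fan_right (c : Chord G N H u v) (c' : Chord G N H u (v + 1)) :
    Chord G N H (v + 1) (u + N + 1) := by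
  obtain ⟨t, ht, hne⟩ := h.exists_chord_ne_of_adj_pred hG (c'.symm h)
    (by rw [h.apply_add, add_sub_cancel_right]; exact c.adj)
  have hle := np.le_add_one h hG (c'.symm h) ht
  have hge := np (c.symm h) ht (lt_add_one v)
  obtain rfl : t = u + N + 1 := by omega
  exact ht

theorem fan_succ (c : Chord G N H u v) (c' : Chord G N H u (v + 1)) :
    Chord G N H (u + 1) (v + 1) ∧ Chord G N H (u + 1) (v + 1 + 1) := by
  have hr := np.chord_of_fan_right h hG c c'
  refine ⟨Chord.of_symm h ?_, Chord.of_add h ?_⟩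
  · rwa [add_right_comm]
  · convert np.chord_of_fan_right h hG (c'.symm h) hr using 1 <;> ring

theorem chord_iff_of_fan (c : Chord G N H u v) (c' : Chord G N H u (v + 1)) :
    N = 2 * (v - u) + 1 ∧
      ∀ w t, Chord G N H w t ↔ t = w + (v - u) ∨ t = w + (N - (v - u)) := by
  have fan (w : ℤ) : Chord G N H w (w + (v - u)) ∧ Chord G N H w (w + (v - u) + 1) := by
    refine forall_of_periodic h.pos (u := u)
      (Q := fun w => Chord G N H w (w + (v - u)) ∧ Chord G N H w (w + (v - u) + 1))
      ?_ (fun w hw => ?_) (fun w hw => ?_) w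
    · rw [add_sub_cancel]
      exact ⟨c, c'⟩
    · convert np.fan_succ h hG hw.1 hw.2 using 2 <;> ring
    · exact ⟨Chord.of_add h (by convert hw.1 using 1; ring),
        Chord.of_add h (by convert hw.2 using 1; ring)⟩
  have hle := np.le_add_one h hG (np.chord_of_fan_left h hG c c') (fan v).2
  have hge := np.le_add_one h hG (fan v).1 (c.symm h)
  have hN : N = 2 * (v - u) + 1 := by omega
  refine ⟨hN, fun w t => ⟨fun ht => ?_, ?_⟩⟩
  · have := np.le_add_one h hG ht (fan w).2
    have := np.le_add_one h hG (fan w).1 ht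
    omega
  · rintro (rfl | rfl)
    · exact (fan w).1
    · convert (fan w).2 using 1
      omega

theorem chord_succ_of_unique (uniq : ∀ u v v', Chord G N H u v → Chord G N H u v' → v = v')
    (c : Chord G N H u v) : Chord G N H (u + 1) (v + 1) := by
  obtain ⟨t, ht⟩ := h.exists_chord hG (u + 1)
  obtain ⟨s, hs⟩ := h.exists_chord hG (v + 1)
  have hvt := np c ht (lt_add_one u)
  have hus := np (c.symm h) hs (lt_add_one v)
  have hs' : Chord G N H (s - N) (v + 1) := Chord.of_symm h (by rwa [sub_add_cancel])
  have hne : t ≠ v := by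
    rintro rfl
    have := uniq _ _ _ (c.symm h) (ht.symm h)
    omega
  have hsu : s - N ≠ u := by
    intro hsu
    have := uniq _ _ _ c (hsu ▸ hs')
    omega
  by_cases hsu' : s - N = u + 1
  · exact hsu' ▸ hs'
  · have := np ht hs' (by omega)
    obtain rfl : t = v + 1 := by omega
    exact ht

theorem chord_iff_of_unique (uniq : ∀ u v v', Chord G N H u v → Chord G N H u v' → v = v')
    (c : Chord G N H u v) :
    N = 2 * (v - u) ∧ ∀ w t, Chord G N H w t ↔ t = w + (v - u) ∨ t = w + (N - (v - u)) := by
  have hchord (w : ℤ) : Chord G N H w (w + (v - u)) := by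
    refine forall_of_periodic h.pos (u := u) (Q := fun w => Chord G N H w (w + (v - u)))
      ?_ (fun w hw => ?_) (fun w hw => ?_) w
    · rwa [add_sub_cancel]
    · convert np.chord_succ_of_unique h hG uniq hw using 1
      ring
    · exact Chord.of_add h (by convert hw using 1; ring)
  have := uniq _ _ _ (c.symm h) (hchord v)
  refine ⟨by omega, fun w t => ⟨fun ht => Or.inl (uniq _ _ _ ht (hchord w)), ?_⟩⟩
  rintro (rfl | rfl)
  · exact hchord w
  · convert hchord w using 1
    omega

theorem exists_chord_iff : ∃ c : ℕ, (N = 2 * c ∨ N = 2 * c + 1) ∧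
    ∀ w t, Chord G N H w t ↔ t = w + (c : ℤ) ∨ t = w + (N - (c : ℤ)) := by
  obtain ⟨u, v, hN, hc⟩ : ∃ u v, ((N : ℤ) = 2 * (v - u) ∨ (N : ℤ) = 2 * (v - u) + 1) ∧
      ∀ w t, Chord G N H w t ↔ t = w + (v - u) ∨ t = w + (N - (v - u)) := by
    by_cases hfan : ∃ u v, Chord G N H u v ∧ Chord G N H u (v + 1)
    · obtain ⟨u, v, c, c'⟩ := hfan
      obtain ⟨hN, hc⟩ := np.chord_iff_of_fan h hG c c'
      exact ⟨u, v, Or.inr hN, hc⟩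
    · obtain ⟨v, c⟩ := h.exists_chord hG 0
      refine ⟨0, v, (np.chord_iff_of_unique h hG (fun u v v' c c' => ?_) c).imp_left Or.inl⟩
      have hle := np.le_add_one h hG c c'
      have hge := np.le_add_one h hG c' c
      have hne : v' ≠ v + 1 := fun e => hfan ⟨u, v, c, e ▸ c'⟩
      have hne' : v ≠ v' + 1 := fun e => hfan ⟨u, v', c', e ▸ c⟩
      omega
  have hnonneg : 0 ≤ v - u := by omega
  refine ⟨(v - u).toNat, by omega, ?_⟩
  rwa [Int.toNat_of_nonneg hnonneg]

end NoParallelChords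

theorem nonempty_iso_of_bijective {W : Type*} {K : SimpleGraph W} {f : W → V}
    (hf : Function.Bijective f) (h : ∀ a b, a ≠ b → (G.Adj (f a) (f b) ↔ K.Adj a b)) :
    Nonempty (G ≃g K) := by
  refine ⟨RelIso.symm ⟨Equiv.ofBijective f hf, @fun a b => ?_⟩⟩
  by_cases e : a = b
  · simp [e]
  · exact h a b e

theorem val_eq_add_mod_iff {m : ℕ} (i j : Fin m) (s : ℕ) :
    j.val = (i.val + s) % m ↔ (m : ℤ) ∣ (j.val : ℤ) - i.val - s := by
  rw [sub_sub, ← Nat.cast_add, ← Nat.modEq_iff_dvd, Nat.ModEq, Nat.mod_eq_of_lt j.2, eq_comm]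

theorem HamCycle.bijective_mul (h : HamCycle G N H) {a : ℤ} (ha : IsCoprime (N : ℤ) a) :
    Function.Bijective fun k : Fin N => H (k * a) := by
  refine ⟨h.injective_mul ha, fun v => ?_⟩
  obtain ⟨t, rfl⟩ := h.surj v
  obtain ⟨u, b, hub⟩ := ha
  have hN : (0 : ℤ) < N := by exact_mod_cast h.pos
  have hnonneg := Int.emod_nonneg (t * b) hN.ne'
  have hlt := Int.emod_lt_of_pos (t * b) hN
  refine ⟨⟨(t * b % N).toNat, by omega⟩, ?_⟩
  change H (((t * b % N).toNat : ℤ) * a) = H t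
  rw [Int.toNat_of_nonneg hnonneg, h.inj, Int.emod_def]
  exact ⟨-(t * u) - t * b / N * a, by linear_combination t * hub⟩

theorem HamCycle.bijective (h : HamCycle G N H) : Function.Bijective fun k : Fin N => H k :=
  ⟨h.injective, fun v => (h.surj v).elim fun i hi => hi ▸ h.exists_fin_apply_eq i⟩

theorem HamCycle.nonempty_iso_mobiusLadder {c : ℕ} (h : HamCycle G (2 * c) H)
    (hc : ∀ w t, Chord G (2 * c) H w t ↔
      t = w + (c : ℤ) ∨ t = w + (((2 * c : ℕ) : ℤ) - (c : ℤ))) :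
    Nonempty (G ≃g mobiusLadder c) := by
  refine nonempty_iso_of_bijective h.bijective fun i j hij => ?_
  rw [h.adj_iff_of_chord_iff hc, mobiusLadder, fromRel_adj]
  simp only [val_eq_add_mod_iff, ne_eq, hij, not_false_eq_true, true_and, Nat.cast_one]
  tauto

theorem HamCycle.nonempty_iso_squareCycle {c : ℕ} (h : HamCycle G (2 * c + 1) H)
    (hc : ∀ w t, Chord G (2 * c + 1) H w t ↔
      t = w + (c : ℤ) ∨ t = w + (((2 * c + 1 : ℕ) : ℤ) - (c : ℤ))) :
    Nonempty (G ≃g squareCycle (2 * c + 1)) := by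
  have hN : ((2 * c + 1 : ℕ) : ℤ) = 2 * c + 1 := by push_cast; ring
  have hcop : IsCoprime ((2 * c + 1 : ℕ) : ℤ) (c + 1) := ⟨-1, 2, by rw [hN]; ring⟩
  have hdvd_two_mul (z : ℤ) : ((2 * c + 1 : ℕ) : ℤ) ∣ 2 * z ↔ ((2 * c + 1 : ℕ) : ℤ) ∣ z :=
    ⟨IsCoprime.dvd_of_dvd_mul_left ⟨1, -c, by rw [hN]; ring⟩, (Dvd.dvd.mul_left · 2)⟩
  have hdvd_one (a b : ℤ) : ((2 * c + 1 : ℕ) : ℤ) ∣ a * (c + 1) - b * (c + 1) - 1 ↔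
      ((2 * c + 1 : ℕ) : ℤ) ∣ a - b - 2 := by
    rw [← hdvd_two_mul, show 2 * (a * ((c : ℤ) + 1) - b * (c + 1) - 1) =
      a - b - 2 + ((2 * c + 1 : ℕ) : ℤ) * (a - b) by rw [hN]; ring,
      dvd_add_left (dvd_mul_right _ _)]
  have hdvd_c (a b : ℤ) : ((2 * c + 1 : ℕ) : ℤ) ∣ a * (c + 1) - b * (c + 1) - c ↔
      ((2 * c + 1 : ℕ) : ℤ) ∣ b - a - 1 := by
    rw [← hdvd_two_mul, show 2 * (a * ((c : ℤ) + 1) - b * (c + 1) - c) =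
      -(b - a - 1) + ((2 * c + 1 : ℕ) : ℤ) * (a - b - 1) by rw [hN]; ring,
      dvd_add_left (dvd_mul_right _ _), dvd_neg]
  -- Consecutive vertices of `squareCycle` are `c + 1` apart on the Hamiltonian cycle.
  refine nonempty_iso_of_bijective (h.bijective_mul hcop) fun i j hij => ?_
  rw [h.adj_iff_of_chord_iff hc, squareCycle, fromRel_adj]
  simp only [val_eq_add_mod_iff, hdvd_one, hdvd_c, ne_eq, hij, not_false_eq_true, true_and,
    Nat.cast_one, Nat.cast_ofNat]
  tauto

theorem CrossingQuad.exists_nonempty_iso (h : HamCycle G N H) (hG : Admissible G)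
    {x₁ x₂ x₃ x₄ y₁ y₂ y₃ y₄ : ℤ} (X : CrossingQuad G N H x₁ x₂ x₃ x₄ y₁ y₂ y₃ y₄) :
    ∃ n, 3 ≤ n ∧ (Nonempty (G ≃g mobiusLadder n) ∨ Nonempty (G ≃g squareCycle (2 * n + 1))) := by
  have hlt := X.lt
  obtain ⟨c, rfl | rfl, hc⟩ := (X.noParallelChords h hG).exists_chord_iff h hG
  · exact ⟨c, by omega, Or.inl (h.nonempty_iso_mobiusLadder hc)⟩
  · exact ⟨c, by omega, Or.inr (h.nonempty_iso_squareCycle hc)⟩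

end ChordShape

section CyclicList
variable {V : Type*} {G : SimpleGraph V}

/-- The bi-infinite periodic sequence repeating the list `x :: l`, whose position `0` is `x`. -/
def cyclicSeq (x : V) (l : List V) (i : ℤ) : V :=
  (x :: l).getD (i % (l.length + 1 : ℕ)).toNat x

theorem Link.adj_getD {l : List V} {x y : V} (h : Link G x l y) {k : ℕ} (hk : k ≤ l.length) :
    G.Adj ((x :: l).getD k y) ((x :: l).getD (k + 1) y) := by
  induction l generalizing x k with
  | nil =>
    obtain rfl : k = 0 := by simpa using hk
    simpa using h
  | cons m l ih =>
    cases k with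
    | zero => simpa using h.1
    | succ k => simpa using ih h.2 (k := k) (by simpa using hk)

variable {x : V} {l : List V}

theorem cyclicSeq_of_lt {k : ℕ} (hk : k < l.length + 1) :
    cyclicSeq x l k = (x :: l)[k]'(by simpa using hk) := by
  rw [cyclicSeq, Int.emod_eq_of_lt (by omega) (by omega), Int.toNat_natCast,
    List.getD_eq_getElem]

theorem cyclicSeq_length {A : List V} {v : V} (h : A ++ [v] <+: x :: l) :
    cyclicSeq x l A.length = v := by
  obtain ⟨B, hB⟩ := h
  have hA : A.length < (x :: l).length := by simp [← hB]
  rw [cyclicSeq_of_lt (by simpa using hA)]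
  simp [← hB]

theorem cyclicSeq_adj (h : Link G x l x) (i : ℤ) :
    G.Adj (cyclicSeq x l i) (cyclicSeq x l (i + 1)) := by
  have hnonneg := Int.emod_nonneg i (b := (l.length + 1 : ℕ)) (by omega)
  have hlt := Int.emod_lt_of_pos i (b := (l.length + 1 : ℕ)) (by omega)
  suffices hsucc : cyclicSeq x l (i + 1) = (x :: l).getD ((i % (l.length + 1 : ℕ)).toNat + 1) x by
    rw [hsucc]
    exact h.adj_getD (by omega)
  rw [cyclicSeq, ← Int.emod_add_emod]
  by_cases hi : i % (l.length + 1 : ℕ) + 1 < (l.length + 1 : ℕ)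
  · rw [Int.emod_eq_of_lt (by omega) hi]
    congr 1
    omega
  · rw [show i % (l.length + 1 : ℕ) + 1 = (l.length + 1 : ℕ) by omega, Int.emod_self,
      show (i % (l.length + 1 : ℕ)).toNat + 1 = l.length + 1 by omega]
    simp

theorem cycleSeq_cyclicSeq (hnodup : (x :: l).Nodup) (h : Link G x l x) :
    CycleSeq G (l.length + 1) (cyclicSeq x l) where
  pos := Nat.succ_pos _
  inj i j := by
    have hi := Int.emod_nonneg i (b := (l.length + 1 : ℕ)) (by omega)
    have hi' := Int.emod_lt_of_pos i (b := (l.length + 1 : ℕ)) (by omega)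
    have hj := Int.emod_nonneg j (b := (l.length + 1 : ℕ)) (by omega)
    have hj' := Int.emod_lt_of_pos j (b := (l.length + 1 : ℕ)) (by omega)
    rw [cyclicSeq, cyclicSeq, List.getD_eq_getElem _ _ (by rw [List.length_cons]; omega),
      List.getD_eq_getElem _ _ (by rw [List.length_cons]; omega), hnodup.getElem_inj_iff,
      Int.dvd_iff_emod_eq_zero, ← Int.emod_eq_emod_iff_emod_sub_eq_zero]
    omega
  adj := cyclicSeq_adj h

theorem exists_cyclicSeq_eq_iff {v : V} : (∃ i, cyclicSeq x l i = v) ↔ v ∈ x :: l := by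
  constructor
  · rintro ⟨i, rfl⟩
    have hi := Int.emod_nonneg i (b := (l.length + 1 : ℕ)) (by omega)
    have hi' := Int.emod_lt_of_pos i (b := (l.length + 1 : ℕ)) (by omega)
    rw [cyclicSeq, List.getD_eq_getElem _ _ (by rw [List.length_cons]; omega)]
    exact List.getElem_mem _
  · intro hv
    obtain ⟨k, hk, rfl⟩ := List.mem_iff_getElem.1 hv
    exact ⟨k, cyclicSeq_of_lt (by simpa using hk)⟩

theorem hamCycle_cyclicSeq [DecidableEq V] (hcount : ∀ v, (x :: l).count v = 1)
    (h : Link G x l x) : HamCycle G (l.length + 1) (cyclicSeq x l) where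
  toCycleSeq := cycleSeq_cyclicSeq (List.nodup_iff_count_le_one.2 fun v => (hcount v).le) h
  surj v := exists_cyclicSeq_eq_iff.2 (List.count_pos_iff.1 (by rw [hcount v]; simp))

variable [DecidableEq V]

theorem exists_nonempty_iso_of_crossing_list (hG : Admissible G) {v₀ v₁ v₂ v₃ v₄ v₅ v₆ v₇ : V}
    {L₀ L₁ L₂ L₃ L₄ L₅ L₆ L₇ : List V}
    (hcount : ∀ v, (v₀ :: (L₀ ++ v₁ :: (L₁ ++ v₂ :: (L₂ ++ v₃ :: (L₃ ++ v₄ :: (L₄ ++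
      v₅ :: (L₅ ++ v₆ :: (L₆ ++ v₇ :: L₇)))))))).count v = 1)
    (hlink : Link G v₀ (L₀ ++ v₁ :: (L₁ ++ v₂ :: (L₂ ++ v₃ :: (L₃ ++ v₄ :: (L₄ ++
      v₅ :: (L₅ ++ v₆ :: (L₆ ++ v₇ :: L₇))))))) v₀)
    (h₀ : G.Adj v₀ v₄) (h₁ : G.Adj v₁ v₅) (h₂ : G.Adj v₂ v₆) (h₃ : G.Adj v₃ v₇) :
    ∃ n, 3 ≤ n ∧ (Nonempty (G ≃g mobiusLadder n) ∨ Nonempty (G ≃g squareCycle (2 * n + 1))) := by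
  have ham := hamCycle_cyclicSeq hcount hlink
  set l := L₀ ++ v₁ :: (L₁ ++ v₂ :: (L₂ ++ v₃ :: (L₃ ++ v₄ :: (L₄ ++
      v₅ :: (L₅ ++ v₆ :: (L₆ ++ v₇ :: L₇)))))) with hl
  have seq_eq {v : V} (A : List V) (h : A ++ [v] <+: v₀ :: l) : cyclicSeq v₀ l A.length = v :=
    cyclicSeq_length h
  have e₀ := seq_eq (v := v₀) [] (by simp)
  have e₁ := seq_eq (v := v₁) (v₀ :: L₀) (by simp [hl])
  have e₂ := seq_eq (v := v₂) (v₀ :: (L₀ ++ v₁ :: L₁)) (by simp [hl])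
  have e₃ := seq_eq (v := v₃) (v₀ :: (L₀ ++ v₁ :: (L₁ ++ v₂ :: L₂))) (by simp [hl])
  have e₄ := seq_eq (v := v₄) (v₀ :: (L₀ ++ v₁ :: (L₁ ++ v₂ :: (L₂ ++ v₃ :: L₃)))) (by simp [hl])
  have e₅ := seq_eq (v := v₅) (v₀ :: (L₀ ++ v₁ :: (L₁ ++ v₂ :: (L₂ ++ v₃ :: (L₃ ++ v₄ :: L₄)))))
    (by simp [hl])
  have e₆ := seq_eq (v := v₆) (v₀ :: (L₀ ++ v₁ :: (L₁ ++ v₂ :: (L₂ ++ v₃ :: (L₃ ++ v₄ :: (L₄ ++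
    v₅ :: L₅)))))) (by simp [hl])
  have e₇ := seq_eq (v := v₇) (v₀ :: (L₀ ++ v₁ :: (L₁ ++ v₂ :: (L₂ ++ v₃ :: (L₃ ++ v₄ :: (L₄ ++
    v₅ :: (L₅ ++ v₆ :: L₆))))))) (by simp [hl])
  have hlen := congrArg List.length hl
  refine CrossingQuad.exists_nonempty_iso ham hG (CrossingQuad.mk ?_ (e₀ ▸ e₄ ▸ h₀)
    (e₁ ▸ e₅ ▸ h₁) (e₂ ▸ e₆ ▸ h₂) (e₃ ▸ e₇ ▸ h₃))
  simp only [List.length_cons, List.length_append, List.length_nil] at hlen ⊢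
  omega

theorem K33Subdiv.exists_nonempty_iso_of_crossing (S : K33Subdiv G) (hG : Admissible G)
    {i i' j j' : Fin 3} (hi : i ≠ i') (hj : j ≠ j') {p q : V} (hp : p ∈ S.path i j)
    (hq : q ∈ S.path i' j') (h : G.Adj p q) :
    ∃ n, 3 ≤ n ∧ (Nonempty (G ≃g mobiusLadder n) ∨ Nonempty (G ≃g squareCycle (2 * n + 1))) := by
  obtain ⟨k, hik, hik'⟩ := exists_ne_ne i i'
  obtain ⟨l, hjl, hjl'⟩ := exists_ne_ne j j'
  obtain ⟨σ, rfl, rfl, rfl⟩ := exists_perm hi hik hik'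
  obtain ⟨τ, rfl, rfl, rfl⟩ := exists_perm hj hjl hjl'
  let T := S.permute σ τ
  have h01 : T.path 0 1 = [] := S.path_col_eq_nil_of_adj hG hi.symm hj.symm hq hp h.symm
  have h10 : T.path 1 0 = [] := S.path_col_eq_nil_of_adj hG hi hj hp hq h
  have h22 : T.path 2 2 = [] := S.path_eq_nil_of_adj_of_ne hG hi hj hik hik' hjl hjl' hp hq h
  obtain ⟨A, B, hP : T.path 0 0 = A ++ p :: B⟩ := List.append_of_mem hp
  obtain ⟨C, D, hQ : T.path 1 1 = C ++ q :: D⟩ := List.append_of_mem hq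
  have hlinkP := T.link 0 0
  have hlinkQ := T.link 1 1
  have hadj01 := T.link 0 1
  have hadj10 := T.link 1 0
  have hadj22 := T.link 2 2
  rw [hP, link_append] at hlinkP
  rw [hQ, link_append] at hlinkQ
  rw [h01, link_nil] at hadj01
  rw [h10, link_nil] at hadj10
  rw [h22, link_nil] at hadj22
  refine exists_nonempty_iso_of_crossing_list hG (v₀ := T.a 0) (v₁ := p) (v₂ := T.b 0)
    (v₃ := T.a 2) (v₄ := T.b 1) (v₅ := q) (v₆ := T.a 1) (v₇ := T.b 2) (L₀ := A) (L₁ := B)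
    (L₂ := (T.path 2 0).reverse) (L₃ := T.path 2 1) (L₄ := D.reverse) (L₅ := C.reverse)
    (L₆ := T.path 1 2) (L₇ := (T.path 0 2).reverse) (fun v => ?_) ?_ hadj01 h hadj10.symm hadj22
  · have hv := T.occ_eq_one hG v
    simp only [K33Subdiv.occ, h01, h10, h22, hP, hQ, List.count_append, List.count_reverse,
      count_cons_hit, List.count_nil] at hv ⊢
    omega
  · simp only [link_append, link_reverse]
    exact ⟨hlinkP.1, hlinkP.2, T.link 2 0, T.link 2 1, hlinkQ.2, hlinkQ.1, T.link 1 2, T.link 0 2⟩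

end CyclicList

section HubbedCycle
variable {V : Type*} {G : SimpleGraph V}

/-- An induced cycle `H` which together with two further adjacent vertices `u` and `w`, the hubs,
spans `G`. -/
structure HubbedCycle (G : SimpleGraph V) (N : ℕ) (H : ℤ → V) (u w : V) : Prop
    extends CycleSeq G N H where
  eq_of_adj : ∀ i j, G.Adj (H i) (H j) → H j = H (i + 1) ∨ H j = H (i - 1)
  adj_hubs : G.Adj u w
  ne_left : ∀ i, H i ≠ u
  ne_right : ∀ i, H i ≠ w
  span : ∀ v, v = u ∨ v = w ∨ ∃ i, H i = v

/-- The vertices of a double wheel, mapped to the rim `H` and the hubs `u` and `w`. -/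
def hubMap (N : ℕ) (H : ℤ → V) (u w : V) : Fin N ⊕ Fin 2 → V :=
  Sum.elim (fun i => H i) ![u, w]

theorem nonempty_altDoubleWheel_two_iso_mobiusLadder_three :
    Nonempty (altDoubleWheel 2 ≃g mobiusLadder 3) := by
  let f : Fin (2 * 3) → Fin (2 * 2) ⊕ Fin 2 := ![.inl 0, .inl 1, .inl 2, .inl 3, .inr 1, .inr 0]
  refine nonempty_iso_of_bijective (f := f) (by decide) ?_
  simp only [altDoubleWheel, mobiusLadder, fromRel_adj]
  intro i j
  fin_cases i <;> fin_cases j <;> simp [f]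

namespace HubbedCycle
variable {N : ℕ} {H : ℤ → V} {u w : V}

theorem symm (h : HubbedCycle G N H u w) : HubbedCycle G N H w u where
  toCycleSeq := h.toCycleSeq
  eq_of_adj := h.eq_of_adj
  adj_hubs := h.adj_hubs.symm
  ne_left := h.ne_right
  ne_right := h.ne_left
  span v := or_left_comm.1 (h.span v)

theorem adj_iff (h : HubbedCycle G N H u w) (i j : ℤ) :
    G.Adj (H i) (H j) ↔ (N : ℤ) ∣ j - i - 1 ∨ (N : ℤ) ∣ i - j - 1 := by
  rw [sub_sub j, sub_sub i, ← h.inj, ← h.inj]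
  constructor
  · refine fun hij => (h.eq_of_adj i j hij).imp_right fun hj => ?_
    rwa [h.inj, sub_sub_eq_add_sub, dvd_sub_comm, ← h.inj] at hj
  · rintro (hj | hi)
    · exact hj ▸ h.adj i
    · exact hi ▸ (h.adj j).symm

theorem bijective_hubMap (h : HubbedCycle G N H u w) : Function.Bijective (hubMap N H u w) := by
  constructor
  · refine h.injective.sumElim ?_ fun i k => ?_
    · have := h.adj_hubs.ne
      have := h.adj_hubs.ne'
      intro k l hkl
      fin_cases k <;> fin_cases l <;> simp_all
    · fin_cases k
      exacts [h.ne_left i, h.ne_right i]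
  · intro v
    rcases h.span v with rfl | rfl | ⟨i, rfl⟩
    · exact ⟨.inr 0, rfl⟩
    · exact ⟨.inr 1, rfl⟩
    · obtain ⟨k, hk⟩ := h.exists_fin_apply_eq i
      exact ⟨.inl k, hk⟩

theorem nonempty_iso_doubleWheel (h : HubbedCycle G N H u w)
    (hboth : ∀ i, G.Adj (H i) u ∧ G.Adj (H i) w) : Nonempty (G ≃g doubleWheel N) := by
  have hu (i) := (hboth i).1
  have hw (i) := (hboth i).2
  refine nonempty_iso_of_bijective h.bijective_hubMap ?_
  simp only [doubleWheel, fromRel_adj]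
  rintro (i | k) (j | l) hne
  · simp only [hubMap, Sum.elim_inl, h.adj_iff, val_eq_add_mod_iff, hne, ne_eq, not_false_eq_true,
      true_and, Nat.cast_one]
  · fin_cases l <;> simp [hubMap, hu, hw]
  · fin_cases k <;> simp [hubMap, (hu _).symm, (hw _).symm]
  · have := h.adj_hubs
    have := h.adj_hubs.symm
    fin_cases k <;> fin_cases l <;> simp_all [hubMap]

theorem nonempty_iso_altDoubleWheel {n : ℕ} (h : HubbedCycle G (2 * n) H u w)
    (hu : ∀ k : ℕ, G.Adj (H k) u ↔ k % 2 = 0) (hw : ∀ k : ℕ, G.Adj (H k) w ↔ k % 2 = 1) :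
    Nonempty (G ≃g altDoubleWheel n) := by
  refine nonempty_iso_of_bijective h.bijective_hubMap ?_
  simp only [altDoubleWheel, fromRel_adj]
  rintro (i | k) (j | l) hne
  · simp only [hubMap, Sum.elim_inl, h.adj_iff, val_eq_add_mod_iff, hne, ne_eq, not_false_eq_true,
      true_and, Nat.cast_one]
  · fin_cases l <;> simp [hubMap, hu, hw]
  · rw [G.adj_comm]
    fin_cases k <;> simp [hubMap, hu, hw]
  · have := h.adj_hubs
    have := h.adj_hubs.symm
    fin_cases k <;> fin_cases l <;> simp_all [hubMap]

section Admissible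
variable (h : HubbedCycle G N H u w) (hG : Admissible G)
include h hG

theorem adj_left_or_right (i : ℤ) : G.Adj (H i) u ∨ G.Adj (H i) w := by
  obtain ⟨z, hz, hsucc, hpred⟩ := hG.exists_adj_ne_ne (H i) (H (i + 1)) (H (i - 1))
  rcases h.span z with rfl | rfl | ⟨j, rfl⟩
  · exact Or.inl hz
  · exact Or.inr hz
  · exact ((h.eq_of_adj _ _ hz).elim hsucc hpred).elim

theorem adj_right_of_adj_left {i : ℤ} (hi : G.Adj (H i) u) (hsucc : G.Adj (H (i + 1)) u) :
    G.Adj (H i) w ∧ G.Adj (H (i + 1)) w := by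
  constructor
  · obtain ⟨z, hz, hne, hzu, hpred⟩ :=
      hG.exists_adj_of_triangle (H i) (H (i + 1)) u (H (i - 1)) (h.adj i) hi hsucc
    rcases h.span z with rfl | rfl | ⟨j, rfl⟩
    · exact absurd rfl hzu
    · exact hz
    · exact ((h.eq_of_adj _ _ hz).elim hne hpred).elim
  · obtain ⟨z, hz, hne, hzu, hnext⟩ :=
      hG.exists_adj_of_triangle (H (i + 1)) (H i) u (H (i + 1 + 1)) (h.adj i).symm hsucc hi
    rcases h.span z with rfl | rfl | ⟨j, rfl⟩
    · exact absurd rfl hzu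
    · exact hz
    · exact ((h.eq_of_adj _ _ hz).elim hnext (by simpa using hne)).elim

theorem adj_both_of_adj_both {i : ℤ} (hi : G.Adj (H i) u ∧ G.Adj (H i) w) (j : ℤ) :
    G.Adj (H j) u ∧ G.Adj (H j) w := by
  refine forall_of_periodic (N := N) (Q := fun i => G.Adj (H i) u ∧ G.Adj (H i) w) h.pos hi
    (fun i hi => ?_) (fun i => ?_) j
  · rcases h.adj_left_or_right hG (i + 1) with hsucc | hsucc
    · exact ⟨hsucc, (h.adj_right_of_adj_left hG hi.1 hsucc).2⟩
    · exact ⟨(h.symm.adj_right_of_adj_left hG hi.2 hsucc).2, hsucc⟩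
  · rw [h.apply_add]
    exact id

theorem adj_left_iff (hnot : ∀ i, G.Adj (H i) u → ¬ G.Adj (H i) w) (h₀ : G.Adj (H 0) u) (k : ℕ) :
    G.Adj (H k) u ↔ k % 2 = 0 := by
  induction k with
  | zero => simpa using h₀
  | succ k ih =>
    have halternate : G.Adj (H (k + 1)) u ↔ ¬ G.Adj (H k) u := by
      refine ⟨fun hsucc hk => hnot _ hk (h.adj_right_of_adj_left hG hk hsucc).1, fun hk => ?_⟩
      have hkw := (h.adj_left_or_right hG k).resolve_left hk
      exact (h.adj_left_or_right hG _).resolve_right fun hsucc =>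
        hk (h.symm.adj_right_of_adj_left hG hkw hsucc).1
    push_cast
    rw [halternate, ih]
    omega

theorem exists_nonempty_iso_of_alternating (hN : 4 ≤ N)
    (hnot : ∀ i, G.Adj (H i) u → ¬ G.Adj (H i) w) (h₀ : G.Adj (H 0) u) :
    ∃ n, 3 ≤ n ∧ (Nonempty (G ≃g mobiusLadder n) ∨ Nonempty (G ≃g altDoubleWheel n)) := by
  have hu := h.adj_left_iff hG hnot h₀
  have hw (k : ℕ) : G.Adj (H k) w ↔ k % 2 = 1 := by
    rw [← Nat.mod_two_ne_zero, Ne, ← hu k]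
    exact ⟨fun hkw hku => hnot _ hku hkw, (h.adj_left_or_right hG k).resolve_left⟩
  have heven : N % 2 = 0 := by
    rw [← hu N, ← zero_add (N : ℤ), h.apply_add]
    exact h₀
  obtain ⟨n, rfl⟩ := Nat.dvd_of_mod_eq_zero heven
  obtain ⟨e⟩ := h.nonempty_iso_altDoubleWheel hu hw
  rcases (show 2 ≤ n by omega).eq_or_lt with rfl | hn
  · exact ⟨3, le_rfl, Or.inl (nonempty_altDoubleWheel_two_iso_mobiusLadder_three.map e.trans)⟩
  · exact ⟨n, hn, Or.inr ⟨e⟩⟩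

theorem exists_nonempty_iso (hN : 4 ≤ N) :
    ∃ n, 3 ≤ n ∧ (Nonempty (G ≃g mobiusLadder n) ∨ Nonempty (G ≃g doubleWheel n) ∨
      Nonempty (G ≃g altDoubleWheel n)) := by
  by_cases hboth : ∃ i, G.Adj (H i) u ∧ G.Adj (H i) w
  · obtain ⟨i, hi⟩ := hboth
    exact ⟨N, by omega, Or.inr (Or.inl
      (h.nonempty_iso_doubleWheel fun j => h.adj_both_of_adj_both hG hi j))⟩
  · push Not at hboth
    suffices halt : ∃ n, 3 ≤ n ∧
        (Nonempty (G ≃g mobiusLadder n) ∨ Nonempty (G ≃g altDoubleWheel n)) by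
      obtain ⟨n, hn, e⟩ := halt
      exact ⟨n, hn, e.imp_right Or.inr⟩
    rcases h.adj_left_or_right hG 0 with h₀ | h₀
    · exact h.exists_nonempty_iso_of_alternating hG hN hboth h₀
    · exact h.symm.exists_nonempty_iso_of_alternating hG hN (fun i hw hu => hboth i hu hw) h₀

end Admissible
end HubbedCycle
end HubbedCycle

section InducedPath
variable {V : Type*} {G : SimpleGraph V}

/-- The list `l` spans no edge of `G` except possibly between consecutive entries. -/
def IsChordless (G : SimpleGraph V) (l : List V) : Prop :=
  ∀ ⦃A x M y B⦄, l = A ++ x :: (M ++ y :: B) → G.Adj x y → M = []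

theorem IsChordless.of_cons {x : V} {l : List V} (h : IsChordless G (x :: l)) :
    IsChordless G l := fun A _ _ _ _ e => h (A := x :: A) (congrArg _ e)

theorem IsChordless.concat {l : List V} {y z : V} (h : IsChordless G (l ++ [y]))
    (hz : ∀ x ∈ l, ¬ G.Adj x z) : IsChordless G (l ++ [y, z]) := by
  intro A x M w B e hadj
  rcases B.eq_nil_or_concat' with rfl | ⟨B, b, rfl⟩
  · have e' : (l ++ [y]) ++ [z] = (A ++ x :: M) ++ [w] := by simpa using e
    obtain ⟨hl, hzw⟩ := List.append_inj' e' rfl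
    obtain rfl : z = w := by simpa using hzw
    rcases M.eq_nil_or_concat' with rfl | ⟨M, m, rfl⟩
    · rfl
    · have hlM : l ++ [y] = (A ++ x :: M) ++ [m] := by simpa using hl
      exact absurd hadj (hz x (by simp [(List.append_inj' hlM rfl).1]))
  · have e' : (l ++ [y]) ++ [z] = (A ++ x :: (M ++ w :: B)) ++ [b] := by simpa using e
    exact h (List.append_inj' e' rfl).1 hadj

theorem exists_eq_append_getElem {l : List V} {s t : ℕ} (hst : s < t) (ht : t < l.length) :
    ∃ A M B, l = A ++ l[s] :: (M ++ l[t] :: B) ∧ A.length = s ∧ M.length = t - s - 1 := by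
  refine ⟨l.take s, (l.drop (s + 1)).take (t - s - 1), l.drop (t + 1), ?_, by simp; omega,
    by simp; omega⟩
  have hdrop : l.drop t = (l.drop (s + 1)).drop (t - s - 1) := by
    rw [List.drop_drop]
    congr 1
    omega
  rw [← List.drop_eq_getElem_cons ht, hdrop, List.take_append_drop, ← List.drop_eq_getElem_cons,
    List.take_append_drop]

theorem IsChordless.eq_add_one_or {x z : V} {m : List V} (h : IsChordless G (x :: m))
    (h' : IsChordless G (m ++ [z])) {s t : ℕ} (hst : s < t) (ht : t < (x :: (m ++ [z])).length)
    (hadj : G.Adj (x :: (m ++ [z]))[s] (x :: (m ++ [z]))[t]) :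
    t = s + 1 ∨ s = 0 ∧ t + 1 = (x :: (m ++ [z])).length := by
  obtain ⟨A, M, B, e, hA, hM⟩ := exists_eq_append_getElem hst ht
  have hlen := congrArg List.length e
  rcases A with _ | ⟨a, A⟩
  · rcases B.eq_nil_or_concat' with rfl | ⟨B, b, rfl⟩
    · simp only [List.length_append, List.length_cons, List.length_nil] at *
      omega
    · have e' : (x :: m) ++ [z] =
          ((x :: (m ++ [z]))[s] :: (M ++ (x :: (m ++ [z]))[t] :: B)) ++ [b] := by simpa using e
      have hM' : M = [] := h (A := []) (List.append_inj' e' rfl).1 hadj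
      simp only [hM', List.length_nil] at hM hA
      omega
  · have hM' : M = [] := h' (List.cons.inj e).2 hadj
    simp only [hM', List.length_nil] at hM
    omega

theorem IsChordless.cyclicSeq_eq_of_adj {x z : V} {m : List V} (h : IsChordless G (x :: m))
    (h' : IsChordless G (m ++ [z]))
    (hcyc : CycleSeq G ((m ++ [z]).length + 1) (cyclicSeq x (m ++ [z]))) (i j : ℤ)
    (hadj : G.Adj (cyclicSeq x (m ++ [z]) i) (cyclicSeq x (m ++ [z]) j)) :
    cyclicSeq x (m ++ [z]) j = cyclicSeq x (m ++ [z]) (i + 1) ∨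
      cyclicSeq x (m ++ [z]) j = cyclicSeq x (m ++ [z]) (i - 1) := by
  set N := (m ++ [z]).length + 1 with hN
  have key {s t : Fin N} (hst : s.val < t.val)
      (hadj : G.Adj (cyclicSeq x (m ++ [z]) s) (cyclicSeq x (m ++ [z]) t)) :
      (t - s : ℤ) = 1 ∨ (t - s : ℤ) = N - 1 := by
    rw [cyclicSeq_of_lt s.2, cyclicSeq_of_lt t.2] at hadj
    have := h.eq_add_one_or h' hst t.2 hadj
    rw [List.length_cons, ← hN] at this
    omega
  obtain ⟨s, hs⟩ := hcyc.exists_fin_apply_eq i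
  obtain ⟨t, ht⟩ := hcyc.exists_fin_apply_eq j
  rw [← hs, ← ht] at hadj
  rw [hcyc.inj] at hs ht
  obtain ⟨c, hc⟩ := dvd_sub hs ht
  have hstep : (t - s : ℤ) = 1 ∨ (t - s : ℤ) = N - 1 ∨ (t - s : ℤ) = -1 ∨
      (t - s : ℤ) = -(N - 1) := by
    rcases lt_trichotomy s.val t.val with hst | hst | hst
    · have := key hst hadj
      omega
    · exact (hadj.ne (by rw [hst])).elim
    · have := key hst hadj.symm
      omega
  rw [hcyc.inj, hcyc.inj]
  rcases hstep with e | e | e | e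
  · exact .inl ⟨c, by rw [← hc]; omega⟩
  · exact .inr ⟨c + 1, by rw [mul_add, ← hc]; omega⟩
  · exact .inr ⟨c, by rw [← hc]; omega⟩
  · exact .inl ⟨c - 1, by rw [mul_sub, ← hc]; omega⟩

end InducedPath

section SinglePath
variable {V : Type*} [DecidableEq V] {G : SimpleGraph V} {S : K33Subdiv G}

namespace K33Subdiv

/-- Only the edge from `a 0` to `b 0` is subdivided. -/
def HasSinglePath (S : K33Subdiv G) : Prop :=
  ∀ i j : Fin 3, i ≠ 0 ∨ j ≠ 0 → S.path i j = []

theorem HasSinglePath.transpose (h : S.HasSinglePath) : S.transpose.HasSinglePath :=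
  fun i j hij => List.reverse_eq_nil_iff.2 (h j i hij.symm)

theorem HasSinglePath.adj (h : S.HasSinglePath) (i j : Fin 3) (hij : i ≠ 0 ∨ j ≠ 0) :
    G.Adj (S.a i) (S.b j) := by
  simpa only [h i j hij, link_nil] using S.link i j

theorem HasSinglePath.count_eq_one (h : S.HasSinglePath) (hG : Admissible G) (v : V) :
    [S.a 0, S.a 1, S.a 2, S.b 0, S.b 1, S.b 2].count v + (S.path 0 0).count v = 1 := by
  have hv := S.occ_eq_one hG v
  simp only [occ, h 0 1 (by decide), h 0 2 (by decide), h 1 0 (by decide), h 1 1 (by decide),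
    h 1 2 (by decide), h 2 0 (by decide), h 2 1 (by decide), h 2 2 (by decide),
    List.count_nil] at hv
  simp only [count_cons_hit, List.count_nil]
  omega

theorem isChordless_path (S : K33Subdiv G) (hG : Admissible G) :
    IsChordless G (S.a 0 :: (S.path 0 0 ++ [S.b 0])) := by
  rintro (_ | ⟨z, A⟩) x M y B e h
  · simp only [List.nil_append, List.cons.injEq] at e
    obtain ⟨rfl, e⟩ := e
    rcases B.eq_nil_or_concat' with rfl | ⟨B, z, rfl⟩
    · obtain ⟨hM, hy⟩ := List.append_inj' e rfl
      obtain rfl := List.singleton_inj.1 hy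
      rw [← hM]
      exact S.path_eq_nil_of_adj hG h
    · have e' : S.path 0 0 ++ [S.b 0] = (M ++ y :: B) ++ [z] := by simpa using e
      exact S.eq_nil_of_adj_left hG (List.append_inj' e' rfl).1 h
  · have e := (List.cons.inj e).2
    rcases B.eq_nil_or_concat' with rfl | ⟨B, z, rfl⟩
    · have e' : S.path 0 0 ++ [S.b 0] = (A ++ x :: M) ++ [y] := by simpa using e
      obtain ⟨hP, hy⟩ := List.append_inj' e' rfl
      obtain rfl := List.singleton_inj.1 hy
      exact S.eq_nil_of_adj_right hG hP h
    · have e' : S.path 0 0 ++ [S.b 0] = (A ++ x :: (M ++ y :: B)) ++ [z] := by simpa using e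
      exact S.eq_nil_of_adj_mid hG (List.append_inj' e' rfl).1 h

/-- The cycle through the subdivided edge that is closed up through `a 2` and `b 2`, listed without
its first vertex `a 0`. -/
def rim (S : K33Subdiv G) : List V := S.path 0 0 ++ [S.b 0, S.a 2] ++ [S.b 2]

theorem HasSinglePath.count_rim (h : S.HasSinglePath) (hG : Admissible G) (v : V) :
    (S.a 0 :: S.rim).count v + hit v (S.a 1) + hit v (S.b 1) = 1 := by
  have := h.count_eq_one hG v
  simp only [rim, List.count_append, count_cons_hit, List.count_nil] at this ⊢
  omega

theorem HasSinglePath.cycleSeq_rim (h : S.HasSinglePath) (hG : Admissible G) :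
    CycleSeq G (S.rim.length + 1) (cyclicSeq (S.a 0) S.rim) := by
  refine cycleSeq_cyclicSeq (List.nodup_iff_count_le_one.2 fun v => ?_) ?_
  · have := h.count_rim hG v
    omega
  · simp only [rim, link_append, link_cons, link_nil]
    exact ⟨⟨S.link 0 0, (h.adj 2 0 (by decide)).symm, h.adj 2 2 (by decide)⟩,
      (h.adj 0 2 (by decide)).symm⟩

theorem HasSinglePath.hubbedCycle (h : S.HasSinglePath) (hG : Admissible G)
    (ha : ¬ G.Adj (S.a 0) (S.a 2)) (hb : ¬ G.Adj (S.b 0) (S.b 2))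
    (hpath : ∀ p ∈ S.path 0 0, ¬ G.Adj p (S.a 2) ∧ ¬ G.Adj p (S.b 2)) :
    HubbedCycle G (S.rim.length + 1) (cyclicSeq (S.a 0) S.rim) (S.a 1) (S.b 1) := by
  have hinit : IsChordless G (S.a 0 :: (S.path 0 0 ++ [S.b 0, S.a 2])) :=
    (S.isChordless_path hG).concat (l := S.a 0 :: S.path 0 0)
      (List.forall_mem_cons.2 ⟨ha, fun p hp => (hpath p hp).1⟩)
  have hrim : IsChordless G S.rim := by
    suffices IsChordless G ((S.path 0 0 ++ [S.b 0]) ++ [S.a 2, S.b 2]) by simpa [rim] using this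
    refine IsChordless.concat (by simpa using hinit.of_cons) fun p hp => ?_
    rcases List.mem_append.1 hp with hp | hp
    · exact (hpath p hp).2
    · rwa [List.mem_singleton.1 hp]
  have hne {v : V} (hv : 0 < hit v (S.a 1) + hit v (S.b 1)) (i : ℤ) :
      cyclicSeq (S.a 0) S.rim i ≠ v := fun e => by
    have hmem := List.count_pos_iff.2 (exists_cyclicSeq_eq_iff.1 ⟨i, e⟩)
    have := h.count_rim hG v
    omega
  refine ⟨h.cycleSeq_rim hG, hinit.cyclicSeq_eq_of_adj hrim (h.cycleSeq_rim hG),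
    h.adj 1 1 (by decide), hne ?_, hne ?_, fun v => ?_⟩
  · rw [hit_self]; omega
  · rw [hit_self]; omega
  · by_contra! hv
    have := h.count_rim hG v
    rw [hit_of_ne hv.1.symm, hit_of_ne hv.2.1.symm,
      List.count_eq_zero.2 (exists_cyclicSeq_eq_iff.not.1 (not_exists.2 hv.2.2))] at this
    omega

end K33Subdiv
end SinglePath

section LongestPath
variable {V : Type*} [DecidableEq V] {G : SimpleGraph V}

/-- No subdivision of `K33` in `G` has an edge of `G` between the interiors of two subdivided edges
without a common end. -/
def NoCrossing (G : SimpleGraph V) : Prop :=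
  ∀ S : K33Subdiv G, ∀ i i' j j' : Fin 3, i ≠ i' → j ≠ j' →
    ∀ p ∈ S.path i j, ∀ q ∈ S.path i' j', ¬ G.Adj p q

namespace K33Subdiv

theorem mem_cases (S : K33Subdiv G) (hG : Admissible G) (v : V) :
    (∃ i, v = S.a i) ∨ (∃ j, v = S.b j) ∨ ∃ i j, v ∈ S.path i j := by
  by_contra! hv
  have ha : ∀ i, hit v (S.a i) = 0 := fun i => hit_of_ne (hv.1 i).symm
  have hb : ∀ j, hit v (S.b j) = 0 := fun j => hit_of_ne (hv.2.1 j).symm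
  have hpath : ∀ i j, (S.path i j).count v = 0 := fun i j => List.count_eq_zero.2 (hv.2.2 i j)
  simpa [occ, ha, hb, hpath] using S.occ_eq_one hG v

theorem finite (S : K33Subdiv G) (hG : Admissible G) : Finite V := by
  have hpath : (⋃ i, ⋃ j, {v | v ∈ S.path i j}).Finite :=
    Set.finite_iUnion fun i => Set.finite_iUnion fun j => (S.path i j).finite_toSet
  refine Set.finite_univ_iff.1
    (((Set.finite_range S.a).union ((Set.finite_range S.b).union hpath)).subset fun v _ => ?_)
  rcases S.mem_cases hG v with ⟨i, rfl⟩ | ⟨j, rfl⟩ | ⟨i, j, hv⟩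
  · exact .inl ⟨i, rfl⟩
  · exact .inr (.inl ⟨j, rfl⟩)
  · exact .inr (.inr (Set.mem_iUnion₂.2 ⟨i, j, hv⟩))

theorem nodup_path (S : K33Subdiv G) (i j : Fin 3) : (S.path i j).Nodup := by
  refine List.nodup_iff_count_le_one.2 fun v => ?_
  have hj : (S.path i j).count v ≤ ∑ j, (S.path i j).count v :=
    Finset.single_le_sum_of_canonicallyOrdered (f := fun j => (S.path i j).count v)
      (Finset.mem_univ j)
  have hi : ∑ j, (S.path i j).count v ≤ ∑ i, ∑ j, (S.path i j).count v :=
    Finset.single_le_sum_of_canonicallyOrdered (f := fun i => ∑ j, (S.path i j).count v)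
      (Finset.mem_univ i)
  have := S.sum_le_one v
  omega

theorem adj_cases (S : K33Subdiv G) (hG : Admissible G) (hno : NoCrossing G) {i j : Fin 3}
    {A B : List V} {p w : V} (hP : S.path i j = A ++ p :: B) (h : G.Adj p w) :
    (∃ i', i ≠ i' ∧ w = S.a i') ∨ (∃ j', j ≠ j' ∧ w = S.b j') ∨ w = A.getLastD (S.a i) ∨
      w = B.headD (S.b j) := by
  have hp : p ∈ S.path i j := by simp [hP]
  rcases S.mem_cases hG w with ⟨i', rfl⟩ | ⟨j', rfl⟩ | ⟨i', j', hw⟩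
  · by_cases hi : i = i'
    · subst hi
      simp [S.eq_nil_of_adj_left hG hP h.symm]
    · exact .inl ⟨i', hi, rfl⟩
  · by_cases hj : j = j'
    · subst hj
      simp [S.eq_nil_of_adj_right hG hP h]
    · exact .inr (.inl ⟨j', hj, rfl⟩)
  · obtain rfl : i = i' := by
      by_contra hi
      by_cases hj : j = j'
      · subst hj
        exact S.not_adj_of_same_col hG hi hp hw h
      · exact hno S _ _ _ _ hi hj p hp w hw h
    obtain rfl : j = j' := by
      by_contra hj
      exact S.not_adj_of_same_row hG hj hp hw h
    rw [hP, List.mem_append, List.mem_cons] at hw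
    rcases hw with hw | rfl | hw
    · obtain ⟨A₁, A₂, rfl⟩ := List.append_of_mem hw
      have := S.eq_nil_of_adj_mid hG (A := A₁) (M := A₂) (by simpa using hP) h.symm
      simp [this]
    · exact absurd h (G.irrefl)
    · obtain ⟨B₁, B₂, rfl⟩ := List.append_of_mem hw
      have := S.eq_nil_of_adj_mid hG hP h
      simp [this]

theorem exists_adj_a_of_path_eq_cons (S : K33Subdiv G) (hG : Admissible G) (hno : NoCrossing G)
    {i j : Fin 3} {B : List V} {p : V} (hP : S.path i j = p :: B) :
    ∃ i', i ≠ i' ∧ G.Adj p (S.a i') := by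
  by_contra! hp_a
  have hp : p ∈ S.path i j := by simp [hP]
  have hpa : G.Adj p (S.a i) := by
    have := S.link i j
    rw [hP] at this
    exact this.1.symm
  have hnbr {w : V} (hw : G.Adj p w) :
      w = S.a i ∨ w = B.headD (S.b j) ∨ ∃ j', j ≠ j' ∧ w = S.b j' := by
    rcases S.adj_cases hG hno (A := []) hP hw with ⟨i', hi, rfl⟩ | hb | ha | hB
    exacts [absurd hw (hp_a i' hi), .inr (.inr hb), .inl ha, .inr (.inl hB)]
  obtain ⟨z, hpz, hza, hzB⟩ := hG.exists_adj_ne_ne p (S.a i) (B.headD (S.b j))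
  obtain ⟨j', hj, rfl⟩ := ((hnbr hpz).resolve_left hza).resolve_left hzB
  have hab : G.Adj (S.a i) (S.b j') := by
    simpa only [S.path_eq_nil_of_adj_b hG hj hp hpz, link_nil] using S.link i j'
  obtain ⟨w, hpw, hwa, hwb, hwB⟩ :=
    hG.exists_adj_of_triangle p (S.a i) (S.b j') (B.headD (S.b j)) hpa hpz hab
  obtain ⟨k, hk, rfl⟩ := ((hnbr hpw).resolve_left hwa).resolve_left hwB
  exact S.not_adj_two_b hG hj hk (fun e => hwb (e ▸ rfl)) hp hp hpz hpw

theorem exists_adj_b_of_path_eq_concat (S : K33Subdiv G) (hG : Admissible G) (hno : NoCrossing G)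
    {i j : Fin 3} {B : List V} {p : V} (hP : S.path i j = B ++ [p]) :
    ∃ j', j ≠ j' ∧ G.Adj p (S.b j') :=
  S.transpose.exists_adj_a_of_path_eq_cons hG hno (i := j) (j := i) (B := B.reverse)
    (by simp [transpose, hP])

theorem exists_shift (S : K33Subdiv G) {i i' i'' j : Fin 3} (h12 : i ≠ i') (h13 : i ≠ i'')
    (h23 : i' ≠ i'') {A B : List V} {p : V} (hP : S.path i j = A ++ p :: B)
    (h : G.Adj p (S.a i')) :
    ∃ T : K33Subdiv G, T.path i'' j = S.path i'' j ++ S.b j :: B.reverse ∧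
      ∀ k l, l ≠ j → T.path k l = S.path k l := by
  obtain ⟨σ, rfl, rfl, rfl⟩ := exists_perm h12 h13 h23
  have hP' : (S.permute σ (Equiv.swap 0 j)).path 0 0 = A ++ p :: B := by simpa [permute] using hP
  let T := (S.permute σ (Equiv.swap 0 j)).shift hP' h
  have hT (m n : Fin 3) (hn : n ≠ 0) : T.path m n = (S.permute σ (Equiv.swap 0 j)).path m n := by
    fin_cases m <;> fin_cases n <;> first | exact absurd rfl hn | rfl
  refine ⟨T.permute σ⁻¹ (Equiv.swap 0 j), ?_, fun k l hl => ?_⟩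
  · have hshift : T.path 2 0 = S.path (σ 2) j ++ S.b j :: B.reverse := by
      simp [T, shift, permute, ofEntries]
    simpa [permute] using hshift
  · have hl' : Equiv.swap 0 j l ≠ 0 := fun e => hl (by simpa using congrArg (Equiv.swap 0 j) e)
    simpa [permute] using hT (σ⁻¹ k) _ hl'

/-- The subdivided edge from `a 0` to `b 0` is at least as long as any subdivided edge of any
subdivision of `K33` in `G`. -/
def IsLongest (S : K33Subdiv G) : Prop :=
  ∀ (T : K33Subdiv G) i j, (T.path i j).length ≤ (S.path 0 0).length

theorem exists_isLongest [Finite V] (S : K33Subdiv G) : ∃ T : K33Subdiv G, T.IsLongest := by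
  have := Fintype.ofFinite V
  let length (x : K33Subdiv G × Fin 3 × Fin 3) : ℕ := (x.1.path x.2.1 x.2.2).length
  have hbdd : BddAbove (Set.range length) := by
    refine ⟨Fintype.card V, ?_⟩
    rintro _ ⟨x, rfl⟩
    exact (x.1.nodup_path _ _).length_le_card
  obtain ⟨⟨T, i, j⟩, hT⟩ := Nat.sSup_mem ⟨length (S, 0, 0), Set.mem_range_self _⟩ hbdd
  refine ⟨T.permute (Equiv.swap 0 i) (Equiv.swap 0 j), fun R k l => ?_⟩
  have hRT : length (R, k, l) ≤ length (T, i, j) := hT ▸ le_csSup hbdd ⟨_, rfl⟩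
  simpa [permute, length] using hRT

namespace IsLongest
variable {S : K33Subdiv G}

theorem transpose (h : S.IsLongest) : S.transpose.IsLongest := fun T i j => by
  simpa [K33Subdiv.transpose] using h T i j

theorem path_col_eq_nil (h : S.IsLongest) (hG : Admissible G) (hno : NoCrossing G) {i : Fin 3}
    (hi : i ≠ 0) : S.path i 0 = [] := by
  rcases hP : S.path i 0 with _ | ⟨p, B⟩
  · rfl
  exfalso
  obtain ⟨i', hii', hadj⟩ := S.exists_adj_a_of_path_eq_cons hG hno hP
  by_cases hi' : i' = 0
  · subst hi'
    have := h S i 0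
    simp [hP, S.path_eq_nil_of_adj_a hG hii' (j := 0) (by simp [hP]) hadj] at this
  · obtain ⟨T, hT, -⟩ := S.exists_shift hii' hi hi' (A := []) hP hadj
    have := h T 0 0
    rw [hT, List.length_append, List.length_cons] at this
    omega

theorem path_row_eq_nil (h : S.IsLongest) (hG : Admissible G) (hno : NoCrossing G) {j : Fin 3}
    (hj : j ≠ 0) : S.path 0 j = [] :=
  List.reverse_eq_nil_iff.1 (h.transpose.path_col_eq_nil hG hno hj)

theorem path_eq_nil_of_ne (h : S.IsLongest) (hG : Admissible G) (hno : NoCrossing G) {i j : Fin 3}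
    (hi : i ≠ 0) (hj : j ≠ 0) : S.path i j = [] := by
  rcases (S.path i j).eq_nil_or_concat' with hP | ⟨B, q, hP⟩
  · exact hP
  exfalso
  have hq : q ∈ S.path i j := by simp [hP]
  obtain ⟨j', hjj', hadj⟩ := S.exists_adj_b_of_path_eq_concat hG hno hP
  by_cases hj' : j' = 0
  · subst hj'
    rcases hP₀ : S.path 0 0 with _ | ⟨p, C⟩
    · have := h S i j
      simp [hP, hP₀] at this
    obtain ⟨x, hx, hpx⟩ := S.exists_adj_a_of_path_eq_cons hG hno hP₀
    obtain ⟨y, hy, hxy⟩ := exists_ne_ne 0 x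
    obtain ⟨T, hT, hT'⟩ := S.exists_shift hx hy hxy (A := []) hP₀ hpx
    have hb : S.b 0 ∈ T.path y 0 := by simp [hT]
    have hqT : q ∈ T.path i j := by rwa [hT' _ _ hj]
    by_cases hiy : i = y
    · subst hiy
      exact T.not_adj_of_same_row hG hj hqT hb hadj
    · exact hno T _ _ _ _ hiy hj q hqT _ hb hadj
  · obtain ⟨T, hT, hT'⟩ := S.transpose.exists_shift (i := j) (i' := j') (i'' := 0) (j := i) hjj' hj
      hj' (A := []) (B := B.reverse) (p := q) (by simp [K33Subdiv.transpose, hP]) hadj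
    have hlong : T.transpose.IsLongest := fun R k l => by
      simpa [K33Subdiv.transpose, hT' 0 0 hi.symm] using h R k l
    have := hlong.path_col_eq_nil hG hno hi
    simp [K33Subdiv.transpose, hT] at this

theorem hasSinglePath (h : S.IsLongest) (hG : Admissible G) (hno : NoCrossing G) :
    S.HasSinglePath := by
  intro i j hij
  by_cases hi : i = 0
  · subst hi
    exact h.path_row_eq_nil hG hno (hij.resolve_left fun h => h rfl)
  by_cases hj : j = 0
  · subst hj
    exact h.path_col_eq_nil hG hno hi
  · exact h.path_eq_nil_of_ne hG hno hi hj

end IsLongest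
end K33Subdiv
end LongestPath

theorem nonempty_iso_squareCycle_seven {V : Type*} {G : SimpleGraph V} {f : Fin 7 → V}
    (hf : Function.Bijective f) (h₁ : ∀ i, G.Adj (f i) (f (i + 1)))
    (h₂ : ∀ i, G.Adj (f i) (f (i + 2))) (h₃ : ∀ i, ¬ G.Adj (f i) (f (i + 3))) :
    Nonempty (G ≃g squareCycle 7) := by
  have hback (i d e : Fin 7) (h : d + e = 0) :
      G.Adj (f i) (f (i + d)) ↔ G.Adj (f (i + d)) (f (i + d + e)) := by
    rw [add_assoc, h, add_zero, adj_comm]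
  refine nonempty_iso_of_bijective hf fun i j hij => ?_
  obtain ⟨d, rfl⟩ : ∃ d, j = i + d := ⟨j - i, by simp⟩
  rw [squareCycle, fromRel_adj]
  fin_cases d
  · simp at hij
  · exact iff_of_true (h₁ i) (by revert i; decide)
  · exact iff_of_true (h₂ i) (by revert i; decide)
  · exact iff_of_false (h₃ i) (by revert i; decide)
  · exact iff_of_false (fun h => h₃ (i + 4) ((hback i 4 3 rfl).1 h)) (by revert i; decide)
  · exact iff_of_true ((hback i 5 2 rfl).2 (h₂ (i + 5))) (by revert i; decide)
  · exact iff_of_true ((hback i 6 1 rfl).2 (h₁ (i + 6))) (by revert i; decide)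

section SmallCases
variable {V : Type*} [DecidableEq V] {G : SimpleGraph V} {S : K33Subdiv G}

theorem isMinor_K5plus_of_lists {L : Fin 5 → List V} {l : List V}
    (hL : ∀ i, ListConnected G (L i)) (hl : ListConnected G l)
    (hcount : ∀ v, ∑ i, (L i).count v + l.count v ≤ 1)
    (hLL : ∀ i j, i < j → Touch G (L i) (L j)) (hl0 : Touch G l (L 0)) : IsMinor K5plus G := by
  refine isMinor_fromRel (fun w : Option (Fin 5) => w.elim l L) ?_ (fun v => ?_) ?_
  · rintro (_ | i)
    exacts [hl, hL i]
  · simpa only [Fintype.sum_option, Option.elim, add_comm] using hcount v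
  · rintro (_ | i) (_ | j) - h
    · exact h.elim
    · exact (show j = 0 from h) ▸ hl0
    · exact h.elim
    · rcases lt_or_gt_of_ne h with hij | hij
      exacts [hLL i j hij, (hLL j i hij).symm]

theorem bijective_get_of_count_eq_one {l : List V} (h : ∀ v, l.count v = 1) :
    Function.Bijective l.get :=
  ⟨List.nodup_iff_injective_get.1 (List.nodup_iff_count_le_one.2 fun v => (h v).le),
    fun v => List.mem_iff_get.1 (List.count_pos_iff.1 (by rw [h v]; exact one_pos))⟩

namespace K33Subdiv

theorem isMinor_K5plus_of_adj (S : K33Subdiv G) (hnil : ∀ i j, S.path i j = [])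
    (ha : ∀ i j, i ≠ j → G.Adj (S.a i) (S.a j)) (hb : G.Adj (S.b 0) (S.b 1)) :
    IsMinor K5plus G := by
  have hab (i j) : G.Adj (S.a i) (S.b j) := by simpa only [hnil, link_nil] using S.link i j
  refine isMinor_K5plus_of_lists
    (L := fun i => [![S.a 0, S.a 1, S.a 2, S.b 0, S.b 1] i]) (l := [S.b 2])
    (fun i => listConnected_singleton _) (listConnected_singleton _) (fun v => ?_)
    (fun i j hij => ?_) (touch_singleton.2 (hab 0 2).symm)
  · have := S.occ_le_one v
    simp only [occ] at this
    simp only [Fin.sum_univ_five, count_cons_hit, List.count_nil, Matrix.cons_val_zero,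
      Matrix.cons_val_one, Matrix.cons_val]
    omega
  · refine touch_singleton.2 ?_
    fin_cases i <;> fin_cases j <;>
      first | exact absurd hij (by decide) | exact ha _ _ (by decide) | exact hab _ _ | exact hb

theorem exists_not_adj_a (S : K33Subdiv G) (hG : Admissible G) (hnil : ∀ i j, S.path i j = []) :
    ∃ i j, i ≠ j ∧ ¬ G.Adj (S.a i) (S.a j) := by
  by_contra! ha
  have hab (i j) : G.Adj (S.a i) (S.b j) := by simpa only [hnil, link_nil] using S.link i j
  obtain ⟨w, hw, hw₀, hw₁, hw₂⟩ := hG.exists_adj_of_triangle (S.b 0) (S.a 0) (S.a 1) (S.a 2)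
    (hab _ _).symm (hab _ _).symm (ha _ _ (by decide))
  rcases S.mem_cases hG w with ⟨i, rfl⟩ | ⟨j, rfl⟩ | ⟨i, j, hij⟩
  · fin_cases i
    exacts [hw₀ rfl, hw₁ rfl, hw₂ rfl]
  · have hj : 0 ≠ j := fun h => hw.ne (congrArg _ h)
    obtain ⟨τ, h₀, rfl⟩ := exists_perm_of_ne hj
    refine hG.not_K5plus ((S.permute 1 τ).isMinor_K5plus_of_adj (fun _ _ => hnil _ _)
      (fun i j => ha i j) ?_)
    simpa only [permute, h₀] using hw
  · simp [hnil] at hij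

theorem exists_not_adj_b (S : K33Subdiv G) (hG : Admissible G) (hnil : ∀ i j, S.path i j = []) :
    ∃ i j, i ≠ j ∧ ¬ G.Adj (S.b i) (S.b j) :=
  S.transpose.exists_not_adj_a hG fun i j => List.reverse_eq_nil_iff.2 (hnil j i)

theorem exists_nonempty_iso_of_path_eq_nil (S : K33Subdiv G) (hG : Admissible G)
    (hnil : ∀ i j, S.path i j = []) :
    ∃ n, 3 ≤ n ∧ (Nonempty (G ≃g mobiusLadder n) ∨ Nonempty (G ≃g doubleWheel n) ∨
      Nonempty (G ≃g altDoubleWheel n)) := by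
  obtain ⟨i, i', hi, ha⟩ := S.exists_not_adj_a hG hnil
  obtain ⟨j, j', hj, hb⟩ := S.exists_not_adj_b hG hnil
  obtain ⟨k, hk, hk'⟩ := exists_ne_ne i i'
  obtain ⟨l, hl, hl'⟩ := exists_ne_ne j j'
  obtain ⟨σ, rfl, -, rfl⟩ := exists_perm hk hi hk'.symm
  obtain ⟨τ, rfl, -, rfl⟩ := exists_perm hl hj hl'.symm
  have hsingle : (S.permute σ τ).HasSinglePath := fun _ _ _ => hnil _ _
  refine (hsingle.hubbedCycle hG ha hb fun p hp => ?_).exists_nonempty_iso hG (by simp [rim])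
  simp [permute, hnil] at hp

end K33Subdiv
end SmallCases

section NormalForm
variable {V : Type*} [DecidableEq V] {G : SimpleGraph V} {S : K33Subdiv G} {p : V}

namespace K33Subdiv

/-- The normal form of a `K33Subdiv` with a nonempty path, necessarily the one from `a 0` to `b 0`:
among the branch vertices outside that path, its first vertex is adjacent to `a 1`, its last vertex
to `b 1`, and none of its vertices to `a 2` or `b 2`. -/
structure IsNormal (S : K33Subdiv G) : Prop where
  single : S.HasSinglePath
  ne_nil : S.path 0 0 ≠ []
  not_adj : ∀ p ∈ S.path 0 0, ¬ G.Adj p (S.a 2) ∧ ¬ G.Adj p (S.b 2)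
  adj_head : ∀ p B, S.path 0 0 = p :: B → G.Adj p (S.a 1)
  adj_last : ∀ B p, S.path 0 0 = B ++ [p] → G.Adj p (S.b 1)

namespace IsNormal

theorem transpose (h : S.IsNormal) : S.transpose.IsNormal where
  single := h.single.transpose
  ne_nil := fun e => h.ne_nil (List.reverse_eq_nil_iff.1 e)
  not_adj p hp := (h.not_adj p (List.mem_reverse.1 hp)).symm
  adj_head p B e := h.adj_last B.reverse p (by
    rw [← List.reverse_cons, ← e]; exact (List.reverse_reverse _).symm)
  adj_last B p e := h.adj_head p B.reverse (by
    rw [← List.reverse_concat', ← e]; exact (List.reverse_reverse _).symm)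

theorem exists_path_eq_singleton (h : S.IsNormal) (hG : Admissible G)
    (ha : G.Adj (S.a 0) (S.a 2)) : ∃ p, S.path 0 0 = [p] := by
  rcases hP : S.path 0 0 with _ | ⟨p, B⟩
  · exact absurd hP h.ne_nil
  rcases B.eq_nil_or_concat' with rfl | ⟨M, z, rfl⟩
  · exact ⟨p, rfl⟩
  exfalso
  have hlink := S.link 0 0
  rw [hP, link_cons, link_append] at hlink
  have hone := h.single.count_eq_one hG
  simp only [hP, List.count_append, count_cons_hit, List.count_nil] at hone
  -- `{a 0, a 1, z}` and `{b 0, b 1, p}` are the sides of another subdivision, which avoids `b 2`.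
  have hre := ofEntries_occ_eq_one hG (p₀₀ := [S.a 2]) (p₀₁ := []) (p₀₂ := []) (p₁₀ := [])
    (p₁₁ := []) (p₁₂ := []) (p₂₀ := []) (p₂₁ := []) (p₂₂ := M.reverse)
    ⟨ha, h.single.adj 2 0 (by decide)⟩ (h.single.adj 0 1 (by decide)) hlink.1
    (h.single.adj 1 0 (by decide)) (h.single.adj 1 1 (by decide)) (h.adj_head _ _ hP).symm
    hlink.2.2 (h.adj_last (p :: M) z hP) (link_reverse.2 hlink.2.1)
    (fun v => by
      have := hone v
      simp only [List.count_reverse, count_cons_hit, List.count_nil]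
      omega) (S.b 2)
  have := hone (S.b 2)
  simp only [List.count_reverse, count_cons_hit, List.count_nil, hit_self] at this hre
  omega

theorem count_eq_one_of_path_eq (h : S.IsNormal) (hG : Admissible G) (hP : S.path 0 0 = [p])
    (v : V) : [S.a 0, S.a 2, S.b 2, S.b 0, S.a 1, p, S.b 1].count v = 1 := by
  have := h.single.count_eq_one hG v
  simp only [hP, count_cons_hit, List.count_nil] at this ⊢
  omega

theorem link_of_path_eq (hP : S.path 0 0 = [p]) : G.Adj (S.a 0) p ∧ G.Adj p (S.b 0) := by
  simpa only [hP, link_cons, link_nil] using S.link 0 0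

theorem not_adj_b_one_two (h : S.IsNormal) (hG : Admissible G) (ha : G.Adj (S.a 0) (S.a 2)) :
    ¬ G.Adj (S.b 1) (S.b 2) := by
  intro hb
  obtain ⟨p, hP⟩ := h.exists_path_eq_singleton hG ha
  obtain ⟨hap, hpb⟩ := link_of_path_eq hP
  have hp₁ := h.adj_last [] p hP
  refine hG.not_K5h (isMinor_K5h_of_lists
    (L := fun i => [![p, S.a 2, S.b 2, S.a 0, S.b 1] i]) (l := [S.b 0]) (m := [S.a 1])
    (fun i => listConnected_singleton _) (listConnected_singleton _) (listConnected_singleton _)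
    (fun v => ?_) (fun i j hij hne => ?_) (touch_singleton.2 hpb)
    (touch_singleton.2 (h.single.adj 2 0 (by decide)))
    (touch_singleton.2 (h.adj_head p [] hP))
    (touch_singleton.2 (h.single.adj 1 2 (by decide)).symm)
    (touch_singleton.2 (h.single.adj 1 0 (by decide)).symm))
  · have := h.count_eq_one_of_path_eq hG hP v
    simp only [Fin.sum_univ_five, count_cons_hit, List.count_nil, Matrix.cons_val_zero,
      Matrix.cons_val_one, Matrix.cons_val] at this ⊢
    omega
  · refine touch_singleton.2 ?_
    fin_cases i <;> fin_cases j <;>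
      first
      | exact absurd hij (by decide)
      | exact absurd (by decide) hne
      | assumption
      | exact Adj.symm (by assumption)
      | exact h.single.adj _ _ (by decide)
      | exact (h.single.adj _ _ (by decide)).symm

theorem adj_b_zero_two (h : S.IsNormal) (hG : Admissible G) (ha : G.Adj (S.a 0) (S.a 2)) :
    G.Adj (S.b 0) (S.b 2) := by
  obtain ⟨p, hP⟩ := h.exists_path_eq_singleton hG ha
  obtain ⟨w, hw, hw₀, hw₂, hw₁⟩ := hG.exists_adj_of_triangle (S.b 2) (S.a 0) (S.a 2) (S.a 1)
    (h.single.adj 0 2 (by decide)).symm (h.single.adj 2 2 (by decide)).symm ha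
  have hmem : w ∈ [S.a 0, S.a 2, S.b 2, S.b 0, S.a 1, p, S.b 1] :=
    List.count_pos_iff.1 (by rw [h.count_eq_one_of_path_eq hG hP]; exact one_pos)
  simp only [List.mem_cons, List.not_mem_nil, or_false] at hmem
  rcases hmem with rfl | rfl | rfl | rfl | rfl | rfl | rfl
  · exact absurd rfl hw₀
  · exact absurd rfl hw₂
  · exact absurd rfl hw.ne
  · exact hw.symm
  · exact absurd rfl hw₁
  · exact absurd hw.symm (h.not_adj w (by simp [hP])).2
  · exact absurd hw.symm (h.not_adj_b_one_two hG ha)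

theorem not_adj_a_zero_one (h : S.IsNormal) (hG : Admissible G) (ha : G.Adj (S.a 0) (S.a 2)) :
    ¬ G.Adj (S.a 0) (S.a 1) := by
  intro ha'
  obtain ⟨p, hP⟩ := h.exists_path_eq_singleton hG ha
  obtain ⟨hap, hpb⟩ := link_of_path_eq hP
  have hone := h.count_eq_one_of_path_eq hG hP
  simp only [count_cons_hit, List.count_nil] at hone
  -- `{a 0, b 0, b 1}` and `{a 1, a 2, p}` span a `K_{3,3}` that avoids `b 2`.
  have hre := ofEntries_occ_eq_one hG (p₀₀ := []) (p₀₁ := []) (p₀₂ := []) (p₁₀ := []) (p₁₁ := [])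
    (p₁₂ := []) (p₂₀ := []) (p₂₁ := []) (p₂₂ := []) ha' ha hap
    (h.single.adj 1 0 (by decide)).symm (h.single.adj 2 0 (by decide)).symm hpb.symm
    (h.single.adj 1 1 (by decide)).symm (h.single.adj 2 1 (by decide)).symm
    (h.adj_last [] p hP).symm
    (fun v => by
      have := hone v
      simp only [List.count_nil]
      omega) (S.b 2)
  have := hone (S.b 2)
  simp only [List.count_nil, hit_self] at this hre
  omega

theorem nonempty_iso_squareCycle (h : S.IsNormal) (hG : Admissible G)
    (ha : G.Adj (S.a 0) (S.a 2)) : Nonempty (G ≃g squareCycle 7) := by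
  obtain ⟨p, hP⟩ := h.exists_path_eq_singleton hG ha
  obtain ⟨hap, hpb⟩ := link_of_path_eq hP
  have hb := h.adj_b_zero_two hG ha
  have hp := h.not_adj p (by simp [hP])
  have hab : ¬ G.Adj (S.a 0) (S.b 0) := fun e => h.ne_nil (S.path_eq_nil_of_adj hG e)
  have hadj (i j) (hij) := h.single.adj i j hij
  refine nonempty_iso_squareCycle_seven
    (bijective_get_of_count_eq_one (h.count_eq_one_of_path_eq hG hP)) (fun i => ?_) (fun i => ?_)
    (fun i => ?_) <;> fin_cases i
  exacts [ha, hadj 2 2 (by decide), hb.symm, (hadj 1 0 (by decide)).symm,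
    (h.adj_head p [] hP).symm, h.adj_last [] p hP, (hadj 0 1 (by decide)).symm,
    hadj 0 2 (by decide), hadj 2 0 (by decide), (hadj 1 2 (by decide)).symm, hpb.symm,
    hadj 1 1 (by decide), hap.symm, (hadj 2 1 (by decide)).symm,
    hab, fun e => h.transpose.not_adj_b_one_two hG hb e.symm, fun e => hp.2 e.symm,
    h.transpose.not_adj_a_zero_one hG hb, fun e => h.not_adj_a_zero_one hG ha e.symm, hp.1,
    h.not_adj_b_one_two hG ha]

end IsNormal
end K33Subdiv
end NormalForm

section Main
variable {V : Type*} {G : SimpleGraph V}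

namespace K33Subdiv
variable [DecidableEq V] {S : K33Subdiv G}

theorem HasSinglePath.permute (h : S.HasSinglePath) {σ τ : Equiv.Perm (Fin 3)} (hσ : σ 0 = 0)
    (hτ : τ 0 = 0) : (S.permute σ τ).HasSinglePath := fun i j hij =>
  h (σ i) (τ j) (hij.imp (fun hi e => hi (σ.injective (e.trans hσ.symm)))
    fun hj e => hj (τ.injective (e.trans hτ.symm)))

theorem HasSinglePath.exists_isNormal (h : S.HasSinglePath) (hG : Admissible G)
    (hno : NoCrossing G) (hne : S.path 0 0 ≠ []) : ∃ T : K33Subdiv G, T.IsNormal := by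
  obtain ⟨p, B, hP⟩ := List.exists_cons_of_ne_nil hne
  obtain ⟨C, z, hP'⟩ := (List.eq_nil_or_concat' (S.path 0 0)).resolve_left hne
  obtain ⟨i, hi, hp⟩ := S.exists_adj_a_of_path_eq_cons hG hno hP
  obtain ⟨j, hj, hz⟩ := S.exists_adj_b_of_path_eq_concat hG hno hP'
  obtain ⟨i', hi', hii'⟩ := exists_ne_ne 0 i
  obtain ⟨j', hj', hjj'⟩ := exists_ne_ne 0 j
  obtain ⟨σ, hσ₀, rfl, rfl⟩ := exists_perm hi hi' hii'
  obtain ⟨τ, hτ₀, rfl, rfl⟩ := exists_perm hj hj' hjj'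
  have hpath : (S.permute σ τ).path 0 0 = S.path 0 0 := by
    simp only [K33Subdiv.permute, hσ₀, hτ₀]
  refine ⟨S.permute σ τ, h.permute hσ₀ hτ₀, hpath ▸ hne, ?_, ?_, ?_⟩ <;> rw [hpath]
  · exact fun v hv => ⟨S.not_adj_two_a hG hi hi' hii' (by simp [hP]) hv hp,
      S.not_adj_two_b hG hj hj' hjj' (by simp [hP']) hv hz⟩
  · intro v D e
    obtain ⟨rfl, -⟩ := List.cons.inj (hP.symm.trans e)
    exact hp
  · intro D v e
    obtain rfl := List.singleton_inj.1 (List.append_inj' (hP'.symm.trans e) rfl).2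
    exact hz

theorem HasSinglePath.exists_nonempty_iso (h : S.HasSinglePath) (hG : Admissible G)
    (hno : NoCrossing G) :
    ∃ n, 3 ≤ n ∧ (Nonempty (G ≃g mobiusLadder n) ∨ Nonempty (G ≃g squareCycle (2 * n + 1)) ∨
      Nonempty (G ≃g doubleWheel n) ∨ Nonempty (G ≃g altDoubleWheel n)) := by
  by_cases hnil : S.path 0 0 = []
  · obtain ⟨n, hn, hM | hDA⟩ := S.exists_nonempty_iso_of_path_eq_nil hG fun i j => by
      by_cases hij : i ≠ 0 ∨ j ≠ 0
      · exact h i j hij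
      · rw [not_or, not_not, not_not] at hij
        rw [hij.1, hij.2, hnil]
    exacts [⟨n, hn, .inl hM⟩, ⟨n, hn, .inr (.inr hDA)⟩]
  obtain ⟨T, hT⟩ := h.exists_isNormal hG hno hnil
  by_cases ha : G.Adj (T.a 0) (T.a 2)
  · exact ⟨3, le_rfl, .inr (.inl (hT.nonempty_iso_squareCycle hG ha))⟩
  by_cases hb : G.Adj (T.b 0) (T.b 2)
  · exact ⟨3, le_rfl, .inr (.inl (hT.transpose.nonempty_iso_squareCycle hG hb))⟩
  obtain ⟨n, hn, hM | hDA⟩ :=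
    (hT.single.hubbedCycle hG ha hb hT.not_adj).exists_nonempty_iso hG (by simp [rim])
  exacts [⟨n, hn, .inl hM⟩, ⟨n, hn, .inr (.inr hDA)⟩]

theorem exists_nonempty_iso (S : K33Subdiv G) (hG : Admissible G) :
    ∃ n, 3 ≤ n ∧ (Nonempty (G ≃g mobiusLadder n) ∨ Nonempty (G ≃g squareCycle (2 * n + 1)) ∨
      Nonempty (G ≃g doubleWheel n) ∨ Nonempty (G ≃g altDoubleWheel n)) := by
  by_cases hno : NoCrossing G
  · have := S.finite hG
    obtain ⟨T, hT⟩ := S.exists_isLongest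
    exact (hT.hasSinglePath hG hno).exists_nonempty_iso hG hno
  · unfold NoCrossing at hno
    push Not at hno
    obtain ⟨T, i, i', j, j', hi, hj, p, hp, q, hq, h⟩ := hno
    obtain ⟨n, hn, hM | hC⟩ := T.exists_nonempty_iso_of_crossing hG hi hj hp hq h
    exacts [⟨n, hn, .inl hM⟩, ⟨n, hn, .inr (.inl hC)⟩]

end K33Subdiv

theorem stmt10_general (hG : Admissible G) (hnp : ¬ Planar G) :
    ∃ n, 3 ≤ n ∧ (Nonempty (G ≃g mobiusLadder n) ∨ Nonempty (G ≃g squareCycle (2 * n + 1)) ∨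
      Nonempty (G ≃g doubleWheel n) ∨ Nonempty (G ≃g altDoubleWheel n)) := by
  classical
  by_cases hK : IsMinor K33 G
  · obtain ⟨S⟩ := exists_k33Subdiv hK
    exact S.exists_nonempty_iso hG
  · have h5 : IsMinor K5 G := by_contra fun h5 => hnp ⟨h5, hK⟩
    obtain ⟨e⟩ := nonempty_iso_K5_of_isMinor_K5 hG hK h5
    exact ⟨3, le_rfl, .inr (.inr (.inl (nonempty_iso_doubleWheel_three.map e.trans)))⟩

end Main

/-- An internally 4-connected nonplanar {K5+, K33+, K5h, K33h}-free graph is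
`M_n`, `C²_{2n+1}`, `DW_n`, or `AW_{2n}` for some `n ≥ 3`. -/
theorem stmt10 {V : Type} [Fintype V] (G : SimpleGraph V)
    (h4 : InternallyFourConnected G) (hnp : ¬ Planar G)
    (hfree : ¬ IsMinor K5plus G ∧ ¬ IsMinor K33plus G ∧ ¬ IsMinor K5h G ∧ ¬ IsMinor K33h G) :
    ∃ n, 3 ≤ n ∧
      (Nonempty (G ≃g mobiusLadder n) ∨ Nonempty (G ≃g squareCycle (2 * n + 1)) ∨
       Nonempty (G ≃g doubleWheel n) ∨ Nonempty (G ≃g altDoubleWheel n)) :=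
  stmt10_general (h4.admissible hfree) hnp
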